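/- arXiv:1112.1934 — 3 statements merged into one kernel-verified Lean document; each statement's English description precedes it below -/
import Mathlib

section
/- Let T = {T1, T2; p1, p2} be a random map on [0,1] built from two LSV-type intermittent maps with exponents 0 < β < α < 1, satisfying Assumption (A) (monotonicity of the weighted branch sums) and Assumption (B) (the probabilities are bounded below by some δ > 0). Then T admits a unique absolutely continuous invariant probability measure, i.e. there is exactly one probability measure μ on [0,1] with μ ≪ m and E_T μ = μ. -/
/-!
Let `P` be the transfer operator of the random map on densities and `U` its dual (Koopman)
operator, `∫ P f · ψ dm = ∫ f · U ψ dm`.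

Assumption (A) says precisely that `P` maps decreasing functions on `[0,1)` to decreasing
functions (`Leg.P_dec`). Near the neutral fixed point the map with the larger exponent `α` is the
slower one; let `v` be the inverse of its left branch. Mass enters `[0,x]` in one step only from
`[0, v x]` or from a piece of length at most `x` to the right of `1/2`, where a decreasing density
is at most `2` (`Sys.F_P_le`). Iterating this with the fact that `A x ^ (1 - α)` is a
supersolution of the recursion bounds the mass of `Pⁿ f` on `[0,x]` by
`A x ^ (1 - α) + f(0) vⁿ(x)` (`Sys.F_iter_le`), where `vⁿ → 0` uniformly.

Hence for every decreasing density `f`, eventually at least half of the mass of `Pⁿ f` lies to the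
right of a fixed point `x₀`, so `Pⁿ f ≥ 1/2` on `[0,x₀]`. The lower bound on the first weight
propagates this along the left branch to all of `[0,1)`: there is a constant `c > 0` with
`Pⁿ f ≥ c` for all large `n`, and `c` does not depend on `f` (`Sys.exists_lower`). Subtracting the
constant `c` from two such densities and renormalising leaves decreasing densities, so differences
of decreasing densities are contracted by `1 - c` again and again (`Sys.memory_loss`).

Uniqueness. The indicators of the half-lines `Iio a` are decreasing and generate a dense subspace
of `L¹`, so `∫ φ · Uⁿ 1_B dm - (∫ φ dm) (∫ Uⁿ 1_B dm) → 0` for every integrable `φ`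
(`Sys.decorr`). For the density `φ` of an invariant probability measure the first integral is
constantly the measure of `B`, which therefore is the limit of `∫ Uⁿ 1_B dm`.

Existence. The densities `Pⁿ 1` are dominated by the integrable function `A x ^ (-α)`, so the
corresponding measures converge setwise along an ultrafilter (`exists_setwise_limit`); the limit
is invariant because `Pⁿ 1` and `Pⁿ⁺¹ 1` are asymptotically equal by loss of memory.
-/

open MeasureTheory Set

noncomputable section

/-- Lebesgue measure on the unit interval `[0,1]`. -/
def mI : Measure ℝ := volume.restrict (Icc 0 1)

/-- The data of the second (expanding) branch `g : [1/2,1] → [0,1]` of an LSV-type map,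
together with its derivative `g'`:  `g(1/2) = 0`, `g` is `C¹`, increasing and `g' > 1`. -/
structure LSVBranch where
  g : ℝ → ℝ
  g' : ℝ → ℝ
  map_half : g (1 / 2) = 0
  mapsTo : MapsTo g (Icc (1 / 2 : ℝ) 1) (Icc (0 : ℝ) 1)
  hasDeriv : ∀ x ∈ Icc (1 / 2 : ℝ) 1, HasDerivWithinAt g (g' x) (Icc (1 / 2 : ℝ) 1) x
  contDeriv : ContinuousOn g' (Icc (1 / 2 : ℝ) 1)
  deriv_gt_one : ∀ x ∈ Icc (1 / 2 : ℝ) 1, 1 < g' x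
  strictMono : StrictMonoOn g (Icc (1 / 2 : ℝ) 1)

/-- The LSV-type intermittent map with exponent `γ` and second branch `G.g`:
`T x = x (1 + 2^γ x^γ)` on `[0,1/2)` and `T x = g x` on `[1/2,1]`. -/
def LSVmap (γ : ℝ) (G : LSVBranch) : ℝ → ℝ :=
  fun x => if x < 1 / 2 then x * (1 + 2 ^ γ * x ^ γ) else G.g x

/-- The derivative of the LSV-type map with exponent `γ` and second branch `G`. -/
def LSVderiv (γ : ℝ) (G : LSVBranch) : ℝ → ℝ :=
  fun x => if x < 1 / 2 then 1 + (1 + γ) * 2 ^ γ * x ^ γ else G.g' x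

/-- The action `E_T` of the random map `T = {T1, T2; p1, p2}` on measures:
`(E_T ν)(A) = ∫_{T1⁻¹ A} p1 dν + ∫_{T2⁻¹ A} p2 dν`. -/
def ET (T1 T2 p1 p2 : ℝ → ℝ) (ν : Measure ℝ) : Measure ℝ :=
  (ν.withDensity fun x => ENNReal.ofReal (p1 x)).map T1
    + (ν.withDensity fun x => ENNReal.ofReal (p2 x)).map T2

/-- `p1, p2` are measurable position-dependent probabilities on `[0,1]`. -/
def ProbPair (p1 p2 : ℝ → ℝ) : Prop :=
  Measurable p1 ∧ Measurable p2 ∧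
    (∀ x ∈ Icc (0 : ℝ) 1, p1 x ∈ Icc (0 : ℝ) 1 ∧ p2 x ∈ Icc (0 : ℝ) 1) ∧
    ∀ x ∈ Icc (0 : ℝ) 1, p1 x + p2 x = 1

/-- Assumption (A) for the LSV-type map with exponent `γ`, branch `G` and probability `p`:
with `v1 x` the branch preimage of `x` in `[0,1/2)` and `v2 x` the branch preimage in
`[1/2,1]` (defined on the range of `g`), the weighted branch sums are decreasing. -/
def AssumptionA (γ : ℝ) (G : LSVBranch) (p : ℝ → ℝ) : Prop :=
  ∃ v1 v2 : ℝ → ℝ,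
    (∀ x ∈ Ico (0 : ℝ) 1, v1 x ∈ Ico (0 : ℝ) (1 / 2) ∧ LSVmap γ G (v1 x) = x) ∧
    (∀ x ∈ G.g '' Icc (1 / 2 : ℝ) 1, v2 x ∈ Icc (1 / 2 : ℝ) 1 ∧ G.g (v2 x) = x) ∧
    AntitoneOn (fun x => p (v1 x) / LSVderiv γ G (v1 x)) (Ico (0 : ℝ) 1) ∧
    AntitoneOn
      (fun x => p (v1 x) / LSVderiv γ G (v1 x) + p (v2 x) / LSVderiv γ G (v2 x))
      (G.g '' Icc (1 / 2 : ℝ) 1)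

/-- Assumption (B): the probabilities are uniformly bounded below by some `δ > 0`. -/
def AssumptionB (p1 p2 : ℝ → ℝ) : Prop :=
  ∃ δ : ℝ, 0 < δ ∧ ∀ x ∈ Icc (0 : ℝ) 1, δ ≤ p1 x ∧ δ ≤ p2 x

/-- The cone `C_A`: nonnegative decreasing integrable functions with
`∫_0^x f dm ≤ A x^(1-α) ∫_0^1 f dm`. -/
def InCone (α A : ℝ) (f : ℝ → ℝ) : Prop :=
  IntegrableOn f (Icc (0 : ℝ) 1) ∧ (∀ x ∈ Icc (0 : ℝ) 1, 0 ≤ f x) ∧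
    AntitoneOn f (Icc (0 : ℝ) 1) ∧
    ∀ x ∈ Icc (0 : ℝ) 1, ∫ t in (0 : ℝ)..x, f t ≤ A * x ^ (1 - α) * ∫ t in (0 : ℝ)..1, f t

end

noncomputable section


open Filter Topology ENNReal

/-! ### Setwise limits and asymptotic decorrelation -/

/-- A sequence of measures dominated by one finite measure has a setwise limit along any
ultrafilter; domination makes the limit continuous at `∅`, hence countably additive. -/
lemma exists_setwise_limit (ν : Measure ℝ) [IsFiniteMeasure ν] (μ : ℕ → Measure ℝ)
    (hμ : ∀ n, μ n ≤ ν) (F : Ultrafilter ℕ) :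
    ∃ ρ : Measure ℝ, ρ ≤ ν ∧
      ∀ A, MeasurableSet A → Tendsto (fun n => μ n A) F (𝓝 (ρ A)) := by
  have hex : ∀ A : Set ℝ, ∃ c : ℝ≥0∞, Tendsto (fun n => μ n A) F (𝓝 c) := by
    intro A
    have := (F.map (fun n => μ n A)).le_nhds_lim
    exact ⟨_, this⟩
  choose c hc using hex
  have hle : ∀ A, c A ≤ ν A := fun A =>
    le_of_tendsto (hc A) (Eventually.of_forall fun n => hμ n A)
  have hempty : c ∅ = 0 := le_antisymm (by simpa using hle ∅) (zero_le)
  have hadd : ∀ A B : Set ℝ, MeasurableSet B → Disjoint A B → c (A ∪ B) = c A + c B := by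
    intro A B hB hd
    refine tendsto_nhds_unique (hc (A ∪ B)) ?_
    have := (hc A).add (hc B)
    refine this.congr fun n => ?_
    rw [measure_union hd hB]
  have hmono : ∀ A B : Set ℝ, A ⊆ B → c A ≤ c B := fun A B h =>
    le_of_tendsto_of_tendsto (hc A) (hc B) (Eventually.of_forall fun n => measure_mono h)
  have hsum : ∀ f : ℕ → Set ℝ, (∀ i, MeasurableSet (f i)) → Pairwise (Function.onFun Disjoint f) →
      c (⋃ i, f i) = ∑' i, c (f i) := by
    intro f hf hd
    have hfin : ∀ N, c (⋃ i ∈ Finset.range N, f i) = ∑ i ∈ Finset.range N, c (f i) := by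
      intro N
      induction N with
      | zero => simp [hempty]
      | succ N ih =>
        rw [Finset.sum_range_succ, ← ih, Finset.range_add_one, Finset.set_biUnion_insert,
          union_comm, hadd _ _ (hf N)]
        refine Set.disjoint_left.2 fun x hx hxN => ?_
        simp only [mem_iUnion, Finset.mem_range] at hx
        obtain ⟨i, hi, hxi⟩ := hx
        exact Set.disjoint_left.1 (hd hi.ne) hxi hxN
    have hνs : ∑' i, ν (f i) ≠ ∞ := by
      rw [← measure_iUnion hd hf]; exact measure_ne_top _ _
    have htail := ENNReal.tendsto_sum_nat_add (fun i => ν (f i)) hνs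
    refine le_antisymm ?_ ?_
    · have key : ∀ N, c (⋃ i, f i) ≤ (∑' i, c (f i)) + ∑' k, ν (f (k + N)) := by
        intro N
        have hsub : (⋃ i, f i) = (⋃ i ∈ Finset.range N, f i) ∪
            ((⋃ i, f i) \ ⋃ i ∈ Finset.range N, f i) := by
          rw [union_sdiff_cancel]
          exact iUnion₂_subset fun i _ => subset_iUnion f i
        rw [hsub, hadd _ _ ((MeasurableSet.iUnion hf).diff
          (Finset.measurableSet_biUnion _ fun i _ => hf i)) disjoint_sdiff_right, hfin]
        refine add_le_add (ENNReal.sum_le_tsum _) ?_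
        refine (hle _).trans ?_
        refine (measure_mono (t := ⋃ k, f (k + N)) ?_).trans (measure_iUnion_le _)
        rintro x ⟨hx, hx'⟩
        simp only [mem_iUnion, Finset.mem_range, not_exists] at hx hx' ⊢
        obtain ⟨i, hi⟩ := hx
        have : N ≤ i := by
          by_contra h
          exact hx' i (by omega) hi
        exact ⟨i - N, by rwa [Nat.sub_add_cancel this]⟩
      have := ge_of_tendsto' (tendsto_const_nhds.add htail) key
      simpa using this
    · refine ENNReal.tsum_le_of_sum_range_le fun N => ?_
      rw [← hfin]
      exact hmono _ _ (iUnion₂_subset fun i _ => subset_iUnion f i)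
  refine ⟨Measure.ofMeasurable (fun A _ => c A) hempty (fun f hf hd => hsum f hf hd), ?_, ?_⟩
  · refine Measure.le_iff.2 fun A hA => ?_
    rw [Measure.ofMeasurable_apply A hA]
    exact hle A
  · intro A hA
    rw [Measure.ofMeasurable_apply A hA]
    exact hc A

/-- Integrals against a setwise limit are at most the limits of the integrals, when these exist
(a form of Fatou's lemma). -/
lemma lintegral_le_of_setwise {F : Ultrafilter ℕ} {μ : ℕ → Measure ℝ} {ρ : Measure ℝ}
    (h : ∀ A, MeasurableSet A → Tendsto (fun n => μ n A) F (𝓝 (ρ A)))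
    (φ : ℝ → ℝ≥0∞) (hφ : ∀ x, φ x < ∞) {l : ℝ≥0∞}
    (hl : Tendsto (fun n => ∫⁻ x, φ x ∂μ n) F (𝓝 l)) : ∫⁻ x, φ x ∂ρ ≤ l := by
  rw [lintegral]
  refine iSup₂_le fun s hs => ?_
  have h1 : Tendsto (fun n => s.lintegral (μ n)) F (𝓝 (s.lintegral ρ)) := by
    unfold SimpleFunc.lintegral
    refine tendsto_finsetSum _ fun x hx => ?_
    refine ENNReal.Tendsto.const_mul (h _ (s.measurableSet_preimage _)) (Or.inr ?_)
    obtain ⟨y, rfl⟩ := SimpleFunc.mem_range.1 hx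
    exact ((hs y).trans_lt (hφ y)).ne
  refine le_of_tendsto_of_tendsto h1 hl (Eventually.of_forall fun n => ?_)
  simp only
  rw [lintegral]
  exact le_iSup₂_of_le (f := fun (g : SimpleFunc ℝ ℝ≥0∞) (_ : ⇑g ≤ fun x => φ x) =>
    g.lintegral (μ n)) s hs le_rfl

/-- `φ` decorrelates from the sequence of observables `W n` under `m`. -/
def Decorr (m : Measure ℝ) (W : ℕ → ℝ → ℝ) (φ : ℝ → ℝ) : Prop :=
  Tendsto (fun n => ∫ x, φ x * W n x ∂m - (∫ x, φ x ∂m) * ∫ x, W n x ∂m) atTop (𝓝 0)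

section Decorr

variable {m : Measure ℝ} {W : ℕ → ℝ → ℝ}

lemma integrable_mul_unit {m : Measure ℝ} {φ w : ℝ → ℝ} (hφ : Integrable φ m)
    (hw : Measurable w) (hw1 : ∀ x, w x ∈ Icc (0 : ℝ) 1) :
    Integrable (fun x => φ x * w x) m := by
  refine hφ.mul_bdd (c := 1) hw.aestronglyMeasurable (Eventually.of_forall fun x => ?_)
  rw [Real.norm_eq_abs, abs_of_nonneg (hw1 x).1]
  exact (hw1 x).2

lemma Decorr.add (hWm : ∀ n, Measurable (W n)) (hW : ∀ n x, W n x ∈ Icc (0 : ℝ) 1)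
    {φ ψ : ℝ → ℝ} (hφi : Integrable φ m) (hψi : Integrable ψ m)
    (hφ : Decorr m W φ) (hψ : Decorr m W ψ) : Decorr m W (φ + ψ) := by
  have := Tendsto.add hφ hψ
  rw [add_zero] at this
  refine this.congr fun n => ?_
  simp only [Pi.add_apply, add_mul]
  rw [integral_add (integrable_mul_unit hφi (hWm n) (hW n))
    (integrable_mul_unit hψi (hWm n) (hW n)), integral_add hφi hψi]
  ring

lemma Decorr.const_mul {φ : ℝ → ℝ} (c : ℝ) (hφ : Decorr m W φ) :
    Decorr m W (fun x => c * φ x) := by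
  have := Tendsto.const_mul c hφ
  rw [mul_zero] at this
  refine this.congr fun n => ?_
  simp only [mul_assoc]
  rw [integral_const_mul, integral_const_mul]
  ring

/-- Functions decorrelating from `W` form a closed set in `L¹`. -/
lemma Decorr.of_approx [IsProbabilityMeasure m] (hWm : ∀ n, Measurable (W n))
    (hW : ∀ n x, W n x ∈ Icc (0 : ℝ) 1)
    {φ : ℝ → ℝ} (hφi : Integrable φ m)
    (h : ∀ ε > 0, ∃ ψ, Integrable ψ m ∧ Decorr m W ψ ∧ ∫ x, |φ x - ψ x| ∂m ≤ ε) :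
    Decorr m W φ := by
  refine Metric.tendsto_atTop.2 fun ε hε => ?_
  obtain ⟨ψ, hψi, hψ, hd⟩ := h (ε / 4) (by positivity)
  obtain ⟨N, hN⟩ := Metric.tendsto_atTop.1 hψ (ε / 4) (by positivity)
  refine ⟨N, fun n hn => ?_⟩
  have h1 := hN n hn
  rw [Real.dist_eq, sub_zero] at h1 ⊢
  have hi : Integrable (fun x => φ x - ψ x) m := hφi.sub hψi
  have e1 : |∫ x, (φ x - ψ x) * W n x ∂m| ≤ ε / 4 := by
    refine (abs_integral_le_integral_abs).trans ((integral_mono_of_nonneg ?_ hi.abs ?_).trans hd)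
    · exact Eventually.of_forall fun x => abs_nonneg _
    · refine Eventually.of_forall fun x => ?_
      simp only [abs_mul, abs_of_nonneg (hW n x).1]
      exact mul_le_of_le_one_right (abs_nonneg _) (hW n x).2
  have e2 : |∫ x, (φ x - ψ x) ∂m| ≤ ε / 4 := (abs_integral_le_integral_abs).trans hd
  have e3 : |∫ x, W n x ∂m| ≤ 1 := by
    have hb := norm_integral_le_of_norm_le_const (μ := m) (f := W n) (C := 1)
      (Eventually.of_forall fun x => by
        rw [Real.norm_eq_abs, abs_of_nonneg (hW n x).1]
        exact (hW n x).2)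
    simpa using hb
  have e4 : |(∫ x, (φ x - ψ x) ∂m) * ∫ x, W n x ∂m| ≤ ε / 4 := by
    rw [abs_mul]
    exact (mul_le_of_le_one_right (abs_nonneg _) e3).trans e2
  simp only [sub_mul] at e1
  rw [integral_sub (integrable_mul_unit hφi (hWm n) (hW n))
    (integrable_mul_unit hψi (hWm n) (hW n))] at e1
  rw [integral_sub hφi hψi, sub_mul] at e4
  rw [abs_le] at e1 e4
  rw [abs_lt] at h1 ⊢
  constructor <;> linarith [e1.1, e1.2, e4.1, e4.2, h1.1, h1.2]

lemma decorr_const [IsProbabilityMeasure m] (c : ℝ) : Decorr m W (fun _ => c) := by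
  refine tendsto_const_nhds.congr fun n => ?_
  rw [integral_const_mul]
  simp

/-- By the `π`-`λ` theorem, decorrelation passes from half-lines to all Borel sets. -/
lemma decorr_indicator [IsProbabilityMeasure m] (hWm : ∀ n, Measurable (W n))
    (hW : ∀ n x, W n x ∈ Icc (0 : ℝ) 1)
    (h : ∀ a : ℝ, Decorr m W ((Iio a).indicator 1)) (A : Set ℝ)
    (hA : MeasurableSet A) : Decorr m W (A.indicator 1) := by
  have hint : ∀ B : Set ℝ, MeasurableSet B → Integrable (B.indicator (1 : ℝ → ℝ)) m :=
    fun B hB => (integrable_const (1 : ℝ)).indicator hB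
  refine MeasurableSpace.induction_on_inter (C := fun A _ => Decorr m W (A.indicator 1))
    (BorelSpace.measurable_eq.trans (borel_eq_generateFrom_Iio ℝ)) isPiSystem_Iio
    ?_ ?_ ?_ ?_ A hA
  · simpa using decorr_const (m := m) 0
  · rintro _ ⟨a, rfl⟩
    exact h a
  · intro t ht hd
    have := Decorr.add hWm hW (integrable_const (1 : ℝ)) ((hint t ht).const_mul (-1))
      (decorr_const 1) (hd.const_mul (-1))
    convert this using 1
    ext x
    by_cases hx : x ∈ t <;> simp [hx]
  · intro f hd hf hQ
    have hfin : ∀ N, Decorr m W ((⋃ i ∈ Finset.range N, f i).indicator 1) := by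
      intro N
      induction N with
      | zero => simpa using decorr_const (m := m) 0
      | succ N ih =>
        rw [Finset.range_add_one, Finset.set_biUnion_insert, indicator_union_of_disjoint]
        · exact Decorr.add hWm hW (hint _ (hf N))
            (hint _ (Finset.measurableSet_biUnion _ fun i _ => hf i)) (hQ N) ih
        · refine Set.disjoint_right.2 fun x hx hxN => ?_
          simp only [mem_iUnion, Finset.mem_range] at hx
          obtain ⟨i, hi, hxi⟩ := hx
          exact Set.disjoint_left.1 (hd hi.ne) hxi hxN
    refine Decorr.of_approx hWm hW (hint _ (.iUnion hf)) fun ε hε => ?_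
    have htail := ENNReal.tendsto_sum_nat_add (fun i => m (f i)) (by
      rw [← measure_iUnion hd hf]; exact measure_ne_top _ _)
    obtain ⟨N, hN⟩ := ((tendsto_order.1 htail).2 (ENNReal.ofReal ε) (by simpa)).exists
    refine ⟨_, hint _ (Finset.measurableSet_biUnion (Finset.range N) fun i _ => hf i),
      hfin N, ?_⟩
    have hm : MeasurableSet ((⋃ i, f i) \ ⋃ i ∈ Finset.range N, f i) :=
      (MeasurableSet.iUnion hf).diff (Finset.measurableSet_biUnion _ fun i _ => hf i)
    have e : ∀ x, |(⋃ i, f i).indicator (1 : ℝ → ℝ) x -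
        (⋃ i ∈ Finset.range N, f i).indicator 1 x| =
        ((⋃ i, f i) \ ⋃ i ∈ Finset.range N, f i).indicator 1 x := by
      intro x
      by_cases h1 : x ∈ ⋃ i ∈ Finset.range N, f i
      · have h2 : x ∈ ⋃ i, f i := (iUnion₂_subset fun i _ => subset_iUnion f i) h1
        rw [indicator_of_mem h1, indicator_of_mem h2, indicator_of_notMem (fun h => h.2 h1)]
        simp
      · by_cases h2 : x ∈ ⋃ i, f i
        · rw [indicator_of_notMem h1, indicator_of_mem h2,
            indicator_of_mem (show x ∈ _ \ _ from ⟨h2, h1⟩)]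
          simp
        · rw [indicator_of_notMem h1, indicator_of_notMem h2, indicator_of_notMem (fun h => h2 h.1)]
          simp
    simp only [e]
    rw [integral_indicator_one hm]
    refine ENNReal.toReal_le_of_le_ofReal hε.le ?_
    refine (measure_mono (t := ⋃ k, f (k + N)) ?_).trans ((measure_iUnion_le _).trans hN.le)
    rintro x ⟨hx, hx'⟩
    simp only [mem_iUnion, Finset.mem_range, not_exists] at hx hx' ⊢
    obtain ⟨i, hi⟩ := hx
    have : N ≤ i := by
      by_contra h
      exact hx' i (by omega) hi
    exact ⟨i - N, by rwa [Nat.sub_add_cancel this]⟩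

/-- Decorrelation for half-line indicators propagates to every integrable function. -/
lemma decorr_of_integrable [IsProbabilityMeasure m] (hWm : ∀ n, Measurable (W n))
    (hW : ∀ n x, W n x ∈ Icc (0 : ℝ) 1)
    (h : ∀ a : ℝ, Decorr m W ((Iio a).indicator 1)) {φ : ℝ → ℝ}
    (hφ : Integrable φ m) : Decorr m W φ := by
  refine Integrable.induction (fun φ => Decorr m W φ) ?_ ?_ ?_ ?_ hφ
  · intro c s hs _
    have := (decorr_indicator hWm hW h s hs).const_mul c
    convert this using 1
    ext x
    by_cases hx : x ∈ s <;> simp [hx]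
  · intro f g _ hf hg h1 h2
    exact Decorr.add hWm hW hf hg h1 h2
  · refine isClosed_of_closure_subset fun f hf => ?_
    refine Decorr.of_approx hWm hW (L1.integrable_coeFn f) fun ε hε => ?_
    obtain ⟨g, hg, hd⟩ := Metric.mem_closure_iff.1 hf ε hε
    refine ⟨g, L1.integrable_coeFn g, hg, ?_⟩
    rw [dist_eq_norm, L1.norm_eq_integral_norm] at hd
    refine (le_of_eq (integral_congr_ae ?_)).trans hd.le
    filter_upwards [Lp.coeFn_sub f g] with x hx
    rw [hx]; rfl
  · intro f g hfg hf hd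
    refine Tendsto.congr (fun n => ?_) hd
    rw [integral_congr_ae hfg]
    congr 1
    refine integral_congr_ae ?_
    filter_upwards [hfg] with x hx
    rw [hx]

end Decorr

/-! ### Decreasing densities -/

lemma mI_eq : mI = volume.restrict (Ico (0 : ℝ) 1) := by
  rw [mI, restrict_Ico_eq_restrict_Icc]

instance : IsProbabilityMeasure mI := ⟨by simp [mI]⟩

/-- Nonnegative decreasing functions on `[0,1)`; such a function is bounded by its value
at `0`. -/
structure IsDec (f : ℝ → ℝ) : Prop where
  anti : AntitoneOn f (Ico (0 : ℝ) 1)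
  nonneg : ∀ x ∈ Ico (0 : ℝ) 1, 0 ≤ f x

lemma IsDec.le_zero {f : ℝ → ℝ} (hf : IsDec f) {x : ℝ} (hx : x ∈ Ico (0 : ℝ) 1) : f x ≤ f 0 :=
  hf.anti ⟨le_rfl, zero_lt_one⟩ hx hx.1

lemma IsDec.integrable {f : ℝ → ℝ} (hf : IsDec f) : Integrable f mI := by
  rw [mI_eq]
  refine Integrable.of_bound
    (aemeasurable_restrict_of_antitoneOn measurableSet_Ico hf.anti).aestronglyMeasurable (f 0) ?_
  filter_upwards [ae_restrict_mem measurableSet_Ico] with x hx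
  rw [Real.norm_eq_abs, abs_of_nonneg (hf.nonneg x hx)]
  exact hf.le_zero hx

/-- Change of variables along one injective branch `T : s → T '' s` with inverse `v`. -/
lemma branch_change_of_variables {s : Set ℝ} (hs : MeasurableSet s) {T T' v : ℝ → ℝ}
    (hT : ∀ x ∈ s, HasDerivWithinAt T (T' x) s x) (hT' : ∀ x ∈ s, 0 < T' x)
    (hv : ∀ x ∈ s, v (T x) = x) (p f ψ : ℝ → ℝ)
    (hi : IntegrableOn (fun t => p t * f t * ψ (T t)) s) :
    IntegrableOn (fun x => p (v x) / T' (v x) * f (v x) * ψ x) (T '' s) ∧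
      ∫ x in T '' s, p (v x) / T' (v x) * f (v x) * ψ x = ∫ t in s, p t * f t * ψ (T t) := by
  have hinj : InjOn T s := fun x hx y hy h => by rw [← hv x hx, h, hv y hy]
  have e : ∀ t ∈ s, |T' t| • (p (v (T t)) / T' (v (T t)) * f (v (T t)) * ψ (T t)) =
      p t * f t * ψ (T t) := by
    intro t ht
    have := hT' t ht
    rw [hv t ht, abs_of_pos this, smul_eq_mul]
    field_simp
  constructor
  · rw [integrableOn_image_iff_integrableOn_abs_deriv_smul hs hT hinj]
    exact hi.congr_fun (fun t ht => (e t ht).symm) hs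
  · rw [integral_image_eq_integral_abs_deriv_smul hs hT hinj]
    exact setIntegral_congr_fun hs e

/-! ### One LSV-type map with its weight -/

/-- An LSV-type map, its position-dependent weight `p`, and the inverse branches `v1`, `v2`
provided by Assumption (A). -/
structure Leg where
  γ : ℝ
  G : LSVBranch
  p : ℝ → ℝ
  v1 : ℝ → ℝ
  v2 : ℝ → ℝ
  γ_pos : 0 < γ
  γ_lt : γ < 1
  p_meas : Measurable p
  p_mem : ∀ x ∈ Icc (0 : ℝ) 1, p x ∈ Icc (0 : ℝ) 1
  v1_spec : ∀ x ∈ Ico (0 : ℝ) 1, v1 x ∈ Ico (0 : ℝ) (1 / 2) ∧ LSVmap γ G (v1 x) = x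
  v2_spec : ∀ x ∈ G.g '' Icc (1 / 2 : ℝ) 1, v2 x ∈ Icc (1 / 2 : ℝ) 1 ∧ G.g (v2 x) = x
  anti1 : AntitoneOn (fun x => p (v1 x) / LSVderiv γ G (v1 x)) (Ico (0 : ℝ) 1)
  anti2 : AntitoneOn
      (fun x => p (v1 x) / LSVderiv γ G (v1 x) + p (v2 x) / LSVderiv γ G (v2 x))
      (G.g '' Icc (1 / 2 : ℝ) 1)

namespace Leg

variable (L : Leg)

/-- The LSV map, set to `0` outside `[0,1]` so that it is measurable on `ℝ`. -/
def T : ℝ → ℝ := (Icc (0 : ℝ) 1).indicator (LSVmap L.γ L.G)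

/-- The weighted Koopman operator `ψ ↦ p · ψ ∘ T`. -/
def U (ψ : ℝ → ℝ) : ℝ → ℝ := (Icc (0 : ℝ) 1).indicator fun x => L.p x * ψ (L.T x)

open Classical in
/-- The weighted transfer operator, written out on the two inverse branches; the second branch
contributes only over its range. -/
def P (f : ℝ → ℝ) (x : ℝ) : ℝ :=
  L.p (L.v1 x) / LSVderiv L.γ L.G (L.v1 x) * f (L.v1 x) +
    if x ∈ L.G.g '' Ico (1 / 2 : ℝ) 1 then
      L.p (L.v2 x) / LSVderiv L.γ L.G (L.v2 x) * f (L.v2 x) else 0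

lemma T_left {t : ℝ} (ht : t ∈ Ico (0 : ℝ) (1 / 2)) : L.T t = t * (1 + 2 ^ L.γ * t ^ L.γ) := by
  rw [T, indicator_of_mem (show t ∈ Icc (0 : ℝ) 1 from ⟨ht.1, by linarith [ht.2]⟩), LSVmap, if_pos ht.2]

lemma T_right {t : ℝ} (ht : t ∈ Icc (1 / 2 : ℝ) 1) : L.T t = L.G.g t := by
  rw [T, indicator_of_mem (show t ∈ Icc (0 : ℝ) 1 from ⟨by linarith [ht.1], ht.2⟩), LSVmap, if_neg (not_lt.2 ht.1)]

lemma T_left' {t : ℝ} (ht : t ∈ Ico (0 : ℝ) (1 / 2)) : L.T t = t * (1 + (2 * t) ^ L.γ) := by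
  rw [L.T_left ht, Real.mul_rpow (by norm_num) ht.1]

lemma pow_le_one {t : ℝ} (ht : t ∈ Ico (0 : ℝ) (1 / 2)) : (2 * t) ^ L.γ ≤ 1 :=
  Real.rpow_le_one (by linarith [ht.1]) (by linarith [ht.2]) L.γ_pos.le

lemma pow_nonneg {t : ℝ} (ht : t ∈ Ico (0 : ℝ) (1 / 2)) : 0 ≤ (2 * t) ^ L.γ :=
  Real.rpow_nonneg (by linarith [ht.1]) _

lemma T_left_strictMono : StrictMonoOn L.T (Ico (0 : ℝ) (1 / 2)) := by
  intro x hx y hy hxy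
  rw [L.T_left' hx, L.T_left' hy]
  have h1 : (2 * x) ^ L.γ ≤ (2 * y) ^ L.γ :=
    Real.rpow_le_rpow (by linarith [hx.1]) (by linarith) L.γ_pos.le
  have h2 := L.pow_nonneg hx
  nlinarith [hx.1]

lemma T_left_mem {t : ℝ} (ht : t ∈ Ico (0 : ℝ) (1 / 2)) : L.T t ∈ Ico (0 : ℝ) 1 := by
  rw [L.T_left' ht]
  have h1 := L.pow_le_one ht
  have h2 := L.pow_nonneg ht
  constructor
  · exact mul_nonneg ht.1 (by linarith)
  · nlinarith [ht.1, ht.2]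

lemma v1_mem {x : ℝ} (hx : x ∈ Ico (0 : ℝ) 1) : L.v1 x ∈ Ico (0 : ℝ) (1 / 2) := (L.v1_spec x hx).1

lemma T_v1 {x : ℝ} (hx : x ∈ Ico (0 : ℝ) 1) : L.T (L.v1 x) = x := by
  have h := (L.v1_spec x hx)
  rw [T, indicator_of_mem (show L.v1 x ∈ Icc (0 : ℝ) 1 from ⟨h.1.1, by linarith [h.1.2]⟩), h.2]

lemma v1_T {t : ℝ} (ht : t ∈ Ico (0 : ℝ) (1 / 2)) : L.v1 (L.T t) = t :=
  L.T_left_strictMono.injOn (L.v1_mem (L.T_left_mem ht)) ht (L.T_v1 (L.T_left_mem ht))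

lemma image_left : L.T '' Ico (0 : ℝ) (1 / 2) = Ico (0 : ℝ) 1 := by
  refine Subset.antisymm ?_ fun x hx => ⟨_, L.v1_mem hx, L.T_v1 hx⟩
  rintro _ ⟨t, ht, rfl⟩
  exact L.T_left_mem ht

lemma v1_mono : MonotoneOn L.v1 (Ico (0 : ℝ) 1) := by
  intro x hx y hy hxy
  refine (L.T_left_strictMono.le_iff_le (L.v1_mem hx) (L.v1_mem hy)).1 ?_
  rwa [L.T_v1 hx, L.T_v1 hy]

lemma v2_g {t : ℝ} (ht : t ∈ Icc (1 / 2 : ℝ) 1) : L.v2 (L.G.g t) = t :=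
  L.G.strictMono.injOn (L.v2_spec _ ⟨t, ht, rfl⟩).1 ht (L.v2_spec _ ⟨t, ht, rfl⟩).2

lemma g_cont : ContinuousOn L.G.g (Icc (1 / 2 : ℝ) 1) :=
  fun x hx => (L.G.hasDeriv x hx).continuousWithinAt

lemma image_right : L.G.g '' Ico (1 / 2 : ℝ) 1 = Ico 0 (L.G.g 1) := by
  refine Subset.antisymm ?_ ?_
  · rintro _ ⟨t, ht, rfl⟩
    exact ⟨(L.G.mapsTo ⟨ht.1, ht.2.le⟩).1,
      L.G.strictMono ⟨ht.1, ht.2.le⟩ ⟨by norm_num, le_rfl⟩ ht.2⟩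
  · have := intermediate_value_Ico (by norm_num : (1 / 2 : ℝ) ≤ 1) L.g_cont
    rwa [L.G.map_half] at this

lemma g_one_le : L.G.g 1 ≤ 1 := (L.G.mapsTo ⟨by norm_num, le_rfl⟩).2

/-- Since `g' > 1` and `g (1/2) = 0`, the second branch lies above `t - 1/2`. -/
lemma sub_half_le_g {t : ℝ} (ht : t ∈ Icc (1 / 2 : ℝ) 1) : t - 1 / 2 ≤ L.G.g t := by
  have hm : MonotoneOn (fun x => L.G.g x - x) (Icc (1 / 2 : ℝ) 1) := by
    refine monotoneOn_of_hasDerivWithinAt_nonneg (f' := fun x => L.G.g' x - 1)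
      (convex_Icc _ _) (L.g_cont.sub continuousOn_id) ?_ ?_
    · intro x hx
      exact ((L.G.hasDeriv x (interior_subset hx)).mono interior_subset).sub
        (hasDerivWithinAt_id _ _)
    · intro x hx
      exact sub_nonneg.2 (L.G.deriv_gt_one x (interior_subset hx)).le
  have := hm ⟨le_rfl, by norm_num⟩ ht ht.1
  simp only [L.G.map_half] at this
  linarith

lemma T_mapsTo {t : ℝ} (ht : t ∈ Icc (0 : ℝ) 1) : L.T t ∈ Icc (0 : ℝ) 1 := by
  rcases lt_or_ge t (1 / 2) with h | h
  · exact Ico_subset_Icc_self (L.T_left_mem ⟨ht.1, h⟩)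
  · rw [L.T_right ⟨h, ht.2⟩]
    exact L.G.mapsTo ⟨h, ht.2⟩

lemma T_meas : Measurable L.T := by
  classical
  have h1 : Measurable ((Icc (1 / 2 : ℝ) 1).piecewise L.G.g 0) :=
    ContinuousOn.measurable_piecewise L.g_cont continuousOn_const measurableSet_Icc
  have h2 : Measurable ((Ico (0 : ℝ) (1 / 2)).piecewise
      (fun x => x * (1 + 2 ^ L.γ * x ^ L.γ)) ((Icc (1 / 2 : ℝ) 1).piecewise L.G.g 0)) :=
    Measurable.piecewise measurableSet_Ico (by fun_prop) h1
  convert h2 using 1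
  ext x
  by_cases hx : x ∈ Ico (0 : ℝ) (1 / 2)
  · rw [piecewise_eq_of_mem _ _ _ hx, L.T_left hx]
  · rw [piecewise_eq_of_notMem _ _ _ hx]
    by_cases hx' : x ∈ Icc (1 / 2 : ℝ) 1
    · rw [piecewise_eq_of_mem _ _ _ hx', L.T_right hx']
    · rw [piecewise_eq_of_notMem _ _ _ hx', T, indicator_of_notMem]
      · rfl
      · rintro ⟨h0, h1⟩
        rcases lt_or_ge x (1 / 2) with h | h
        · exact hx ⟨h0, h⟩
        · exact hx' ⟨h, h1⟩

lemma U_meas {ψ : ℝ → ℝ} (hψ : Measurable ψ) : Measurable (L.U ψ) :=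
  (L.p_meas.mul (hψ.comp L.T_meas)).indicator measurableSet_Icc

lemma deriv_left {t : ℝ} (ht : t ∈ Ico (0 : ℝ) (1 / 2)) :
    LSVderiv L.γ L.G t = 1 + (1 + L.γ) * (2 * t) ^ L.γ := by
  rw [LSVderiv, if_pos ht.2, Real.mul_rpow (by norm_num) ht.1]
  ring

lemma deriv_left_ge {t : ℝ} (ht : t ∈ Ico (0 : ℝ) (1 / 2)) : 1 ≤ LSVderiv L.γ L.G t := by
  rw [L.deriv_left ht]
  nlinarith [L.pow_nonneg ht, L.γ_pos]

lemma deriv_left_le {t : ℝ} (ht : t ∈ Ico (0 : ℝ) (1 / 2)) : LSVderiv L.γ L.G t ≤ 3 := by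
  rw [L.deriv_left ht]
  nlinarith [L.pow_nonneg ht, L.γ_pos, L.γ_lt, L.pow_le_one ht]

lemma deriv_right {t : ℝ} (ht : t ∈ Icc (1 / 2 : ℝ) 1) : 1 < LSVderiv L.γ L.G t := by
  rw [LSVderiv, if_neg (not_lt.2 ht.1)]
  exact L.G.deriv_gt_one t ht

lemma hasDeriv_left (t : ℝ) (ht : t ∈ Ico (0 : ℝ) (1 / 2)) :
    HasDerivWithinAt L.T (LSVderiv L.γ L.G t) (Ico (0 : ℝ) (1 / 2)) t := by
  have h1 : HasDerivAt (fun x : ℝ => x + 2 ^ L.γ * x ^ (1 + L.γ))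
      (1 + 2 ^ L.γ * ((1 + L.γ) * t ^ (1 + L.γ - 1))) t :=
    (hasDerivAt_id t).add ((Real.hasDerivAt_rpow_const
      (Or.inr (by linarith [L.γ_pos]))).const_mul _)
  have h2 : LSVderiv L.γ L.G t = 1 + 2 ^ L.γ * ((1 + L.γ) * t ^ (1 + L.γ - 1)) := by
    rw [LSVderiv, if_pos ht.2, add_sub_cancel_left]
    ring
  have h3 : ∀ x ∈ Ico (0 : ℝ) (1 / 2), L.T x = x + 2 ^ L.γ * x ^ (1 + L.γ) := by
    intro x hx
    rw [L.T_left hx, Real.rpow_add_of_nonneg hx.1 zero_le_one L.γ_pos.le, Real.rpow_one]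
    ring
  rw [h2]
  exact h1.hasDerivWithinAt.congr h3 (h3 t ht)

lemma hasDeriv_right (t : ℝ) (ht : t ∈ Ico (1 / 2 : ℝ) 1) :
    HasDerivWithinAt L.T (LSVderiv L.γ L.G t) (Ico (1 / 2 : ℝ) 1) t := by
  have h1 := (L.G.hasDeriv t ⟨ht.1, ht.2.le⟩).mono Ico_subset_Icc_self
  rw [LSVderiv, if_neg (not_lt.2 ht.1)]
  exact h1.congr (fun x hx => L.T_right ⟨hx.1, hx.2.le⟩) (L.T_right ⟨ht.1, ht.2.le⟩)

/-- The transfer operator preserves decreasing functions: this is what Assumption (A) is for.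
With `q1`, `q2` the branch weights, write
`q1 f(v1) + q2 f(v2) = q1 (f(v1) - f(v2)) + (q1 + q2) f(v2)`. -/
lemma P_dec {f : ℝ → ℝ} (hf : IsDec f) : IsDec (L.P f) := by
  have hq1 : ∀ x ∈ Ico (0 : ℝ) 1, 0 ≤ L.p (L.v1 x) / LSVderiv L.γ L.G (L.v1 x) := by
    intro x hx
    have h := L.v1_mem hx
    exact div_nonneg (L.p_mem _ ⟨h.1, by linarith [h.2]⟩).1 (by linarith [L.deriv_left_ge h])
  have hv1 : ∀ x ∈ Ico (0 : ℝ) 1, L.v1 x ∈ Ico (0 : ℝ) 1 := fun x hx =>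
    ⟨(L.v1_mem hx).1, by linarith [(L.v1_mem hx).2]⟩
  have hv2 : ∀ x ∈ L.G.g '' Ico (1 / 2 : ℝ) 1, L.v2 x ∈ Ico (1 / 2 : ℝ) 1 := by
    rintro _ ⟨t, ht, rfl⟩
    rwa [L.v2_g ⟨ht.1, ht.2.le⟩]
  have hv2' : ∀ x ∈ L.G.g '' Ico (1 / 2 : ℝ) 1, L.v2 x ∈ Ico (0 : ℝ) 1 := fun x hx =>
    ⟨by linarith [(hv2 x hx).1], (hv2 x hx).2⟩
  have hq2 : ∀ x ∈ L.G.g '' Ico (1 / 2 : ℝ) 1,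
      0 ≤ L.p (L.v2 x) / LSVderiv L.γ L.G (L.v2 x) := by
    intro x hx
    have h := hv2 x hx
    exact div_nonneg (L.p_mem _ ⟨by linarith [h.1], h.2.le⟩).1
      (by linarith [L.deriv_right ⟨h.1, h.2.le⟩])
  constructor
  · intro x hx y hy hxy
    have a1 := L.anti1 hx hy hxy
    have b1 : f (L.v1 y) ≤ f (L.v1 x) := hf.anti (hv1 x hx) (hv1 y hy) (L.v1_mono hx hy hxy)
    have c1 := hf.nonneg _ (hv1 x hx)
    have d1 := hq1 y hy
    simp only at a1
    by_cases hyR : y ∈ L.G.g '' Ico (1 / 2 : ℝ) 1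
    · have hxR : x ∈ L.G.g '' Ico (1 / 2 : ℝ) 1 := by
        rw [L.image_right] at hyR ⊢
        exact ⟨hx.1, hxy.trans_lt hyR.2⟩
      have hsub : L.G.g '' Ico (1 / 2 : ℝ) 1 ⊆ L.G.g '' Icc (1 / 2 : ℝ) 1 :=
        image_mono Ico_subset_Icc_self
      have a2 := L.anti2 (hsub hxR) (hsub hyR) hxy
      simp only at a2
      have hv2m : L.v2 x ≤ L.v2 y := by
        refine (L.G.strictMono.le_iff_le (Ico_subset_Icc_self (hv2 x hxR))
          (Ico_subset_Icc_self (hv2 y hyR))).1 ?_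
        rwa [(L.v2_spec x (hsub hxR)).2, (L.v2_spec y (hsub hyR)).2]
      have b2 : f (L.v2 y) ≤ f (L.v2 x) := hf.anti (hv2' x hxR) (hv2' y hyR) hv2m
      have b3 : f (L.v2 x) ≤ f (L.v1 x) := hf.anti (hv1 x hx) (hv2' x hxR)
        (by linarith [(L.v1_mem hx).2, (hv2 x hxR).1])
      have c2 := hf.nonneg _ (hv2' x hxR)
      have d2 := hq2 y hyR
      rw [P, P, if_pos hyR, if_pos hxR]
      generalize L.p (L.v1 x) / LSVderiv L.γ L.G (L.v1 x) = q1x at *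
      generalize L.p (L.v1 y) / LSVderiv L.γ L.G (L.v1 y) = q1y at *
      generalize L.p (L.v2 x) / LSVderiv L.γ L.G (L.v2 x) = q2x at *
      generalize L.p (L.v2 y) / LSVderiv L.γ L.G (L.v2 y) = q2y at *
      nlinarith [mul_le_mul_of_nonneg_left b1 d1, mul_le_mul_of_nonneg_left b2 d2,
        mul_le_mul_of_nonneg_right a1 (sub_nonneg.2 b3), mul_le_mul_of_nonneg_right a2 c2]
    · rw [P, P, if_neg hyR, add_zero]
      refine (mul_le_mul a1 b1 (hf.nonneg _ (hv1 y hy)) (hq1 x hx)).trans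
        (le_add_of_nonneg_right ?_)
      split_ifs with h
      · exact mul_nonneg (hq2 x h) (hf.nonneg _ (hv2' x h))
      · exact le_rfl
  · intro x hx
    refine add_nonneg (mul_nonneg (hq1 x hx) (hf.nonneg _ (hv1 x hx))) ?_
    split_ifs with h
    · exact mul_nonneg (hq2 x h) (hf.nonneg _ (hv2' x h))
    · exact le_rfl

/-- Duality between transfer and Koopman operators. -/
lemma duality {f ψ : ℝ → ℝ} (hf : IsDec f) (hψm : Measurable ψ)
    (hψ : ∀ x, ψ x ∈ Icc (0 : ℝ) 1) :
    ∫ x, L.P f x * ψ x ∂mI = ∫ x, f x * L.U ψ x ∂mI := by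
  classical
  have hI : IntegrableOn (fun t => L.p t * f t * ψ (L.T t)) (Ico (0 : ℝ) 1) := by
    have h1 : Integrable (fun t => f t * L.U ψ t) mI := by
      refine integrable_mul_unit hf.integrable (L.U_meas hψm) fun x => ?_
      by_cases hx : x ∈ Icc (0 : ℝ) 1
      · rw [U, indicator_of_mem hx]
        have h := L.p_mem x hx
        have h' := hψ (L.T x)
        exact ⟨mul_nonneg h.1 h'.1, mul_le_one₀ h.2 h'.1 h'.2⟩
      · rw [U, indicator_of_notMem hx]
        simp
    rw [mI_eq] at h1
    refine IntegrableOn.congr_fun h1 (fun t ht => ?_) measurableSet_Ico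
    simp only [U]
    rw [indicator_of_mem (Ico_subset_Icc_self ht)]
    ring
  have hIl := hI.mono_set (Ico_subset_Ico_right (by norm_num : (1 / 2 : ℝ) ≤ 1))
  have hIr := hI.mono_set (Ico_subset_Ico_left (by norm_num : (0 : ℝ) ≤ 1 / 2))
  obtain ⟨i1, e1⟩ := branch_change_of_variables (v := L.v1) measurableSet_Ico L.hasDeriv_left
    (fun x hx => by linarith [L.deriv_left_ge hx]) (fun x hx => L.v1_T hx) L.p f ψ hIl
  obtain ⟨i2, e2⟩ := branch_change_of_variables (v := L.v2) measurableSet_Ico L.hasDeriv_right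
    (fun x hx => by linarith [L.deriv_right (Ico_subset_Icc_self hx)])
    (fun x hx => by rw [L.T_right (Ico_subset_Icc_self hx), L.v2_g (Ico_subset_Icc_self hx)])
    L.p f ψ hIr
  have him : L.T '' Ico (1 / 2 : ℝ) 1 = L.G.g '' Ico (1 / 2 : ℝ) 1 :=
    image_congr fun x hx => L.T_right (Ico_subset_Icc_self hx)
  rw [L.image_left] at i1 e1
  rw [him] at i2 e2
  have hRm : MeasurableSet (L.G.g '' Ico (1 / 2 : ℝ) 1) := by
    rw [L.image_right]; exact measurableSet_Ico
  have hRs : L.G.g '' Ico (1 / 2 : ℝ) 1 ⊆ Ico (0 : ℝ) 1 := by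
    rw [L.image_right]; exact Ico_subset_Ico_right L.g_one_le
  have eP : ∀ x, L.P f x * ψ x =
      L.p (L.v1 x) / LSVderiv L.γ L.G (L.v1 x) * f (L.v1 x) * ψ x +
      (L.G.g '' Ico (1 / 2 : ℝ) 1).indicator
        (fun x => L.p (L.v2 x) / LSVderiv L.γ L.G (L.v2 x) * f (L.v2 x) * ψ x) x := by
    intro x
    rw [P, indicator_apply, add_mul]
    split_ifs <;> simp
  have i2' : IntegrableOn ((L.G.g '' Ico (1 / 2 : ℝ) 1).indicator
      (fun x => L.p (L.v2 x) / LSVderiv L.γ L.G (L.v2 x) * f (L.v2 x) * ψ x)) (Ico 0 1) :=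
    ((integrable_indicator_iff hRm).2 i2).integrableOn
  rw [mI_eq]
  simp only [eP]
  rw [integral_add i1 i2', e1, setIntegral_indicator hRm, inter_eq_self_of_subset_right hRs, e2,
    ← setIntegral_union (Ico_disjoint_Ico_same) measurableSet_Ico hIl hIr,
    Ico_union_Ico_eq_Ico (by norm_num) (by norm_num)]
  refine setIntegral_congr_fun measurableSet_Ico fun t ht => ?_
  simp only [U]
  rw [indicator_of_mem (Ico_subset_Icc_self ht)]
  ring

end Leg

/-! ### The random map -/

/-- The random map: two weighted LSV-type maps whose weights sum to one; the first one
has the larger exponent, and its weight is bounded below. -/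
structure Sys where
  a : Leg
  b : Leg
  hγ : b.γ ≤ a.γ
  hsum : ∀ x ∈ Icc (0 : ℝ) 1, a.p x + b.p x = 1
  δ : ℝ
  δ_pos : 0 < δ
  le_a : ∀ x ∈ Icc (0 : ℝ) 1, δ ≤ a.p x

/-- A probability density (with respect to Lebesgue measure on `[0,1]`) that is decreasing. -/
structure IsDens (f : ℝ → ℝ) : Prop extends IsDec f where
  mass : ∫ x, f x ∂mI = 1

namespace Sys

variable (S : Sys)

/-- The transfer operator of the random map. -/
def P (f : ℝ → ℝ) (x : ℝ) : ℝ := S.a.P f x + S.b.P f x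

/-- The Koopman operator of the random map. -/
def U (ψ : ℝ → ℝ) (x : ℝ) : ℝ := S.a.U ψ x + S.b.U ψ x

/-- The inverse of the left branch of the map with the larger exponent, which is the one moving
points away from `0` most slowly. -/
def v : ℝ → ℝ := S.a.v1

lemma P_dec {f : ℝ → ℝ} (hf : IsDec f) : IsDec (S.P f) := by
  have h1 := S.a.P_dec hf
  have h2 := S.b.P_dec hf
  exact ⟨fun x hx y hy h => add_le_add (h1.anti hx hy h) (h2.anti hx hy h),
    fun x hx => add_nonneg (h1.nonneg x hx) (h2.nonneg x hx)⟩

lemma U_meas {ψ : ℝ → ℝ} (hψ : Measurable ψ) : Measurable (S.U ψ) :=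
  (S.a.U_meas hψ).add (S.b.U_meas hψ)

lemma U_apply {ψ : ℝ → ℝ} {x : ℝ} (hx : x ∈ Icc (0 : ℝ) 1) :
    S.U ψ x = S.a.p x * ψ (S.a.T x) + S.b.p x * ψ (S.b.T x) := by
  simp only [U, Leg.U]
  rw [indicator_of_mem hx, indicator_of_mem hx]

lemma U_mem {ψ : ℝ → ℝ} (hψ : ∀ x, ψ x ∈ Icc (0 : ℝ) 1) (x : ℝ) : S.U ψ x ∈ Icc (0 : ℝ) 1 := by
  by_cases hx : x ∈ Icc (0 : ℝ) 1
  · rw [S.U_apply hx]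
    have h1 := S.a.p_mem x hx
    have h2 := S.b.p_mem x hx
    have h3 := S.hsum x hx
    have h4 := hψ (S.a.T x)
    have h5 := hψ (S.b.T x)
    constructor
    · exact add_nonneg (mul_nonneg h1.1 h4.1) (mul_nonneg h2.1 h5.1)
    · nlinarith [mul_le_mul_of_nonneg_left h4.2 h1.1, mul_le_mul_of_nonneg_left h5.2 h2.1]
  · simp only [U, Leg.U]
    rw [indicator_of_notMem hx, indicator_of_notMem hx]
    simp

lemma leg_U_mem (L : Leg) {ψ : ℝ → ℝ} (hψ : ∀ x, ψ x ∈ Icc (0 : ℝ) 1) (x : ℝ) :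
    L.U ψ x ∈ Icc (0 : ℝ) 1 := by
  by_cases hx : x ∈ Icc (0 : ℝ) 1
  · rw [Leg.U, indicator_of_mem hx]
    have h := L.p_mem x hx
    have h' := hψ (L.T x)
    exact ⟨mul_nonneg h.1 h'.1, mul_le_one₀ h.2 h'.1 h'.2⟩
  · rw [Leg.U, indicator_of_notMem hx]
    simp

lemma duality {f ψ : ℝ → ℝ} (hf : IsDec f) (hψm : Measurable ψ)
    (hψ : ∀ x, ψ x ∈ Icc (0 : ℝ) 1) :
    ∫ x, S.P f x * ψ x ∂mI = ∫ x, f x * S.U ψ x ∂mI := by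
  simp only [P, U, add_mul, mul_add]
  rw [integral_add (integrable_mul_unit (S.a.P_dec hf).integrable hψm hψ)
      (integrable_mul_unit (S.b.P_dec hf).integrable hψm hψ),
    integral_add (integrable_mul_unit hf.integrable (S.a.U_meas hψm) (leg_U_mem _ hψ))
      (integrable_mul_unit hf.integrable (S.b.U_meas hψm) (leg_U_mem _ hψ)),
    S.a.duality hf hψm hψ, S.b.duality hf hψm hψ]

lemma ae_mem_Ico : ∀ᵐ x ∂mI, x ∈ Ico (0 : ℝ) 1 := by
  rw [mI_eq]; exact ae_restrict_mem measurableSet_Ico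

lemma P_dens {f : ℝ → ℝ} (hf : IsDens f) : IsDens (S.P f) := by
  refine ⟨S.P_dec hf.toIsDec, ?_⟩
  have h := S.duality hf.toIsDec (ψ := fun _ => 1) measurable_const (by simp)
  have h' : ∫ x, S.P f x ∂mI = ∫ x, f x * S.U (fun _ => 1) x ∂mI := by simpa using h
  rw [h']
  refine Eq.trans ?_ hf.mass
  refine integral_congr_ae ?_
  filter_upwards [ae_mem_Ico] with x hx
  rw [S.U_apply (Ico_subset_Icc_self hx)]
  simp [S.hsum x (Ico_subset_Icc_self hx)]

lemma dens_one : IsDens (fun _ => 1) := ⟨⟨antitoneOn_const, fun _ _ => zero_le_one⟩, by simp⟩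

lemma P_iter_dens {f : ℝ → ℝ} (hf : IsDens f) (n : ℕ) : IsDens (S.P^[n] f) := by
  induction n with
  | zero => exact hf
  | succ n ih => rw [Function.iterate_succ_apply']; exact S.P_dens ih

/-- Iterates of the Koopman operator preserve measurable functions with values in `[0,1]`. -/
lemma U_iter {ψ : ℝ → ℝ} (hψm : Measurable ψ) (hψ : ∀ x, ψ x ∈ Icc (0 : ℝ) 1) (n : ℕ) :
    Measurable (S.U^[n] ψ) ∧ ∀ x, S.U^[n] ψ x ∈ Icc (0 : ℝ) 1 := by
  induction n with
  | zero => exact ⟨hψm, hψ⟩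
  | succ n ih =>
    rw [Function.iterate_succ_apply']
    exact ⟨S.U_meas ih.1, S.U_mem ih.2⟩

lemma duality_iter {f ψ : ℝ → ℝ} (hf : IsDens f) (hψm : Measurable ψ)
    (hψ : ∀ x, ψ x ∈ Icc (0 : ℝ) 1) (n : ℕ) :
    ∫ x, S.P^[n] f x * ψ x ∂mI = ∫ x, f x * S.U^[n] ψ x ∂mI := by
  induction n generalizing f with
  | zero => rfl
  | succ n ih =>
    rw [Function.iterate_succ_apply, ih (S.P_dens hf), Function.iterate_succ_apply',
      S.duality hf.toIsDec (S.U_iter hψm hψ n).1 (S.U_iter hψm hψ n).2]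

/-! ### Mass near the neutral fixed point -/

lemma v_mem {x : ℝ} (hx : x ∈ Ico (0 : ℝ) 1) : S.v x ∈ Ico (0 : ℝ) 1 :=
  ⟨(S.a.v1_mem hx).1, (S.a.v1_mem hx).2.trans (by norm_num)⟩

lemma v_iter_mem {x : ℝ} (hx : x ∈ Ico (0 : ℝ) 1) (n : ℕ) : S.v^[n] x ∈ Ico (0 : ℝ) 1 := by
  induction n with
  | zero => exact hx
  | succ n ih => rw [Function.iterate_succ_apply']; exact S.v_mem ih

/-- A point of the left half mapped below `x` by either map is at most `v x`. -/
lemma le_v {x t : ℝ} (hx : x ∈ Ico (0 : ℝ) 1) (ht : t ∈ Ico (0 : ℝ) (1 / 2))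
    (h : S.a.T t ≤ x ∨ S.b.T t ≤ x) : t ≤ S.v x := by
  have hab : S.a.T t ≤ S.b.T t := by
    rw [S.a.T_left' ht, S.b.T_left' ht]
    refine mul_le_mul_of_nonneg_left (add_le_add le_rfl ?_) ht.1
    exact Real.rpow_le_rpow_of_exponent_ge' (by linarith [ht.1]) (by linarith [ht.2])
      S.b.γ_pos.le S.hγ
  have h' : S.a.T t ≤ x := h.elim id hab.trans
  refine (S.a.T_left_strictMono.le_iff_le ht (S.a.v1_mem hx)).1 ?_
  rwa [S.a.T_v1 hx]

/-- The mass a function gives to `[0,x]`. -/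
def F (f : ℝ → ℝ) (x : ℝ) : ℝ := ∫ t, f t * (Icc 0 x).indicator 1 t ∂mI

lemma ind_mem (s : Set ℝ) (t : ℝ) : s.indicator (1 : ℝ → ℝ) t ∈ Icc (0 : ℝ) 1 := by
  by_cases h : t ∈ s <;> simp [h]

lemma ind_meas {s : Set ℝ} (hs : MeasurableSet s) : Measurable (s.indicator (1 : ℝ → ℝ)) :=
  measurable_one.indicator hs

lemma F_eq (f : ℝ → ℝ) {x : ℝ} (hx : x ∈ Ico (0 : ℝ) 1) : F f x = ∫ t in Icc 0 x, f t := by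
  have : ∀ t, f t * (Icc 0 x).indicator 1 t = (Icc 0 x).indicator f t := by
    intro t
    by_cases h : t ∈ Icc 0 x <;> simp [h]
  simp only [F, this]
  rw [mI, setIntegral_indicator measurableSet_Icc,
    inter_eq_self_of_subset_right (Icc_subset_Icc_right hx.2.le)]

lemma F_le {f : ℝ → ℝ} (hf : IsDec f) {x : ℝ} (hx : x ∈ Ico (0 : ℝ) 1) : F f x ≤ f 0 * x := by
  rw [F_eq f hx]
  have hi : IntegrableOn f (Icc 0 x) :=
    IntegrableOn.mono_set (t := Icc 0 1) hf.integrable (Icc_subset_Icc_right hx.2.le)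
  calc ∫ t in Icc 0 x, f t ≤ ∫ t in Icc 0 x, f 0 := by
        refine setIntegral_mono_on hi (by simp) measurableSet_Icc fun t ht => ?_
        exact hf.le_zero ⟨ht.1, ht.2.trans_lt hx.2⟩
    _ = f 0 * x := by simp [hx.1, mul_comm]

lemma mul_le_F {f : ℝ → ℝ} (hf : IsDec f) {x : ℝ} (hx : x ∈ Ico (0 : ℝ) 1) : f x * x ≤ F f x := by
  rw [F_eq f hx]
  have hi : IntegrableOn f (Icc 0 x) :=
    IntegrableOn.mono_set (t := Icc 0 1) hf.integrable (Icc_subset_Icc_right hx.2.le)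
  calc f x * x = ∫ t in Icc 0 x, f x := by simp [hx.1, mul_comm]
    _ ≤ ∫ t in Icc 0 x, f t := by
        refine setIntegral_mono_on (by simp) hi measurableSet_Icc fun t ht => ?_
        exact hf.anti ⟨ht.1, ht.2.trans_lt hx.2⟩ hx ht.2

lemma F_le_one {f : ℝ → ℝ} (hf : IsDens f) (x : ℝ) : F f x ≤ 1 := by
  rw [← hf.mass]
  refine integral_mono_ae (integrable_mul_unit hf.integrable (ind_meas measurableSet_Icc)
    (ind_mem _)) hf.integrable ?_
  filter_upwards [ae_mem_Ico] with t ht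
  exact mul_le_of_le_one_right (hf.nonneg t ht) (ind_mem _ t).2

/-- Mass enters `[0,x]` only from `[0, v x]` and, near `1/2`, from an interval of length at most
`x`, on which a decreasing density is at most `2`. -/
lemma F_P_le {f : ℝ → ℝ} (hf : IsDens f) {x : ℝ} (hx : x ∈ Ico (0 : ℝ) 1) :
    F (S.P f) x ≤ F f (S.v x) + 2 * x := by
  have hhalf : f (1 / 2) ≤ 2 := by
    have h1 := mul_le_F hf.toIsDec (x := 1 / 2) ⟨by norm_num, by norm_num⟩
    have h2 := F_le_one hf (1 / 2)
    linarith
  have hm1 : Measurable ((Icc 0 x).indicator (1 : ℝ → ℝ)) := ind_meas measurableSet_Icc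
  have i1 := integrable_mul_unit hf.integrable
    (ind_meas (measurableSet_Icc (a := 0) (b := S.v x))) (ind_mem _)
  have i2 : Integrable ((Icc (1 / 2) (1 / 2 + x)).indicator (fun _ : ℝ => (2 : ℝ))) mI :=
    (integrable_const _).indicator measurableSet_Icc
  have e2 : ∫ t, (Icc (1 / 2) (1 / 2 + x)).indicator (fun _ : ℝ => (2 : ℝ)) t ∂mI ≤ 2 * x := by
    rw [integral_indicator measurableSet_Icc, setIntegral_const, smul_eq_mul, mul_comm]
    refine mul_le_mul_of_nonneg_left ?_ (by norm_num)
    have : mI (Icc (1 / 2) (1 / 2 + x)) ≤ ENNReal.ofReal x := by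
      refine (Measure.restrict_apply_le _ _).trans ?_
      rw [Real.volume_Icc]; simp
    exact ENNReal.toReal_le_of_le_ofReal hx.1 this
  rw [F, S.duality hf.toIsDec hm1 (ind_mem _)]
  refine le_trans ?_ (add_le_add le_rfl e2)
  rw [F, ← integral_add i1 i2]
  refine integral_mono_ae
    (integrable_mul_unit hf.integrable (S.U_meas hm1) (S.U_mem (ind_mem _))) (i1.add i2) ?_
  filter_upwards [ae_mem_Ico] with t ht
  have hu := S.U_mem (ind_mem (Icc 0 x)) t
  have hft := hf.nonneg t ht
  have htI := Ico_subset_Icc_self ht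
  have key : S.a.T t ≤ x ∨ S.b.T t ≤ x ∨ S.U ((Icc 0 x).indicator 1) t = 0 := by
    by_contra! hcon
    refine hcon.2.2 ?_
    rw [S.U_apply htI, indicator_of_notMem, indicator_of_notMem]
    · simp
    · exact fun h => absurd h.2 (not_le.2 hcon.2.1)
    · exact fun h => absurd h.2 (not_le.2 hcon.1)
  have n1 : 0 ≤ f t * (Icc 0 (S.v x)).indicator 1 t := mul_nonneg hft (ind_mem _ t).1
  have n2 : 0 ≤ (Icc (1 / 2) (1 / 2 + x)).indicator (fun _ : ℝ => (2 : ℝ)) t :=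
    indicator_nonneg (fun _ _ => by norm_num) t
  rcases or_assoc.2 key with h | h
  · rcases lt_or_ge t (1 / 2) with hl | hr
    · have := S.le_v hx ⟨ht.1, hl⟩ h
      refine le_trans ?_ (le_add_of_nonneg_right n2)
      rw [indicator_of_mem (show t ∈ Icc 0 (S.v x) from ⟨ht.1, this⟩)]
      exact mul_le_mul_of_nonneg_left hu.2 hft
    · have : t ≤ 1 / 2 + x := by
        have g1 := S.a.sub_half_le_g ⟨hr, ht.2.le⟩
        have g2 := S.b.sub_half_le_g ⟨hr, ht.2.le⟩
        rw [S.a.T_right ⟨hr, ht.2.le⟩, S.b.T_right ⟨hr, ht.2.le⟩] at h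
        rcases h with h | h <;> linarith
      refine le_trans ?_ (le_add_of_nonneg_left n1)
      rw [indicator_of_mem (show t ∈ Icc (1 / 2) (1 / 2 + x) from ⟨hr, this⟩)]
      have : f t ≤ 2 := (hf.anti ⟨by norm_num, by norm_num⟩ ht hr).trans hhalf
      nlinarith [hu.1, hu.2]
  · rw [h, mul_zero]
    exact add_nonneg n1 n2

/-- The power law `A x ^ (1 - α)` dominates the recursion of `F_P_le`. -/
lemma exists_A : ∃ A : ℝ, 1 ≤ A ∧ ∀ x ∈ Ico (0 : ℝ) 1,
    A * S.v x ^ (1 - S.a.γ) + 2 * x ≤ A * x ^ (1 - S.a.γ) := by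
  have hα0 := S.a.γ_pos
  have hα1 := S.a.γ_lt
  set α := S.a.γ with hα
  refine ⟨max 1 (8 / (1 - α)), le_max_left _ _, fun x hx => ?_⟩
  have hA : 8 ≤ max 1 (8 / (1 - α)) * (1 - α) := by
    have := le_max_right 1 (8 / (1 - α))
    rwa [div_le_iff₀ (by linarith)] at this
  set A := max 1 (8 / (1 - α))
  have hy := S.a.v1_mem hx
  have hTy := S.a.T_v1 hx
  rw [S.a.T_left' hy] at hTy
  have s1 := S.a.pow_le_one hy
  have s0 := S.a.pow_nonneg hy
  rw [← hα] at hTy s1 s0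
  change A * S.a.v1 x ^ (1 - α) + 2 * x ≤ A * x ^ (1 - α)
  set y := S.a.v1 x
  set s := (2 * y) ^ α with hs
  -- Bernoulli's inequality, applied to the exponent `α ≤ 1`.
  have hb : (1 + s) ^ α ≤ 1 + α * s :=
    rpow_one_add_le_one_add_mul_self (by linarith) hα0.le hα1.le
  have hpos : 0 < (1 + s) ^ α := Real.rpow_pos_of_pos (by linarith) _
  have hB : 1 + (1 - α) * s / 2 ≤ (1 + s) ^ (1 - α) := by
    rw [Real.rpow_sub (by linarith), Real.rpow_one, le_div_iff₀ hpos]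
    have h0 : 0 ≤ 1 + (1 - α) * s / 2 := by nlinarith
    refine (mul_le_mul_of_nonneg_left hb h0).trans ?_
    nlinarith [mul_nonneg (sub_nonneg.2 hα1.le) s0,
      mul_nonneg (mul_nonneg (sub_nonneg.2 hα1.le) s0) (sub_nonneg.2 s1),
      mul_nonneg (mul_nonneg (mul_nonneg (sub_nonneg.2 hα1.le) s0) s0) (sub_nonneg.2 hα1.le)]
  have hx' : x ^ (1 - α) = y ^ (1 - α) * (1 + s) ^ (1 - α) := by
    rw [← hTy, Real.mul_rpow hy.1 (by linarith)]
  have hys : y ≤ y ^ (1 - α) * s := by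
    rw [hs, Real.mul_rpow (by norm_num) hy.1]
    have h1 : (1 : ℝ) ≤ 2 ^ α := Real.one_le_rpow (by norm_num) hα0.le
    have h2 : y ^ (1 - α) * y ^ α = y := by
      rw [← Real.rpow_add_of_nonneg hy.1 (by linarith) hα0.le]; simp
    nlinarith [hy.1]
  have hx2 : x ≤ 2 * y := by nlinarith [hy.1]
  have hyp : 0 ≤ y ^ (1 - α) := Real.rpow_nonneg hy.1 _
  have hA0 : 0 ≤ A := le_trans zero_le_one (le_max_left _ _)
  rw [hx']
  have k1 : A * (y ^ (1 - α) * (1 + (1 - α) * s / 2)) ≤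
      A * (y ^ (1 - α) * (1 + s) ^ (1 - α)) :=
    mul_le_mul_of_nonneg_left (mul_le_mul_of_nonneg_left hB hyp) hA0
  have k2 : 8 * y ≤ A * (1 - α) * (y ^ (1 - α) * s) :=
    mul_le_mul hA hys hy.1 (by linarith)
  nlinarith

/-- The constant of the cone condition `F f x ≤ A x ^ (1 - α)`. -/
def A : ℝ := S.exists_A.choose

lemma one_le_A : 1 ≤ S.A := S.exists_A.choose_spec.1

lemma A_spec {x : ℝ} (hx : x ∈ Ico (0 : ℝ) 1) :
    S.A * S.v x ^ (1 - S.a.γ) + 2 * x ≤ S.A * x ^ (1 - S.a.γ) := S.exists_A.choose_spec.2 x hx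

lemma F_iter_le {f : ℝ → ℝ} (hf : IsDens f) (n : ℕ) {x : ℝ} (hx : x ∈ Ico (0 : ℝ) 1) :
    F (S.P^[n] f) x ≤ S.A * x ^ (1 - S.a.γ) + f 0 * S.v^[n] x := by
  induction n generalizing x with
  | zero =>
    have h1 := F_le hf.toIsDec hx
    have h2 : 0 ≤ S.A * x ^ (1 - S.a.γ) :=
      mul_nonneg (by linarith [S.one_le_A]) (Real.rpow_nonneg hx.1 _)
    simp only [Function.iterate_zero, id]
    linarith
  | succ n ih =>
    have h1 := S.F_P_le (S.P_iter_dens hf n) hx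
    have h2 := ih (S.v_mem hx)
    have h3 := S.A_spec hx
    rw [← Function.iterate_succ_apply' S.P] at h1
    rw [Function.iterate_succ_apply S.v]
    linarith

lemma F_iter_one_le (n : ℕ) {x : ℝ} (hx : x ∈ Ico (0 : ℝ) 1) :
    F (S.P^[n] fun _ => 1) x ≤ S.A * x ^ (1 - S.a.γ) := by
  induction n generalizing x with
  | zero =>
    have h1 := F_le dens_one.toIsDec hx
    have h2 : x ≤ x ^ (1 - S.a.γ) := Real.self_le_rpow_of_le_one hx.1 hx.2.le
      (by linarith [S.a.γ_pos])
    simp only [Function.iterate_zero, id]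
    nlinarith [S.one_le_A, hx.1]
  | succ n ih =>
    have h1 := S.F_P_le (S.P_iter_dens dens_one n) hx
    have h2 := ih (S.v_mem hx)
    have h3 := S.A_spec hx
    rw [← Function.iterate_succ_apply' S.P] at h1
    linarith

/-- The backward orbits under `v` converge to `0` uniformly. -/
lemma v_iter_small {ε : ℝ} (hε : 0 < ε) :
    ∃ N : ℕ, ∀ n ≥ N, ∀ x ∈ Ico (0 : ℝ) 1, S.v^[n] x ≤ ε := by
  set θ := 1 / (1 + (2 * ε) ^ S.a.γ) with hθ
  have hp : 0 < (2 * ε) ^ S.a.γ := Real.rpow_pos_of_pos (by linarith) _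
  have hθ0 : 0 < θ := by positivity
  have hθ1 : θ < 1 := by rw [hθ, div_lt_one (by linarith)]; linarith
  have hstep : ∀ x ∈ Ico (0 : ℝ) 1, S.v x ≤ max ε (θ * x) := by
    intro x hx
    by_contra! h
    have h1 := (max_lt_iff.1 h).1
    have h2 := (max_lt_iff.1 h).2
    have hT := S.a.T_v1 hx
    rw [S.a.T_left' (S.a.v1_mem hx)] at hT
    change S.v x * (1 + (2 * S.v x) ^ S.a.γ) = x at hT
    have h3 : (2 * ε) ^ S.a.γ ≤ (2 * S.v x) ^ S.a.γ :=
      Real.rpow_le_rpow (by linarith) (by linarith) S.a.γ_pos.le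
    rw [hθ, one_div_mul_eq_div, div_lt_iff₀ (by linarith)] at h2
    nlinarith
  have hn : ∀ n : ℕ, ∀ x ∈ Ico (0 : ℝ) 1, S.v^[n] x ≤ max ε (θ ^ n) := by
    intro n
    induction n with
    | zero => intro x hx; simpa using Or.inr hx.2.le
    | succ n ih =>
      intro x hx
      rw [Function.iterate_succ_apply']
      refine (hstep _ (S.v_iter_mem hx n)).trans (max_le (le_max_left _ _) ?_)
      have h1 := mul_le_mul_of_nonneg_left (ih x hx) hθ0.le
      rw [mul_max_of_nonneg _ _ hθ0.le, ← pow_succ'] at h1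
      exact h1.trans (max_le_max (by nlinarith) le_rfl)
  obtain ⟨N, hN⟩ := exists_pow_lt_of_lt_one hε hθ1
  refine ⟨N, fun n hn' x hx => (hn n x hx).trans (max_le le_rfl ?_)⟩
  exact (pow_le_pow_of_le_one hθ0.le hθ1.le hn').trans hN.le

/-! ### The uniform lower bound -/

lemma P_ge {f : ℝ → ℝ} (hf : IsDec f) {x : ℝ} (hx : x ∈ Ico (0 : ℝ) 1) :
    S.δ / 3 * f (S.v x) ≤ S.P f x := by
  classical
  have h2 := (S.b.P_dec hf).nonneg x hx
  have hv := S.a.v1_mem hx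
  have hvI : S.a.v1 x ∈ Icc (0 : ℝ) 1 := ⟨hv.1, by linarith [hv.2]⟩
  have hq : S.δ / 3 ≤ S.a.p (S.a.v1 x) / LSVderiv S.a.γ S.a.G (S.a.v1 x) :=
    div_le_div₀ (S.a.p_mem _ hvI).1 (S.le_a _ hvI) (by linarith [S.a.deriv_left_ge hv])
      (S.a.deriv_left_le hv)
  have h1 : S.δ / 3 * f (S.v x) ≤ S.a.P f x := by
    rw [Leg.P]
    refine le_trans (mul_le_mul_of_nonneg_right hq (hf.nonneg _ (S.v_mem hx)))
      (le_add_of_nonneg_right ?_)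
    split_ifs with h
    · obtain ⟨t, ht, rfl⟩ := h
      have ht' := Ico_subset_Icc_self ht
      rw [S.a.v2_g ht']
      exact mul_nonneg (div_nonneg (S.a.p_mem _ ⟨by linarith [ht.1], ht'.2⟩).1
        (by linarith [S.a.deriv_right ht'])) (hf.nonneg _ ⟨by linarith [ht.1], ht.2⟩)
    · exact le_rfl
  exact h1.trans (le_add_of_nonneg_right h2)

lemma P_iter_ge {f : ℝ → ℝ} (hf : IsDens f) (n : ℕ) {x : ℝ} (hx : x ∈ Ico (0 : ℝ) 1) :
    (S.δ / 3) ^ n * f (S.v^[n] x) ≤ S.P^[n] f x := by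
  induction n generalizing x with
  | zero => simp
  | succ n ih =>
    rw [Function.iterate_succ_apply' S.P, Function.iterate_succ_apply S.v]
    refine le_trans ?_ (S.P_ge (S.P_iter_dens hf n).toIsDec hx)
    have := mul_le_mul_of_nonneg_left (ih (S.v_mem hx)) (by linarith [S.δ_pos] : 0 ≤ S.δ / 3)
    rw [pow_succ']
    linarith

/-- A density giving mass at most `1/2` to `[0,x]` is at least `1/2` at `x`. -/
lemma half_le {f : ℝ → ℝ} (hf : IsDens f) {x : ℝ} (hx : x ∈ Ico (0 : ℝ) 1) (h : F f x ≤ 1 / 2) :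
    1 / 2 ≤ f x := by
  have i1 := integrable_mul_unit hf.integrable
    (ind_meas (measurableSet_Icc (a := 0) (b := x))) (ind_mem _)
  have : ∫ t, f t ∂mI ≤ ∫ t, (f t * (Icc 0 x).indicator 1 t + f x) ∂mI := by
    refine integral_mono_ae hf.integrable (i1.add (integrable_const _)) ?_
    filter_upwards [ae_mem_Ico] with t ht
    rcases le_or_gt t x with h' | h'
    · simp only [indicator_of_mem (show t ∈ Icc 0 x from ⟨ht.1, h'⟩), Pi.one_apply, mul_one]
      linarith [hf.nonneg x hx]
    · have h1 := hf.anti hx ht h'.le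
      have h2 := mul_nonneg (hf.nonneg t ht) (ind_mem (Icc 0 x) t).1
      linarith
  rw [integral_add i1 (integrable_const _), hf.mass] at this
  rw [F] at h
  simp at this h ⊢
  linarith

/-- All decreasing densities are eventually bounded below by one and the same constant. -/
lemma exists_lower : ∃ c : ℝ, 0 < c ∧ c < 1 ∧ ∀ f, IsDens f →
    ∃ n₀ : ℕ, ∀ n ≥ n₀, ∀ x ∈ Ico (0 : ℝ) 1, c ≤ S.P^[n] f x := by
  obtain ⟨x₀, hx₀, hAx⟩ : ∃ x₀ ∈ Ioo (0 : ℝ) 1, S.A * x₀ ^ (1 - S.a.γ) ≤ 1 / 4 := by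
    have hc : Tendsto (fun x : ℝ => S.A * x ^ (1 - S.a.γ)) (𝓝[>] 0) (𝓝 0) := by
      have h1 : ContinuousAt (fun x : ℝ => S.A * x ^ (1 - S.a.γ)) 0 :=
        (Real.continuousAt_rpow_const _ _ (Or.inr (by linarith [S.a.γ_lt]))).const_mul _
      have h2 := h1.tendsto
      simp only [Real.zero_rpow (by linarith [S.a.γ_lt] : 1 - S.a.γ ≠ 0), mul_zero] at h2
      exact h2.mono_left nhdsWithin_le_nhds
    have h1 := hc.eventually (ge_mem_nhds (by norm_num : (0 : ℝ) < 1 / 4))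
    have h2 := Ioo_mem_nhdsGT (zero_lt_one' ℝ)
    obtain ⟨x, hx⟩ := (h1.and h2).exists
    exact ⟨x, hx.2, hx.1⟩
  have hx₀' : x₀ ∈ Ico (0 : ℝ) 1 := ⟨hx₀.1.le, hx₀.2⟩
  obtain ⟨N, hN⟩ := S.v_iter_small hx₀.1
  have hδ1 : S.δ ≤ 1 := (S.le_a 0 (by simp)).trans (S.a.p_mem 0 (by simp)).2
  have hδ := S.δ_pos
  refine ⟨(S.δ / 3) ^ N * (1 / 2), by positivity, ?_, fun f hf => ?_⟩
  · have : (S.δ / 3) ^ N ≤ 1 := pow_le_one₀ (by linarith) (by linarith)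
    linarith
  · have hf0 : 0 ≤ f 0 := hf.nonneg 0 (by simp)
    obtain ⟨M, hM⟩ := S.v_iter_small (ε := 1 / (4 * (f 0 + 1))) (by positivity)
    refine ⟨M + N, fun n hn x hx => ?_⟩
    obtain ⟨k, rfl⟩ : ∃ k, n = N + k := ⟨n - N, by omega⟩
    have hk : M ≤ k := by omega
    rw [Function.iterate_add_apply]
    have hd := S.P_iter_dens hf k
    refine le_trans ?_ (S.P_iter_ge hd N hx)
    refine mul_le_mul_of_nonneg_left ?_ (by positivity)
    have h1 : 1 / 2 ≤ S.P^[k] f x₀ := by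
      refine half_le hd hx₀' ?_
      have h2 := S.F_iter_le hf k hx₀'
      have h3 := mul_le_mul_of_nonneg_left (hM k hk x₀ hx₀') hf0
      have h4 : f 0 * (1 / (4 * (f 0 + 1))) ≤ 1 / 4 := by
        rw [mul_one_div, div_le_iff₀ (by positivity)]; linarith
      linarith
    exact h1.trans (hd.anti (S.v_iter_mem hx N) hx₀' (hN N le_rfl x hx))

/-! ### Loss of memory -/

/-- Subtracting the common lower bound from two densities and renormalising shows that
differences of decreasing densities are contracted, when tested against `U^n ψ`. -/
lemma memory_loss {ψ : ℝ → ℝ} (hψm : Measurable ψ) (hψ : ∀ x, ψ x ∈ Icc (0 : ℝ) 1)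
    {f₁ f₂ : ℝ → ℝ} (h₁ : IsDens f₁) (h₂ : IsDens f₂) :
    Tendsto (fun n => ∫ x, f₁ x * S.U^[n] ψ x ∂mI - ∫ x, f₂ x * S.U^[n] ψ x ∂mI)
      atTop (𝓝 0) := by
  obtain ⟨c, hc0, hc1, hc⟩ := S.exists_lower
  have hI : ∀ f, IsDens f → ∀ n, Integrable (fun x => f x * S.U^[n] ψ x) mI := fun f hf n =>
    integrable_mul_unit hf.integrable (S.U_iter hψm hψ n).1 (S.U_iter hψm hψ n).2
  have h01 : ∀ f, IsDens f → ∀ n, ∫ x, f x * S.U^[n] ψ x ∂mI ∈ Icc (0 : ℝ) 1 := by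
    intro f hf n
    constructor
    · refine integral_nonneg_of_ae ?_
      filter_upwards [ae_mem_Ico] with x hx
      exact mul_nonneg (hf.nonneg x hx) ((S.U_iter hψm hψ n).2 x).1
    · rw [← hf.mass]
      refine integral_mono_ae (hI f hf n) hf.integrable ?_
      filter_upwards [ae_mem_Ico] with x hx
      exact mul_le_of_le_one_right (hf.nonneg x hx) ((S.U_iter hψm hψ n).2 x).2
  have hr : ∀ f, IsDens f → (∀ x ∈ Ico (0 : ℝ) 1, c ≤ f x) →
      IsDens (fun x => (f x - c) / (1 - c)) := by
    intro f hf hfc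
    refine ⟨⟨fun x hx y hy h => ?_, fun x hx => ?_⟩, ?_⟩
    · exact div_le_div_of_nonneg_right (sub_le_sub_right (hf.anti hx hy h) c) (by linarith)
    · exact div_nonneg (sub_nonneg.2 (hfc x hx)) (by linarith)
    · rw [integral_div, integral_sub hf.integrable (integrable_const _), hf.mass]
      simp
      exact (sub_pos.2 hc1).ne'
  have key : ∀ k : ℕ, ∀ f₁ f₂, IsDens f₁ → IsDens f₂ → ∃ n₀, ∀ n ≥ n₀,
      |∫ x, f₁ x * S.U^[n] ψ x ∂mI - ∫ x, f₂ x * S.U^[n] ψ x ∂mI| ≤ (1 - c) ^ k := by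
    intro k
    induction k with
    | zero =>
      intro f₁ f₂ h₁ h₂
      refine ⟨0, fun n _ => ?_⟩
      have a := h01 f₁ h₁ n
      have b := h01 f₂ h₂ n
      rw [pow_zero, abs_le]
      constructor <;> linarith [a.1, a.2, b.1, b.2]
    | succ k ih =>
      intro f₁ f₂ h₁ h₂
      obtain ⟨n₁, hn₁⟩ := hc f₁ h₁
      obtain ⟨n₂, hn₂⟩ := hc f₂ h₂
      set m := max n₁ n₂
      have d₁ := S.P_iter_dens h₁ m
      have d₂ := S.P_iter_dens h₂ m
      have l₁ := hn₁ m (le_max_left _ _)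
      have l₂ := hn₂ m (le_max_right _ _)
      obtain ⟨n₃, hn₃⟩ := ih _ _ (hr _ d₁ l₁) (hr _ d₂ l₂)
      refine ⟨n₃ + m, fun n hn => ?_⟩
      obtain ⟨j, rfl⟩ : ∃ j, n = m + j := ⟨n - m, by omega⟩
      have hj := hn₃ j (by omega)
      have e : ∀ f, IsDens f → ∫ x, f x * S.U^[m + j] ψ x ∂mI =
          (1 - c) * ∫ x, (S.P^[m] f x - c) / (1 - c) * S.U^[j] ψ x ∂mI +
            c * ∫ x, S.U^[j] ψ x ∂mI := by
        intro f hf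
        obtain ⟨um, ub⟩ := S.U_iter hψm hψ j
        rw [Function.iterate_add_apply, ← S.duality_iter hf um ub, ← integral_const_mul,
          ← integral_const_mul, ← integral_add]
        · refine integral_congr_ae (Eventually.of_forall fun x => ?_)
          have : 1 - c ≠ 0 := by linarith
          simp only
          field_simp
          ring
        · have := (((hI _ (S.P_iter_dens hf m) j).sub
            ((hI _ dens_one j).const_mul c)))
          refine this.congr (Eventually.of_forall fun x => ?_)
          have : 1 - c ≠ 0 := by linarith
          simp only [Pi.sub_apply]
          field_simp
        · simpa using (hI _ dens_one j).const_mul c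
      rw [e f₁ h₁, e f₂ h₂, add_sub_add_right_eq_sub, ← mul_sub, abs_mul,
        abs_of_pos (by linarith : 0 < 1 - c), pow_succ']
      exact mul_le_mul_of_nonneg_left hj (by linarith)
  rw [Metric.tendsto_atTop]
  intro ε hε
  obtain ⟨k, hk⟩ := exists_pow_lt_of_lt_one hε (by linarith : 1 - c < 1)
  obtain ⟨n₀, hn₀⟩ := key k f₁ f₂ h₁ h₂
  refine ⟨n₀, fun n hn => ?_⟩
  rw [Real.dist_eq, sub_zero]
  exact (hn₀ n hn).trans_lt hk

end Sys

namespace Sys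

variable (S : Sys)

/-- Half-line indicators are multiples of decreasing densities, so loss of memory makes every
integrable function decorrelate from `Uⁿ ψ`. -/
lemma decorr {ψ : ℝ → ℝ} (hψm : Measurable ψ) (hψ : ∀ x, ψ x ∈ Icc (0 : ℝ) 1)
    {φ : ℝ → ℝ} (hφ : Integrable φ mI) : Decorr mI (fun n => S.U^[n] ψ) φ := by
  refine decorr_of_integrable (fun n => (S.U_iter hψm hψ n).1) (fun n => (S.U_iter hψm hψ n).2)
    (fun a => ?_) hφ
  set f : ℝ → ℝ := (Iio a).indicator 1 with hf
  have hd : IsDec f := by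
    refine ⟨fun x _ y _ hxy => ?_, fun x _ => (ind_mem _ x).1⟩
    by_cases hy : y ∈ Iio a
    · rw [hf, indicator_of_mem hy, indicator_of_mem (show x ∈ Iio a from lt_of_le_of_lt hxy hy)]
      simp
    · rw [hf, indicator_of_notMem hy]
      exact (ind_mem _ x).1
  have hM : 0 ≤ ∫ x, f x ∂mI := integral_nonneg fun x => (ind_mem _ x).1
  rcases hM.eq_or_lt with h0 | hpos
  · have hz : f =ᵐ[mI] 0 := (integral_eq_zero_iff_of_nonneg (fun x => (ind_mem _ x).1)
      hd.integrable).1 h0.symm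
    have : ∀ n, ∫ x, f x * S.U^[n] ψ x ∂mI = 0 := by
      intro n
      refine integral_eq_zero_of_ae ?_
      filter_upwards [hz] with x hx
      simp [hx]
    simp only [Decorr, this, ← h0]
    simp
  · set M := ∫ x, f x ∂mI
    have hdens : IsDens (fun x => f x / M) := by
      refine ⟨⟨fun x hx y hy h => div_le_div_of_nonneg_right (hd.anti hx hy h) hM,
        fun x hx => div_nonneg (hd.nonneg x hx) hM⟩, ?_⟩
      rw [integral_div]
      exact div_self hpos.ne'
    have h1 := (S.memory_loss hψm hψ hdens dens_one).const_mul M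
    rw [mul_zero] at h1
    refine h1.congr fun n => ?_
    rw [mul_sub, ← integral_const_mul]
    congr 1
    · refine integral_congr_ae (Eventually.of_forall fun x => ?_)
      simp only
      field_simp
    · simp [M]

/-! ### Measures -/

/-- The action `E_T` of the random map on measures. -/
def E (μ : Measure ℝ) : Measure ℝ :=
  ET (LSVmap S.a.γ S.a.G) (LSVmap S.b.γ S.b.G) S.a.p S.b.p μ

lemma leg_lintegral (L : Leg) {μ : Measure ℝ} (hμ : μ ≪ mI) {ψ : ℝ → ℝ} (hψm : Measurable ψ) :
    ∫⁻ x, ENNReal.ofReal (ψ x)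
        ∂((μ.withDensity fun x => ENNReal.ofReal (L.p x)).map (LSVmap L.γ L.G)) =
      ∫⁻ x, ENNReal.ofReal (L.U ψ x) ∂μ := by
  have hae : ∀ᵐ x ∂μ, x ∈ Icc (0 : ℝ) 1 := hμ.ae_le (ae_restrict_mem measurableSet_Icc)
  have hT : LSVmap L.γ L.G =ᵐ[μ.withDensity fun x => ENNReal.ofReal (L.p x)] L.T := by
    refine (withDensity_absolutelyContinuous _ _).ae_le ?_
    filter_upwards [hae] with x hx
    rw [Leg.T, indicator_of_mem hx]
  rw [Measure.map_congr hT, lintegral_map hψm.ennreal_ofReal L.T_meas,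
    lintegral_withDensity_eq_lintegral_mul _ L.p_meas.ennreal_ofReal
      (show Measurable fun x => ENNReal.ofReal (ψ (L.T x)) from
        (hψm.comp L.T_meas).ennreal_ofReal)]
  refine lintegral_congr_ae ?_
  filter_upwards [hae] with x hx
  rw [Leg.U, indicator_of_mem hx, ENNReal.ofReal_mul (L.p_mem x hx).1]
  rfl

lemma lintegral_E {μ : Measure ℝ} (hμ : μ ≪ mI) {ψ : ℝ → ℝ} (hψm : Measurable ψ)
    (hψ : ∀ x, ψ x ∈ Icc (0 : ℝ) 1) :
    ∫⁻ x, ENNReal.ofReal (ψ x) ∂(S.E μ) = ∫⁻ x, ENNReal.ofReal (S.U ψ x) ∂μ := by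
  rw [E, ET, lintegral_add_measure, leg_lintegral _ hμ hψm, leg_lintegral _ hμ hψm,
    ← lintegral_add_left (S.a.U_meas hψm).ennreal_ofReal]
  refine lintegral_congr fun x => ?_
  rw [U, ENNReal.ofReal_add (leg_U_mem _ hψ x).1 (leg_U_mem _ hψ x).1]

lemma lintegral_ind (μ : Measure ℝ) {B : Set ℝ} (hB : MeasurableSet B) :
    ∫⁻ x, ENNReal.ofReal (B.indicator 1 x) ∂μ = μ B := by
  rw [← lintegral_indicator_one hB]
  refine lintegral_congr fun x => ?_
  by_cases hx : x ∈ B <;> simp [hx]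

lemma E_apply {μ : Measure ℝ} (hμ : μ ≪ mI) {B : Set ℝ} (hB : MeasurableSet B) :
    S.E μ B = ∫⁻ x, ENNReal.ofReal (S.U (B.indicator 1) x) ∂μ := by
  rw [← S.lintegral_E hμ (ind_meas hB) (ind_mem B), lintegral_ind _ hB]

lemma E_univ {μ : Measure ℝ} (hμ : μ ≪ mI) : S.E μ univ = μ univ := by
  rw [S.E_apply hμ MeasurableSet.univ, ← lintegral_one]
  refine lintegral_congr_ae ?_
  filter_upwards [hμ.ae_le (ae_restrict_mem measurableSet_Icc)] with x hx
  rw [S.U_apply hx]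
  simp [S.hsum x hx]

/-- For an invariant measure with density `φ`, the integrals `∫ φ · Uⁿ 1_B` do not depend
on `n`. -/
lemma invariant_real {ν : Measure ℝ} [IsProbabilityMeasure ν] (hν : ν ≪ mI) (hE : S.E ν = ν)
    {B : Set ℝ} (hB : MeasurableSet B) (n : ℕ) :
    ∫ x, (ν.rnDeriv mI x).toReal * S.U^[n] (B.indicator 1) x ∂mI = (ν B).toReal := by
  have h1 : ∀ n, ∫⁻ x, ENNReal.ofReal (S.U^[n] (B.indicator 1) x) ∂ν = ν B := by
    intro n
    induction n with
    | zero => exact lintegral_ind _ hB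
    | succ n ih =>
      obtain ⟨um, ub⟩ := S.U_iter (ind_meas hB) (ind_mem B) n
      rw [Function.iterate_succ_apply', ← S.lintegral_E hν um ub, hE, ih]
  obtain ⟨um, ub⟩ := S.U_iter (ind_meas hB) (ind_mem B) n
  have h2 := integral_rnDeriv_smul hν (f := S.U^[n] (B.indicator 1))
  simp only [smul_eq_mul] at h2
  rw [h2, integral_eq_lintegral_of_nonneg_ae (Eventually.of_forall fun x => (ub x).1)
    um.aestronglyMeasurable, h1]

/-- By decorrelation, the value of an invariant measure on `B` is the limit of `∫ Uⁿ 1_B dm`. -/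
lemma invariant_tendsto {ν : Measure ℝ} [IsProbabilityMeasure ν] (hν : ν ≪ mI) (hE : S.E ν = ν)
    {B : Set ℝ} (hB : MeasurableSet B) :
    Tendsto (fun n => ∫ x, S.U^[n] (B.indicator 1) x ∂mI) atTop (𝓝 (ν B).toReal) := by
  have h := S.decorr (ind_meas hB) (ind_mem B) (Measure.integrable_toReal_rnDeriv (μ := ν) (ν := mI))
  rw [Decorr, Measure.integral_toReal_rnDeriv hν] at h
  simp only [S.invariant_real hν hE hB, probReal_univ, one_mul] at h
  have := h.const_sub (ν B).toReal
  simpa using this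

lemma unique {ν₁ ν₂ : Measure ℝ} [IsProbabilityMeasure ν₁] [IsProbabilityMeasure ν₂]
    (h₁ : ν₁ ≪ mI) (h₂ : ν₂ ≪ mI) (e₁ : S.E ν₁ = ν₁) (e₂ : S.E ν₂ = ν₂) : ν₁ = ν₂ := by
  ext B hB
  have := tendsto_nhds_unique (S.invariant_tendsto h₁ e₁ hB) (S.invariant_tendsto h₂ e₂ hB)
  exact (ENNReal.toReal_eq_toReal_iff' (measure_ne_top _ _) (measure_ne_top _ _)).1 this

lemma lintegral_dens {f : ℝ → ℝ} (hf : IsDens f) {ψ : ℝ → ℝ} (hψm : Measurable ψ)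
    (hψ : ∀ x, ψ x ∈ Icc (0 : ℝ) 1) :
    ∫⁻ x, ENNReal.ofReal (ψ x) ∂(mI.withDensity fun x => ENNReal.ofReal (f x)) =
      ENNReal.ofReal (∫ x, f x * ψ x ∂mI) := by
  rw [lintegral_withDensity_eq_lintegral_mul₀
    hf.integrable.aestronglyMeasurable.aemeasurable.ennreal_ofReal
    hψm.ennreal_ofReal.aemeasurable,
    ofReal_integral_eq_lintegral_ofReal (integrable_mul_unit hf.integrable hψm hψ)]
  · refine lintegral_congr_ae ?_
    filter_upwards [ae_mem_Ico] with x hx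
    rw [ENNReal.ofReal_mul (hf.nonneg x hx)]
    rfl
  · filter_upwards [ae_mem_Ico] with x hx
    exact mul_nonneg (hf.nonneg x hx) (hψ x).1

/-- The setwise ultrafilter limit of the densities `Pⁿ 1`, which are dominated by `A x ^ (-α)`, is
invariant. -/
lemma exists_invariant : ∃ ρ : Measure ℝ, IsProbabilityMeasure ρ ∧ ρ ≪ mI ∧ S.E ρ = ρ := by
  set κ : Measure ℝ := mI.withDensity fun x => ENNReal.ofReal (S.A * x ^ (-S.a.γ)) with hκ
  have hfin : IsFiniteMeasure κ := by
    refine isFiniteMeasure_withDensity_ofReal ?_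
    refine Integrable.hasFiniteIntegral (Integrable.const_mul ?_ _)
    have := intervalIntegral.intervalIntegrable_rpow' (a := 0) (b := 1) (r := -S.a.γ)
      (by linarith [S.a.γ_lt])
    rw [intervalIntegrable_iff_integrableOn_Icc_of_le zero_le_one] at this
    exact this
  have hd : ∀ n, IsDens (S.P^[n] fun _ => 1) := S.P_iter_dens dens_one
  set μ : ℕ → Measure ℝ := fun n =>
    mI.withDensity fun x => ENNReal.ofReal (S.P^[n] (fun _ => 1) x) with hμdef
  have hμ : ∀ n, μ n ≤ κ := by
    intro n
    refine withDensity_mono ?_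
    have h0 : ∀ᵐ x ∂mI, x ≠ (0 : ℝ) := by
      refine (Measure.absolutelyContinuous_of_le Measure.restrict_le_self).ae_le ?_
      exact Measure.ae_ne volume 0
    filter_upwards [ae_mem_Ico, h0] with x hx hx0
    refine ENNReal.ofReal_le_ofReal ?_
    have hxp : 0 < x := lt_of_le_of_ne hx.1 hx0.symm
    have h1 := (mul_le_F (hd n).toIsDec hx).trans (S.F_iter_one_le n hx)
    refine le_of_mul_le_mul_right (h1.trans_eq ?_) hxp
    rw [sub_eq_neg_add, Real.rpow_add hxp, Real.rpow_one, mul_assoc]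
  obtain ⟨ρ, hρκ, hρ⟩ := exists_setwise_limit κ μ hμ (hyperfilter ℕ)
  have hρm : ρ ≪ mI :=
    (Measure.absolutelyContinuous_of_le hρκ).trans (withDensity_absolutelyContinuous _ _)
  have hμB : ∀ B, MeasurableSet B → ∀ n,
      μ n B = ENNReal.ofReal (∫ x, 1 * S.U^[n] (B.indicator 1) x ∂mI) := by
    intro B hB n
    rw [← lintegral_ind (μ n) hB, hμdef, lintegral_dens (hd n) (ind_meas hB) (ind_mem B),
      S.duality_iter dens_one (ind_meas hB) (ind_mem B)]
  have hρ1 : IsProbabilityMeasure ρ := by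
    refine ⟨tendsto_nhds_unique (hρ univ MeasurableSet.univ) ?_⟩
    have : ∀ n, μ n univ = 1 := by
      intro n
      have h := lintegral_dens (hd n) (ψ := fun _ => 1) measurable_const (by simp)
      simpa [(hd n).mass, hμdef] using h
    simp [this]
  have hle : S.E ρ ≤ ρ := by
    refine Measure.le_iff.2 fun B hB => ?_
    rw [S.E_apply hρm hB]
    refine lintegral_le_of_setwise hρ _ (fun x => ENNReal.ofReal_lt_top) ?_
    have e : ∀ n, ∫⁻ x, ENNReal.ofReal (S.U (B.indicator 1) x) ∂μ n =
        ENNReal.ofReal (∫ x, S.P (fun _ => 1) x * S.U^[n] (B.indicator 1) x ∂mI) := by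
      intro n
      rw [hμdef, lintegral_dens (hd n) (S.U_meas (ind_meas hB)) (S.U_mem (ind_mem B)),
        S.duality_iter dens_one (S.U_meas (ind_meas hB)) (S.U_mem (ind_mem B)),
        S.duality dens_one.toIsDec (S.U_iter (ind_meas hB) (ind_mem B) n).1
          (S.U_iter (ind_meas hB) (ind_mem B) n).2,
        ← Function.iterate_succ_apply, Function.iterate_succ_apply']
    simp only [e]
    have h1 : Tendsto (fun n => ∫ x, 1 * S.U^[n] (B.indicator 1) x ∂mI) (hyperfilter ℕ)
        (𝓝 (ρ B).toReal) := by
      have h := (ENNReal.tendsto_toReal (measure_ne_top ρ B)).comp (hρ B hB)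
      refine h.congr fun n => ?_
      rw [Function.comp_apply, hμB B hB n, ENNReal.toReal_ofReal]
      refine integral_nonneg fun x => ?_
      rw [one_mul]
      exact ((S.U_iter (ind_meas hB) (ind_mem B) n).2 x).1
    have h2 := (S.memory_loss (ind_meas hB) (ind_mem B) (S.P_dens dens_one) dens_one).mono_left
      Nat.hyperfilter_le_atTop
    have h3 := h2.add h1
    simp only [sub_add_cancel, zero_add] at h3
    have h4 := ENNReal.tendsto_ofReal h3
    rwa [ENNReal.ofReal_toReal (measure_ne_top _ _)] at h4
  have hE1 : IsProbabilityMeasure (S.E ρ) := ⟨by rw [S.E_univ hρm, measure_univ]⟩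
  exact ⟨ρ, hρ1, hρm, Measure.eq_of_le_of_isProbabilityMeasure hle⟩

end Sys


/-- **Existence and uniqueness of the ACIM for the random map** (Theorem 3.1(i)).
Under Assumptions (A) and (B), the random map `T = {T1, T2; p1, p2}` built from two
LSV-type intermittent maps with exponents `0 < β < α < 1` admits a unique absolutely
continuous invariant probability measure. -/
theorem random_LSV_exists_unique_acim
    (α β : ℝ) (hβ : 0 < β) (hβα : β < α) (hα : α < 1)
    (G1 G2 : LSVBranch) (p1 p2 : ℝ → ℝ) (hp : ProbPair p1 p2)
    (hA1 : AssumptionA α G1 p1) (hA2 : AssumptionA β G2 p2)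
    (hB : AssumptionB p1 p2) :
    ∃! μ : Measure ℝ, IsProbabilityMeasure μ ∧ μ ≪ mI ∧
      ET (LSVmap α G1) (LSVmap β G2) p1 p2 μ = μ := by
  obtain ⟨m1, m2, hmem, hsum⟩ := hp
  obtain ⟨v1, v2, hv1, hv2, ha1, ha2⟩ := hA1
  obtain ⟨w1, w2, hw1, hw2, hb1, hb2⟩ := hA2
  obtain ⟨δ, hδ, hδp⟩ := hB
  let S : Sys :=
    { a := ⟨α, G1, p1, v1, v2, hβ.trans hβα, hα, m1, fun x hx => (hmem x hx).1,
        hv1, hv2, ha1, ha2⟩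
      b := ⟨β, G2, p2, w1, w2, hβ, hβα.trans hα, m2, fun x hx => (hmem x hx).2,
        hw1, hw2, hb1, hb2⟩
      hγ := hβα.le
      hsum := hsum
      δ := δ
      δ_pos := hδ
      le_a := fun x hx => (hδp x hx).1 }
  obtain ⟨ρ, h1, h2, h3⟩ := S.exists_invariant
  refine ⟨ρ, ⟨h1, h2, h3⟩, ?_⟩
  rintro ν ⟨k1, k2, k3⟩
  exact S.unique k2 h2 k3 h3

end
end

section
/- Let T = {T1, T2; p1, p2} be a random map on [0,1] built from two LSV-type intermittent maps with exponents 0 < β < α < 1, satisfying Assumptions (A) and (B). Then the density ρ of the unique absolutely continuous invariant probability measure of T is uniformly bounded below: there exists γ > 0 such that ρ(x) ≥ γ for m-almost every x ∈ [0,1]. -/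
/-!
Let `P` be the transfer operator of the random map, a sum over its four inverse branches. An invariant
density `ρ` satisfies `P ρ = ρ`. Two properties of `P` carry the proof.

* `P` preserves decreasing functions on `(0,1)`; this is Assumption (A) (`anti_one`).
* If an invariant function has a positive lower bound on some interval, then it has one on `(0,1)`.
  Indeed a lower bound on an interval inside the domain of a branch of `T1` is passed on to the image
  of the interval (`Br.push`), because the probabilities are bounded below and the derivatives bounded
  above. The first branch moves intervals to the right without shrinking them and the second one
  expands, so that some image contains `1/2` in its interior; its image then contains a neighbourhood
  of `0`, which grows to `(0,1)` (`grow`).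

Decreasing invariant functions with the same finite integral agree (`IsTransfer.unique_anti`): the
positive part of the difference of two invariant functions is invariant, since `P` is positive and
preserves integrals. If it is nonzero, then by monotonicity of the two functions it is bounded below
on an interval, hence on `(0,1)`, which contradicts the equality of the integrals.

An arbitrary invariant density `ρ` is an `L¹` limit of differences of decreasing invariant functions.
It is approximated by a difference `f₁ - f₂` of decreasing functions (`exists_anti_approx`); the Abel
means `(1 - s) ∑ sⁿ Pⁿ` fix `ρ` and keep `f₁`, `f₂` decreasing, and as `s → 1` they converge along a
subsequence by Helly's theorem, with limits that are invariant by Fatou's lemma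
(`IsTransfer.approx_inv`). Hence `ρ` agrees almost everywhere with the unique decreasing invariant
density. The latter is bounded below on an interval, so `ρ` is bounded below on `(0,1)`
(`IsTransfer.bounded_below`).
-/

open MeasureTheory Set

noncomputable section Proof

open Filter Topology
open scoped ENNReal

/-! ### The transfer operator -/

/-- Lebesgue measure on the open unit interval. -/
def m0 : Measure ℝ := volume.restrict (Ioo 0 1)

/-- The transfer operator `(P f)(x) = ∑ i, c i x * f (V i x)` of a system of inverse branches
`V i` with weights `c i`, acting pointwise on nonnegative functions. -/
def Pop {ι : Type*} [Fintype ι] (c : ι → ℝ → ℝ≥0∞) (V : ι → ℝ → ℝ) (f : ℝ → ℝ≥0∞) : ℝ → ℝ≥0∞ :=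
  fun x => ∑ i, c i x * f (V i x)

/-- The transfer operator preserves measurability and integrals. -/
structure PreTransfer {ι : Type*} [Fintype ι] (c : ι → ℝ → ℝ≥0∞) (V : ι → ℝ → ℝ) : Prop where
  c_meas : ∀ i, Measurable (c i)
  V_meas : ∀ i, Measurable (V i)
  lint : ∀ f, Measurable f → ∫⁻ x, Pop c V f x ∂m0 = ∫⁻ x, f x ∂m0

/-- The properties of the transfer operator which the uniqueness argument uses: it preserves
integrals and decreasing functions on `(0,1)`, and an invariant function which is bounded below
on some interval is bounded below on all of `(0,1)`. -/
structure IsTransfer {ι : Type*} [Fintype ι] (c : ι → ℝ → ℝ≥0∞) (V : ι → ℝ → ℝ) : Prop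
    extends PreTransfer c V where
  anti : ∀ f, AntitoneOn f (Ioo 0 1) → AntitoneOn (Pop c V f) (Ioo 0 1)
  spread : ∀ u, Measurable u → Pop c V u =ᵐ[m0] u → ∀ (a b : ℝ) (k : ℝ≥0∞), 0 ≤ a → a < b →
    b ≤ 1 → k ≠ 0 → (∀ᵐ x ∂m0, x ∈ Ioo a b → k ≤ u x) → ∃ k' : ℝ≥0∞, k' ≠ 0 ∧ ∀ᵐ x ∂m0, k' ≤ u x

section Abstract

variable {ι : Type*} [Fintype ι] {c : ι → ℝ → ℝ≥0∞} {V : ι → ℝ → ℝ}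

lemma Pop_add (f g : ℝ → ℝ≥0∞) :
    Pop c V (fun x => f x + g x) = fun x => Pop c V f x + Pop c V g x := by
  funext x; simp [Pop, mul_add, Finset.sum_add_distrib]

lemma Pop_smul (a : ℝ≥0∞) (f : ℝ → ℝ≥0∞) :
    Pop c V (fun x => a * f x) = fun x => a * Pop c V f x := by
  funext x; simp only [Pop, Finset.mul_sum]
  exact Finset.sum_congr rfl fun i _ => by ring

lemma Pop_mono {f g : ℝ → ℝ≥0∞} (h : ∀ x, f x ≤ g x) (x : ℝ) : Pop c V f x ≤ Pop c V g x := by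
  unfold Pop; gcongr; exact h _

lemma Pop_tsum (f : ℕ → ℝ → ℝ≥0∞) :
    Pop c V (fun x => ∑' n, f n x) = fun x => ∑' n, Pop c V (f n) x := by
  funext x
  simp only [Pop, ← ENNReal.tsum_mul_left]
  rw [Summable.tsum_finsetSum (fun _ _ => ENNReal.summable)]

lemma Pop_liminf (f : ℕ → ℝ → ℝ≥0∞) (x : ℝ) :
    Pop c V (fun x => liminf (fun n => f n x) atTop) x ≤ liminf (fun n => Pop c V (f n) x) atTop := by
  let : MeasurableSpace ι := ⊤
  have h := lintegral_liminf_le (μ := (Measure.count : Measure ι)) (u := atTop)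
    (f := fun n i => c i x * f n (V i x)) (fun n => measurable_from_top)
  simp only [lintegral_fintype, Measure.count_singleton, mul_one] at h
  refine le_trans ?_ h
  unfold Pop
  gcongr with i
  have := ENNReal.le_liminf_mul (u := fun _ : ℕ => c i x) (v := fun n => f n (V i x)) (f := atTop)
  rwa [liminf_const] at this

lemma Pop_inv_smul {f : ℝ → ℝ≥0∞} (a : ℝ≥0∞) (h1 : Pop c V f =ᵐ[m0] f) :
    Pop c V (fun x => a * f x) =ᵐ[m0] fun x => a * f x := by
  rw [Pop_smul]
  filter_upwards [h1] with x hx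
  rw [hx]

namespace PreTransfer

variable (H : PreTransfer c V)
include H

lemma meas {f : ℝ → ℝ≥0∞} (hf : Measurable f) : Measurable (Pop c V f) := by
  unfold Pop
  exact Finset.measurable_sum _ fun i _ => (H.c_meas i).mul (hf.comp (H.V_meas i))

lemma ae_mono {f g : ℝ → ℝ≥0∞} (hfg : f ≤ᵐ[m0] g) :
    Pop c V f ≤ᵐ[m0] Pop c V g := by
  -- off a null set `N` the inequality holds; the function equal to `∞` on `N` and to `0` elsewhere has
  -- integral zero
  obtain ⟨N, hN, hNm, hN0⟩ := exists_measurable_superset_of_null (ae_iff.1 hfg)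
  set e : ℝ → ℝ≥0∞ := N.indicator (fun _ => ∞) with he
  have hem : Measurable e := measurable_const.indicator hNm
  have h1 : ∀ x, f x ≤ g x + e x := by
    intro x
    by_cases hx : x ∈ N
    · simp [he, hx]
    · have : f x ≤ g x := by
        by_contra h
        exact hx (hN h)
      exact this.trans le_self_add
  have h2 : ∫⁻ x, Pop c V e x ∂m0 = 0 := by
    rw [H.lint e hem, he, lintegral_indicator hNm]
    simp [hN0]
  rw [lintegral_eq_zero_iff (H.meas hem)] at h2
  filter_upwards [h2] with x hx
  have := Pop_mono (c := c) (V := V) h1 x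
  rw [Pop_add] at this
  simpa [hx] using this

lemma ae_congr {f g : ℝ → ℝ≥0∞} (hfg : f =ᵐ[m0] g) :
    Pop c V f =ᵐ[m0] Pop c V g :=
  (H.ae_mono hfg.le).antisymm (H.ae_mono hfg.symm.le)

end PreTransfer

namespace IsTransfer

variable (H : IsTransfer c V)
include H

lemma inv_of_le {f : ℝ → ℝ≥0∞} (hf : Measurable f) (hfi : ∫⁻ x, f x ∂m0 ≠ ∞)
    (h : f ≤ᵐ[m0] Pop c V f) : Pop c V f =ᵐ[m0] f :=
  (ae_eq_of_ae_le_of_lintegral_le h hfi (H.toPreTransfer.meas hf).aemeasurable (H.lint f hf).le).symm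

lemma inv_of_ge {f : ℝ → ℝ≥0∞} (hf : Measurable f) (hfi : ∫⁻ x, f x ∂m0 ≠ ∞)
    (h : Pop c V f ≤ᵐ[m0] f) : Pop c V f =ᵐ[m0] f :=
  ae_eq_of_ae_le_of_lintegral_le h (by rwa [H.lint f hf]) hf.aemeasurable (H.lint f hf).ge

/-- The positive part of a difference of invariant functions is invariant. -/
lemma inv_sub {f g : ℝ → ℝ≥0∞} (hf : Measurable f) (hg : Measurable g)
    (hfi : ∫⁻ x, f x ∂m0 ≠ ∞) (h1 : Pop c V f =ᵐ[m0] f) (h2 : Pop c V g =ᵐ[m0] g) :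
    Pop c V (fun x => f x - g x) =ᵐ[m0] fun x => f x - g x := by
  refine H.inv_of_le (hf.sub hg)
    (ne_top_of_le_ne_top hfi (lintegral_mono fun x => tsub_le_self)) ?_
  filter_upwards [h1, h2] with x hx1 hx2
  have := Pop_mono (c := c) (V := V) (f := f) (g := fun x => (f x - g x) + g x)
    (fun x => le_tsub_add) x
  rw [Pop_add, hx1] at this
  simp only [hx2] at this
  exact tsub_le_iff_right.2 this

end IsTransfer

/-! ### Uniqueness of decreasing invariant functions -/

/-- Where a decreasing function exceeds another one on a set of positive measure, it does so by a
fixed amount on an interval: take a point of this set at which the smaller one is continuous. -/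
lemma exists_interval {f g : ℝ → ℝ≥0∞} (hf : AntitoneOn f (Ioo 0 1)) (hg : AntitoneOn g (Ioo 0 1))
    (h : ¬ f ≤ᵐ[m0] g) : ∃ (a b : ℝ) (k : ℝ≥0∞), 0 ≤ a ∧ a < b ∧ b ≤ 1 ∧ k ≠ 0 ∧
      ∀ x ∈ Ioo a b, k ≤ f x - g x := by
  have hc := hg.countable_not_continuousWithinAt
  have : ∃ x ∈ Ioo (0 : ℝ) 1, g x < f x ∧ ContinuousWithinAt g (Ioo 0 1) x := by
    by_contra hcon
    push Not at hcon
    apply h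
    unfold m0
    rw [Filter.EventuallyLE, ae_restrict_iff' measurableSet_Ioo]
    have hz : volume {x | x ∈ Ioo (0 : ℝ) 1 ∧ ¬ ContinuousWithinAt g (Ioo 0 1) x} = 0 :=
      hc.measure_zero _
    filter_upwards [compl_mem_ae_iff.2 hz] with x hx hx01
    by_contra hlt
    exact hx ⟨hx01, hcon x hx01 (not_le.1 hlt)⟩
  obtain ⟨x, hx, hlt, hcx⟩ := this
  obtain ⟨r, hr1, hr2⟩ := exists_between hlt
  have hev := hcx.eventually (gt_mem_nhds hr1)
  rw [nhdsWithin_eq_nhds.2 (Ioo_mem_nhds hx.1 hx.2)] at hev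
  obtain ⟨a, ha, hax⟩ := exists_Ioc_subset_of_mem_nhds hev ⟨0, hx.1⟩
  refine ⟨max a 0, x, f x - r, le_max_right _ _, max_lt ha hx.1, hx.2.le, ?_, ?_⟩
  · exact (tsub_pos_iff_lt.2 hr2).ne'
  · intro y hy
    have hy0 : y ∈ Ioo (0 : ℝ) 1 := ⟨(le_max_right _ _).trans_lt hy.1, hy.2.trans hx.2⟩
    have h1 : g y < r := hax ⟨(le_max_left _ _).trans_lt hy.1, hy.2.le⟩
    exact tsub_le_tsub (hf hy0 hx hy.2.le) h1.le

lemma m0_univ : m0 univ = 1 := by simp [m0]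

/-- A function which exceeds another one by a positive constant has a larger integral. -/
lemma not_lintegral_eq {f g : ℝ → ℝ≥0∞} {k : ℝ≥0∞} (hk : k ≠ 0)
    (hg : ∫⁻ x, g x ∂m0 ≠ ∞) (hm : Measurable g) (hle : ∫⁻ x, f x ∂m0 ≤ ∫⁻ x, g x ∂m0)
    (h : ∀ᵐ x ∂m0, k ≤ f x - g x) : False := by
  have h1 : ∀ᵐ x ∂m0, g x + k ≤ f x := by
    filter_upwards [h] with x hx
    have : g x < f x := by
      by_contra hcon
      rw [tsub_eq_zero_of_le (not_lt.1 hcon)] at hx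
      exact hk (le_zero_iff.1 hx)
    calc g x + k ≤ g x + (f x - g x) := by gcongr
      _ = f x := add_tsub_cancel_of_le this.le
  have h2 := lintegral_mono_ae h1
  rw [lintegral_add_left hm, lintegral_const, m0_univ, mul_one] at h2
  exact absurd (h2.trans hle) (not_le.2 (ENNReal.lt_add_right hg hk))

namespace IsTransfer
variable (H : IsTransfer c V)
include H

/-- Decreasing invariant functions are determined by their integral. -/
lemma unique_anti {f g : ℝ → ℝ≥0∞} (hf : Measurable f) (hg : Measurable g)
    (hfa : AntitoneOn f (Ioo 0 1)) (hga : AntitoneOn g (Ioo 0 1))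
    (h1 : Pop c V f =ᵐ[m0] f) (h2 : Pop c V g =ᵐ[m0] g)
    (hfi : ∫⁻ x, f x ∂m0 ≠ ∞) (hfg : ∫⁻ x, f x ∂m0 = ∫⁻ x, g x ∂m0) : f =ᵐ[m0] g := by
  have hle : f ≤ᵐ[m0] g := by
    by_contra hcon
    obtain ⟨a, b, k, ha, hab, hb, hk, hkx⟩ := exists_interval hfa hga hcon
    obtain ⟨k', hk', h⟩ := H.spread _ (hf.sub hg) (H.inv_sub hf hg hfi h1 h2) a b k ha hab hb hk
      (ae_of_all _ hkx)
    exact not_lintegral_eq hk' (hfg ▸ hfi) hg hfg.le h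
  exact ae_eq_of_ae_le_of_lintegral_le hle hfi hg.aemeasurable hfg.ge

end IsTransfer

/-! ### Abel means -/

/-- The Abel means `(1 - s) ∑ sⁿ Pⁿ f` of the iterates of the transfer operator. -/
def Res (c : ι → ℝ → ℝ≥0∞) (V : ι → ℝ → ℝ) (s : ℝ≥0∞) (f : ℝ → ℝ≥0∞) : ℝ → ℝ≥0∞ :=
  fun x => ∑' n, ((1 - s) * s ^ n) * ((Pop c V)^[n] f) x

lemma geom {s : ℝ≥0∞} (hs : s < 1) : ∑' n, ((1 - s) * s ^ n) = 1 := by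
  rw [ENNReal.tsum_mul_left, ENNReal.tsum_geometric]
  exact ENNReal.mul_inv_cancel (tsub_pos_iff_lt.2 hs).ne'
    (ne_top_of_le_ne_top ENNReal.one_ne_top tsub_le_self)

lemma iter_add (f g : ℝ → ℝ≥0∞) (n : ℕ) : (Pop c V)^[n] (fun x => f x + g x)
    = fun x => (Pop c V)^[n] f x + (Pop c V)^[n] g x := by
  induction n with
  | zero => rfl
  | succ n ih => simp only [Function.iterate_succ_apply', ih, Pop_add]

lemma iter_mono {f g : ℝ → ℝ≥0∞} (h : ∀ x, f x ≤ g x) (n : ℕ) :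
    ∀ x, (Pop c V)^[n] f x ≤ (Pop c V)^[n] g x := by
  induction n with
  | zero => exact h
  | succ n ih => simp only [Function.iterate_succ_apply']; exact Pop_mono ih

lemma Res_add (s : ℝ≥0∞) (f g : ℝ → ℝ≥0∞) (x : ℝ) :
    Res c V s (fun x => f x + g x) x = Res c V s f x + Res c V s g x := by
  simp only [Res, iter_add, mul_add, ENNReal.tsum_add]

lemma Res_mono (s : ℝ≥0∞) {f g : ℝ → ℝ≥0∞} (h : ∀ x, f x ≤ g x) (x : ℝ) :
    Res c V s f x ≤ Res c V s g x := by
  unfold Res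
  exact ENNReal.tsum_le_tsum fun n => by gcongr; exact iter_mono h n x

lemma Res_sub (s : ℝ≥0∞) (f : ℝ → ℝ≥0∞) (x : ℝ) :
    s * Pop c V (Res c V s f) x ≤ Res c V s f x := by
  unfold Res
  rw [Pop_tsum]
  simp only [Pop_smul, ← ENNReal.tsum_mul_left, ← Function.iterate_succ_apply']
  calc _ = ∑' n, ((1 - s) * s ^ (n + 1)) * ((Pop c V)^[n + 1] f) x := by
        congr 1; funext n; ring
    _ ≤ _ := ENNReal.tsum_comp_le_tsum_of_injective (add_left_injective 1)
        (fun n => ((1 - s) * s ^ n) * ((Pop c V)^[n] f) x)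

namespace IsTransfer
variable (H : IsTransfer c V)
include H

lemma iter_meas {f : ℝ → ℝ≥0∞} (hf : Measurable f) (n : ℕ) : Measurable ((Pop c V)^[n] f) := by
  induction n with
  | zero => exact hf
  | succ n ih => rw [Function.iterate_succ_apply']; exact H.toPreTransfer.meas ih

lemma iter_lint {f : ℝ → ℝ≥0∞} (hf : Measurable f) (n : ℕ) :
    ∫⁻ x, (Pop c V)^[n] f x ∂m0 = ∫⁻ x, f x ∂m0 := by
  induction n with
  | zero => rfl
  | succ n ih => rw [Function.iterate_succ_apply', H.lint _ (H.iter_meas hf n), ih]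

lemma iter_anti {f : ℝ → ℝ≥0∞} (hf : AntitoneOn f (Ioo 0 1)) (n : ℕ) :
    AntitoneOn ((Pop c V)^[n] f) (Ioo 0 1) := by
  induction n with
  | zero => exact hf
  | succ n ih => rw [Function.iterate_succ_apply']; exact H.anti _ ih

lemma iter_inv {f : ℝ → ℝ≥0∞} (hf : Pop c V f =ᵐ[m0] f) (n : ℕ) :
    (Pop c V)^[n] f =ᵐ[m0] f := by
  induction n with
  | zero => rfl
  | succ n ih => rw [Function.iterate_succ_apply']; exact (H.toPreTransfer.ae_congr ih).trans hf

lemma Res_meas (s : ℝ≥0∞) {f : ℝ → ℝ≥0∞} (hf : Measurable f) : Measurable (Res c V s f) :=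
  Measurable.tsum fun n => (H.iter_meas hf n).const_mul _

lemma Res_lint {s : ℝ≥0∞} (hs : s < 1) {f : ℝ → ℝ≥0∞} (hf : Measurable f) :
    ∫⁻ x, Res c V s f x ∂m0 = ∫⁻ x, f x ∂m0 := by
  unfold Res
  rw [lintegral_tsum fun n => ((H.iter_meas hf n).const_mul _).aemeasurable]
  simp only [lintegral_const_mul _ (H.iter_meas hf _), H.iter_lint hf]
  rw [ENNReal.tsum_mul_right, geom hs, one_mul]

lemma Res_anti (s : ℝ≥0∞) {f : ℝ → ℝ≥0∞} (hf : AntitoneOn f (Ioo 0 1)) :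
    AntitoneOn (Res c V s f) (Ioo 0 1) := fun x hx y hy hxy =>
  ENNReal.tsum_le_tsum fun n => by gcongr; exact H.iter_anti hf n hx hy hxy

lemma Res_inv {s : ℝ≥0∞} (hs : s < 1) {f : ℝ → ℝ≥0∞} (hf : Pop c V f =ᵐ[m0] f) :
    Res c V s f =ᵐ[m0] f := by
  have : ∀ᵐ x ∂m0, ∀ n, (Pop c V)^[n] f x = f x := ae_all_iff.2 fun n => H.iter_inv hf n
  filter_upwards [this] with x hx
  simp only [Res, hx]
  rw [ENNReal.tsum_mul_right, geom hs, one_mul]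

end IsTransfer

/-! ### Approximation by decreasing invariant functions -/

/-- Helly's selection principle: a sequence of decreasing functions which converges at the rational
points converges at the continuity points of its lower limit, hence almost everywhere. -/
lemma helly {f : ℕ → ℝ → ℝ≥0∞} (hf : ∀ n, AntitoneOn (f n) (Ioo 0 1))
    (hq : ∀ q : ℚ, ∃ l, Tendsto (fun n => f n q) atTop (𝓝 l)) :
    ∀ᵐ x ∂m0, Tendsto (fun n => f n x) atTop (𝓝 (liminf (fun n => f n x) atTop)) := by
  set l : ℝ → ℝ≥0∞ := fun x => liminf (fun n => f n x) atTop with hl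
  have hla : AntitoneOn l (Ioo 0 1) := fun x hx y hy hxy =>
    liminf_le_liminf (Eventually.of_forall fun n => hf n hx hy hxy)
  have hz : volume {x | x ∈ Ioo (0 : ℝ) 1 ∧ ¬ ContinuousWithinAt l (Ioo 0 1) x} = 0 :=
    hla.countable_not_continuousWithinAt.measure_zero _
  unfold m0
  rw [ae_restrict_iff' measurableSet_Ioo]
  filter_upwards [compl_mem_ae_iff.2 hz] with x hx hx01
  have hcx : ContinuousWithinAt l (Ioo 0 1) x := by
    by_contra h
    exact hx ⟨hx01, h⟩
  refine tendsto_of_le_liminf_of_limsup_le le_rfl ?_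
  refine le_of_forall_gt fun r hr => ?_
  have hev := hcx.eventually (gt_mem_nhds hr)
  rw [nhdsWithin_eq_nhds.2 (Ioo_mem_nhds hx01.1 hx01.2)] at hev
  obtain ⟨a, ha, hax⟩ := exists_Ioc_subset_of_mem_nhds hev ⟨0, hx01.1⟩
  obtain ⟨q, hq1, hq2⟩ := exists_rat_btwn (max_lt ha hx01.1)
  have hq01 : (q : ℝ) ∈ Ioo (0 : ℝ) 1 := ⟨(le_max_right _ _).trans_lt hq1, hq2.trans hx01.2⟩
  obtain ⟨L, hL⟩ := hq q
  calc limsup (fun n => f n x) atTop ≤ limsup (fun n => f n q) atTop :=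
        limsup_le_limsup (Eventually.of_forall fun n => hf n hq01 hx01 hq2.le)
    _ = l q := by rw [hL.limsup_eq, hl]; exact hL.liminf_eq.symm
    _ < r := hax ⟨(le_max_left _ _).trans_lt hq1, hq2.le⟩

namespace IsTransfer
variable (H : IsTransfer c V)
include H

/-- If an invariant `ρ` is close in `L¹` to a difference of decreasing functions, then it is as close
to a difference of decreasing invariant functions, obtained as limits of Abel means. -/
lemma approx_inv {ρ f₁ f₂ : ℝ → ℝ≥0∞} (hρ : Measurable ρ) (hρi : Pop c V ρ =ᵐ[m0] ρ)
    (hρf : ∫⁻ x, ρ x ∂m0 ≠ ∞)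
    (h1 : Measurable f₁) (h2 : Measurable f₂)
    (h1a : AntitoneOn f₁ (Ioo 0 1)) (h2a : AntitoneOn f₂ (Ioo 0 1))
    (h1f : ∫⁻ x, f₁ x ∂m0 ≠ ∞) (h2f : ∫⁻ x, f₂ x ∂m0 ≠ ∞) :
    ∃ g₁ g₂ : ℝ → ℝ≥0∞, (Measurable g₁ ∧ AntitoneOn g₁ (Ioo 0 1) ∧ Pop c V g₁ =ᵐ[m0] g₁ ∧
        ∫⁻ x, g₁ x ∂m0 ≠ ∞) ∧
      (Measurable g₂ ∧ AntitoneOn g₂ (Ioo 0 1) ∧ Pop c V g₂ =ᵐ[m0] g₂ ∧ ∫⁻ x, g₂ x ∂m0 ≠ ∞) ∧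
      ∫⁻ x, (ρ x + g₂ x - g₁ x) ∂m0 ≤ ∫⁻ x, (ρ x + f₂ x - f₁ x) ∂m0 ∧
      ∫⁻ x, (g₁ x - (ρ x + g₂ x)) ∂m0 ≤ ∫⁻ x, (f₁ x - (ρ x + f₂ x)) ∂m0 := by
  set s : ℕ → ℝ≥0∞ := fun n => 1 - (n + 2 : ℝ≥0∞)⁻¹ with hs
  have hs1 : ∀ n, s n < 1 := fun n =>
    ENNReal.sub_lt_self ENNReal.one_ne_top one_ne_zero (by simp)
  have hslim : Tendsto s atTop (𝓝 1) := by
    have h0 : Tendsto (fun n : ℕ => ((n : ℝ≥0∞) + 2)⁻¹) atTop (𝓝 0) := by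
      have := (tendsto_add_atTop_iff_nat 2).2 ENNReal.tendsto_inv_nat_nhds_zero
      simpa using this
    have := ENNReal.Tendsto.sub (tendsto_const_nhds (x := (1 : ℝ≥0∞)) (f := (atTop : Filter ℕ))) h0
      (Or.inl ENNReal.one_ne_top)
    simpa [hs] using this
  obtain ⟨lim, φ, hφ, hlim⟩ := CompactSpace.tendsto_subseq
    (fun n => fun q : ℚ => (Res c V (s n) f₁ q, Res c V (s n) f₂ q))
  have hφt := hφ.tendsto_atTop
  have key : ∀ f, Measurable f → AntitoneOn f (Ioo 0 1) → ∫⁻ x, f x ∂m0 ≠ ∞ →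
      Measurable (fun x => liminf (fun n => Res c V (s (φ n)) f x) atTop) ∧
      AntitoneOn (fun x => liminf (fun n => Res c V (s (φ n)) f x) atTop) (Ioo 0 1) ∧
      Pop c V (fun x => liminf (fun n => Res c V (s (φ n)) f x) atTop) =ᵐ[m0]
        (fun x => liminf (fun n => Res c V (s (φ n)) f x) atTop) ∧
      ∫⁻ x, liminf (fun n => Res c V (s (φ n)) f x) atTop ∂m0 ≠ ∞ := by
    intro f hf hfa hff
    have hm : Measurable (fun x => liminf (fun n => Res c V (s (φ n)) f x) atTop) :=
      Measurable.liminf fun n => H.Res_meas _ hf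
    have hfin : ∫⁻ x, liminf (fun n => Res c V (s (φ n)) f x) atTop ∂m0 ≠ ∞ := by
      refine ne_top_of_le_ne_top hff ((lintegral_liminf_le fun n => H.Res_meas _ hf).trans ?_)
      simp [H.Res_lint (hs1 _) hf]
    refine ⟨hm, fun x hx y hy hxy => liminf_le_liminf
      (Eventually.of_forall fun n => H.Res_anti _ hfa hx hy hxy), ?_, hfin⟩
    refine H.inv_of_ge hm hfin (ae_of_all _ fun x => ?_)
    refine ENNReal.le_of_forall_lt_one_mul_le fun t ht => ?_
    calc _ ≤ t * liminf (fun n => Pop c V (Res c V (s (φ n)) f) x) atTop := by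
          gcongr; exact Pop_liminf _ x
      _ ≤ liminf (fun n => t * Pop c V (Res c V (s (φ n)) f) x) atTop := by
          have := ENNReal.le_liminf_mul (u := fun _ : ℕ => t)
            (v := fun n => Pop c V (Res c V (s (φ n)) f) x) (f := atTop)
          rwa [liminf_const] at this
      _ ≤ _ := by
          refine liminf_le_liminf ?_
          filter_upwards [(hslim.comp hφt).eventually (lt_mem_nhds ht)] with n hn
          refine le_trans ?_ (Res_sub _ f x)
          gcongr
          exact hn.le
  have conv1 := helly (f := fun n => Res c V (s (φ n)) f₁) (fun n => H.Res_anti _ h1a) fun q =>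
    ⟨(lim q).1, (continuous_fst.tendsto _).comp ((tendsto_pi_nhds.1 hlim) q)⟩
  have conv2 := helly (f := fun n => Res c V (s (φ n)) f₂) (fun n => H.Res_anti _ h2a) fun q =>
    ⟨(lim q).2, (continuous_snd.tendsto _).comp ((tendsto_pi_nhds.1 hlim) q)⟩
  have k1 := key f₁ h1 h1a h1f
  have k2 := key f₂ h2 h2a h2f
  have fin1 := ae_lt_top k1.1 k1.2.2.2
  have fin2 := ae_lt_top k2.1 k2.2.2.2
  have fin3 := ae_lt_top hρ hρf
  refine ⟨_, _, k1, k2, ?_, ?_⟩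
  · calc _ ≤ ∫⁻ x, liminf (fun n => ρ x + Res c V (s (φ n)) f₂ x - Res c V (s (φ n)) f₁ x) atTop
          ∂m0 := by
          refine lintegral_mono_ae ?_
          filter_upwards [conv1, conv2, fin1] with x c1 c2 f1
          exact (ENNReal.Tendsto.sub (tendsto_const_nhds.add c2) c1 (Or.inr f1.ne)).liminf_eq.ge
      _ ≤ _ := lintegral_liminf_le fun n =>
          (hρ.add (H.Res_meas _ h2)).sub (H.Res_meas _ h1)
      _ ≤ liminf (fun n : ℕ => ∫⁻ x, (ρ x + f₂ x - f₁ x) ∂m0) atTop := by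
          refine liminf_le_liminf (Eventually.of_forall fun n => ?_)
          have hm : Measurable fun x => ρ x + f₂ x - f₁ x := (hρ.add h2).sub h1
          rw [← H.Res_lint (hs1 (φ n)) hm]
          refine lintegral_mono_ae ?_
          filter_upwards [H.Res_inv (hs1 (φ n)) hρi] with x hx
          have := Res_mono (c := c) (V := V) (s (φ n)) (f := fun x => ρ x + f₂ x)
            (g := fun x => (ρ x + f₂ x - f₁ x) + f₁ x) (fun x => le_tsub_add) x
          rw [Res_add, Res_add, hx] at this
          exact tsub_le_iff_right.2 this
      _ = _ := liminf_const _
  · calc _ ≤ ∫⁻ x, liminf (fun n => Res c V (s (φ n)) f₁ x - (ρ x + Res c V (s (φ n)) f₂ x)) atTop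
          ∂m0 := by
          refine lintegral_mono_ae ?_
          filter_upwards [conv1, conv2, fin1] with x c1 c2 f1
          exact (ENNReal.Tendsto.sub c1 (tendsto_const_nhds.add c2) (Or.inl f1.ne)).liminf_eq.ge
      _ ≤ _ := lintegral_liminf_le fun n =>
          (H.Res_meas _ h1).sub (hρ.add (H.Res_meas _ h2))
      _ ≤ liminf (fun n : ℕ => ∫⁻ x, (f₁ x - (ρ x + f₂ x)) ∂m0) atTop := by
          refine liminf_le_liminf (Eventually.of_forall fun n => ?_)
          have hm : Measurable fun x => f₁ x - (ρ x + f₂ x) := h1.sub (hρ.add h2)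
          rw [← H.Res_lint (hs1 (φ n)) hm]
          refine lintegral_mono_ae ?_
          filter_upwards [H.Res_inv (hs1 (φ n)) hρi] with x hx
          have := Res_mono (c := c) (V := V) (s (φ n)) (f := f₁)
            (g := fun x => (f₁ x - (ρ x + f₂ x)) + (ρ x + f₂ x)) (fun x => le_tsub_add) x
          rw [Res_add, Res_add, hx] at this
          exact tsub_le_iff_right.2 this
      _ = _ := liminf_const _

end IsTransfer

/-- Differences of bounded decreasing functions are dense in `L¹`: a polynomial `p` is
`(p - M x + C) - (C - M x)` with `M` a bound for the derivative of `p`. -/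
lemma exists_anti_approx {ρ : ℝ → ℝ≥0∞} (hρ : Measurable ρ) (hρf : ∫⁻ x, ρ x ∂m0 ≠ ∞)
    {ε : ℝ≥0∞} (hε : ε ≠ 0) : ∃ f₁ f₂ : ℝ → ℝ≥0∞, Measurable f₁ ∧ Measurable f₂ ∧
      AntitoneOn f₁ (Ioo 0 1) ∧ AntitoneOn f₂ (Ioo 0 1) ∧ ∫⁻ x, f₁ x ∂m0 ≠ ∞ ∧
      ∫⁻ x, f₂ x ∂m0 ≠ ∞ ∧ ∫⁻ x, (ρ x + f₂ x - f₁ x) ∂m0 ≤ ε ∧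
      ∫⁻ x, (f₁ x - (ρ x + f₂ x)) ∂m0 ≤ ε := by
  have : IsFiniteMeasure m0 := ⟨by rw [m0_univ]; exact ENNReal.one_lt_top⟩
  set r : ℝ → ℝ := fun x => (ρ x).toReal with hr
  have hri : Integrable r m0 := integrable_toReal_of_lintegral_ne_top hρ.aemeasurable hρf
  have hε2 : ε / 2 ≠ 0 := (ENNReal.half_pos hε).ne'
  have : m0.Regular := by unfold m0; infer_instance
  obtain ⟨g, -, hg, hgc, -⟩ := hri.exists_hasCompactSupport_lintegral_sub_le hε2
  obtain ⟨e, he0, he⟩ : ∃ e : ℝ, 0 < e ∧ ENNReal.ofReal e ≤ ε / 2 := by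
    obtain ⟨e, he0, he⟩ := ENNReal.lt_iff_exists_nnreal_btwn.1 (ENNReal.half_pos hε)
    exact ⟨e, by exact_mod_cast he0, by simpa using he.le⟩
  obtain ⟨p, hp⟩ := exists_polynomial_near_of_continuousOn 0 1 g hgc.continuousOn e he0
  obtain ⟨M, hM⟩ := isCompact_Icc.exists_bound_of_continuousOn
    (p.derivative.continuous.continuousOn (s := Icc (0 : ℝ) 1))
  obtain ⟨K, hK⟩ := isCompact_Icc.exists_bound_of_continuousOn
    (p.continuous.continuousOn (s := Icc (0 : ℝ) 1))
  have hM0 : 0 ≤ M := (norm_nonneg _).trans (hM 0 (by simp))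
  have hK0 : 0 ≤ K := (norm_nonneg _).trans (hK 0 (by simp))
  set a₁ : ℝ → ℝ := fun x => p.eval x - M * x + (M + K) with ha₁
  set a₂ : ℝ → ℝ := fun x => (M + K) - M * x with ha₂
  have hpos : ∀ x ∈ Ioo (0 : ℝ) 1, 0 ≤ a₁ x ∧ 0 ≤ a₂ x ∧ a₁ x ≤ M + K + K ∧ a₂ x ≤ M + K := by
    intro x hx
    have h1 := abs_le.1 (hK x (Ioo_subset_Icc_self hx))
    have h2 : M * x ≤ M := by nlinarith [hx.2]
    have h3 : 0 ≤ M * x := mul_nonneg hM0 hx.1.le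
    simp only [ha₁, ha₂]
    refine ⟨?_, ?_, ?_, ?_⟩ <;> linarith [h1.1, h1.2]
  have hanti₁ : AntitoneOn a₁ (Ioo 0 1) := by
    have hd : ∀ x, HasDerivAt a₁ (p.derivative.eval x - M) x := by
      intro x
      have := ((p.hasDerivAt x).sub ((hasDerivAt_id x).const_mul M)).add_const (M + K)
      simpa [ha₁] using this
    refine antitoneOn_of_deriv_nonpos (convex_Ioo 0 1)
      (fun x _ => (hd x).continuousAt.continuousWithinAt)
      (fun x _ => (hd x).differentiableAt.differentiableWithinAt) fun x hx => ?_
    rw [interior_Ioo] at hx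
    rw [(hd x).deriv]
    linarith [(abs_le.1 (hM x (Ioo_subset_Icc_self hx))).2]
  have hanti₂ : AntitoneOn a₂ (Ioo 0 1) := fun x _ y _ hxy => by
    simp only [ha₂]; nlinarith
  have hc₁ : Measurable a₁ := by
    have := p.continuous
    exact Continuous.measurable (by fun_prop)
  have hc₂ : Measurable a₂ := by fun_prop
  have hbound : ∀ (a : ℝ → ℝ) (L : ℝ), (∀ x ∈ Ioo (0 : ℝ) 1, a x ≤ L) →
      ∫⁻ x, ENNReal.ofReal (a x) ∂m0 ≠ ∞ := by
    intro a L h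
    refine ne_top_of_le_ne_top (b := ∫⁻ x, ENNReal.ofReal L ∂m0) ?_ ?_
    · rw [lintegral_const, m0_univ, mul_one]; exact ENNReal.ofReal_ne_top
    · refine lintegral_mono_ae ?_
      unfold m0
      filter_upwards [ae_restrict_mem measurableSet_Ioo] with x hx
      exact ENNReal.ofReal_le_ofReal (h x hx)
  have hclose : ∫⁻ x, ‖r x - p.eval x‖ₑ ∂m0 ≤ ε := by
    calc _ ≤ ∫⁻ x, (‖r x - g x‖ₑ + ENNReal.ofReal e) ∂m0 := by
          refine lintegral_mono_ae ?_
          unfold m0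
          filter_upwards [ae_restrict_mem measurableSet_Ioo] with x hx
          have h1 : ‖g x - p.eval x‖ₑ ≤ ENNReal.ofReal e := by
            rw [← ofReal_norm]
            refine ENNReal.ofReal_le_ofReal ?_
            rw [← norm_neg, neg_sub]
            exact (hp x (Ioo_subset_Icc_self hx)).le
          calc ‖r x - p.eval x‖ₑ = ‖(r x - g x) + (g x - p.eval x)‖ₑ := by congr 1; ring
            _ ≤ _ := (enorm_add_le _ _).trans (by gcongr)
      _ = ∫⁻ x, ‖r x - g x‖ₑ ∂m0 + ENNReal.ofReal e := by
          rw [lintegral_add_right _ measurable_const, lintegral_const, m0_univ, mul_one]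
      _ ≤ ε / 2 + ε / 2 := by gcongr
      _ = ε := ENNReal.add_halves ε
  have hpt : ∀ᵐ x ∂m0, ρ x = ENNReal.ofReal (r x) ∧ 0 ≤ r x ∧ 0 ≤ a₁ x ∧ 0 ≤ a₂ x := by
    have h1 : ∀ᵐ x ∂m0, x ∈ Ioo (0 : ℝ) 1 := ae_restrict_mem measurableSet_Ioo
    filter_upwards [h1, ae_lt_top hρ hρf] with x hx hx2
    exact ⟨(ENNReal.ofReal_toReal hx2.ne).symm, ENNReal.toReal_nonneg, (hpos x hx).1,
      (hpos x hx).2.1⟩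
  refine ⟨fun x => ENNReal.ofReal (a₁ x), fun x => ENNReal.ofReal (a₂ x), hc₁.ennreal_ofReal,
    hc₂.ennreal_ofReal, fun x hx y hy hxy => ENNReal.ofReal_le_ofReal (hanti₁ hx hy hxy),
    fun x hx y hy hxy => ENNReal.ofReal_le_ofReal (hanti₂ hx hy hxy),
    hbound _ _ fun x hx => (hpos x hx).2.2.1, hbound _ _ fun x hx => (hpos x hx).2.2.2, ?_, ?_⟩
  · refine (lintegral_mono_ae ?_).trans hclose
    filter_upwards [hpt] with x ⟨h1, h2, h3, h4⟩
    rw [h1, ← ENNReal.ofReal_add h2 h4, ← ENNReal.ofReal_sub _ h3, ← ofReal_norm]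
    refine ENNReal.ofReal_le_ofReal (le_trans (le_of_eq ?_) (le_abs_self _))
    simp only [ha₁, ha₂]; ring
  · refine (lintegral_mono_ae ?_).trans hclose
    filter_upwards [hpt] with x ⟨h1, h2, h3, h4⟩
    rw [h1, ← ENNReal.ofReal_add h2 h4, ← ENNReal.ofReal_sub _ (by positivity), ← ofReal_norm]
    refine ENNReal.ofReal_le_ofReal (le_trans (le_of_eq ?_) (neg_le_abs _))
    simp only [ha₁, ha₂]; ring

/-- An invariant density agrees with the normalized decreasing invariant density, which is bounded
below on an interval and hence everywhere. -/
theorem IsTransfer.bounded_below (H : IsTransfer c V) {ρ : ℝ → ℝ≥0∞} (hρ : Measurable ρ)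
    (hρi : Pop c V ρ =ᵐ[m0] ρ) (hρ1 : ∫⁻ x, ρ x ∂m0 = 1) :
    ∃ k : ℝ≥0∞, k ≠ 0 ∧ ∀ᵐ x ∂m0, k ≤ ρ x := by
  have hρf : ∫⁻ x, ρ x ∂m0 ≠ ∞ := by rw [hρ1]; exact ENNReal.one_ne_top
  have happrox : ∀ ε : ℝ≥0∞, ε ≠ 0 → ∃ g₁ g₂ : ℝ → ℝ≥0∞,
      (Measurable g₁ ∧ AntitoneOn g₁ (Ioo 0 1) ∧ Pop c V g₁ =ᵐ[m0] g₁ ∧ ∫⁻ x, g₁ x ∂m0 ≠ ∞) ∧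
      (Measurable g₂ ∧ AntitoneOn g₂ (Ioo 0 1) ∧ Pop c V g₂ =ᵐ[m0] g₂ ∧ ∫⁻ x, g₂ x ∂m0 ≠ ∞) ∧
      ∫⁻ x, (ρ x + g₂ x - g₁ x) ∂m0 ≤ ε ∧ ∫⁻ x, (g₁ x - (ρ x + g₂ x)) ∂m0 ≤ ε := by
    intro ε hε
    obtain ⟨f₁, f₂, m1, m2, a1, a2, i1, i2, e1, e2⟩ := exists_anti_approx hρ hρf hε
    obtain ⟨g₁, g₂, k1, k2, d1, d2⟩ := H.approx_inv hρ hρi hρf m1 m2 a1 a2 i1 i2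
    exact ⟨g₁, g₂, k1, k2, d1.trans e1, d2.trans e2⟩
  obtain ⟨h, hm, ha, hi, h1⟩ : ∃ h : ℝ → ℝ≥0∞, Measurable h ∧ AntitoneOn h (Ioo 0 1) ∧
      Pop c V h =ᵐ[m0] h ∧ ∫⁻ x, h x ∂m0 = 1 := by
    obtain ⟨g₁, g₂, ⟨m1, a1, i1, f1⟩, -, d1, -⟩ := happrox 2⁻¹ (by simp)
    have hne : ∫⁻ x, g₁ x ∂m0 ≠ 0 := by
      intro h0
      rw [lintegral_eq_zero_iff m1] at h0
      have : ∫⁻ x, ρ x ∂m0 ≤ 2⁻¹ := by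
        refine le_trans (lintegral_mono_ae ?_) d1
        filter_upwards [h0] with x hx
        simp [hx]
      rw [hρ1] at this
      exact absurd this (not_le.2 ENNReal.one_half_lt_one)
    refine ⟨fun x => (∫⁻ x, g₁ x ∂m0)⁻¹ * g₁ x, m1.const_mul _, fun x hx y hy hxy => ?_,
      Pop_inv_smul _ i1, ?_⟩
    · have := a1 hx hy hxy
      dsimp only
      gcongr
    · rw [lintegral_const_mul _ m1]
      exact ENNReal.inv_mul_cancel hne f1
  have hmul : ∀ g : ℝ → ℝ≥0∞, (Measurable g ∧ AntitoneOn g (Ioo 0 1) ∧ Pop c V g =ᵐ[m0] g ∧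
      ∫⁻ x, g x ∂m0 ≠ ∞) → g =ᵐ[m0] fun x => (∫⁻ x, g x ∂m0) * h x := by
    rintro g ⟨m1, a1, i1, f1⟩
    refine H.unique_anti m1 (hm.const_mul _) a1 (fun x hx y hy hxy => ?_) i1 (Pop_inv_smul _ hi) f1 ?_
    · have := ha hx hy hxy
      gcongr
    · rw [lintegral_const_mul _ hm, h1, mul_one]
  have hfin : ∀ᵐ x ∂m0, h x < ∞ := ae_lt_top hm (by rw [h1]; exact ENNReal.one_ne_top)
  have hle : ρ ≤ᵐ[m0] h := by
    have hz : ∫⁻ x, (ρ x - h x) ∂m0 = 0 := by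
      refine le_antisymm (ENNReal.le_of_forall_pos_le_add fun e he _ => ?_) zero_le
      have he' : (e : ℝ≥0∞) / 2 ≠ 0 := (ENNReal.half_pos (by exact_mod_cast he.ne')).ne'
      obtain ⟨g₁, g₂, k1, k2, d1, d2⟩ := happrox _ he'
      have q1 := hmul g₁ k1
      have q2 := hmul g₂ k2
      set A := ∫⁻ x, g₁ x ∂m0
      set B := ∫⁻ x, g₂ x ∂m0
      have hAB : A ≤ (e : ℝ≥0∞) / 2 + (1 + B) := by
        calc A ≤ ∫⁻ x, ((g₁ x - (ρ x + g₂ x)) + (ρ x + g₂ x)) ∂m0 :=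
              lintegral_mono fun x => le_tsub_add
          _ = ∫⁻ x, (g₁ x - (ρ x + g₂ x)) ∂m0 + (1 + B) := by
              have hm' : Measurable fun x => ρ x + g₂ x := hρ.add k2.1
              rw [lintegral_add_right _ hm', lintegral_add_left hρ, hρ1]
          _ ≤ _ := by gcongr
      have hpt : ∀ᵐ x ∂m0, ρ x - h x ≤ (ρ x + g₂ x - g₁ x) + (e : ℝ≥0∞) / 2 * h x := by
        filter_upwards [q1, q2, hfin] with x x1 x2 x3
        have hBh : B * h x ≠ ∞ := ENNReal.mul_ne_top k2.2.2.2 x3.ne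
        rw [tsub_le_iff_right]
        have : ρ x + B * h x ≤
            ((ρ x + g₂ x - g₁ x) + (e : ℝ≥0∞) / 2 * h x + h x) + B * h x := by
          calc ρ x + B * h x = ρ x + g₂ x := by rw [x2]
            _ ≤ (ρ x + g₂ x - g₁ x) + g₁ x := le_tsub_add
            _ = (ρ x + g₂ x - g₁ x) + A * h x := by rw [← x1]
            _ ≤ (ρ x + g₂ x - g₁ x) + ((e : ℝ≥0∞) / 2 + (1 + B)) * h x := by gcongr
            _ = _ := by ring
        exact (ENNReal.add_le_add_iff_right hBh).1 this
      calc _ ≤ ∫⁻ x, ((ρ x + g₂ x - g₁ x) + (e : ℝ≥0∞) / 2 * h x) ∂m0 := lintegral_mono_ae hpt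
        _ = ∫⁻ x, (ρ x + g₂ x - g₁ x) ∂m0 + (e : ℝ≥0∞) / 2 := by
            rw [lintegral_add_right _ (hm.const_mul _), lintegral_const_mul _ hm, h1, mul_one]
        _ ≤ (e : ℝ≥0∞) / 2 + (e : ℝ≥0∞) / 2 := by gcongr
        _ = 0 + e := by rw [ENNReal.add_halves, zero_add]
    have hm' : Measurable fun x => ρ x - h x := hρ.sub hm
    rw [lintegral_eq_zero_iff hm'] at hz
    filter_upwards [hz] with x hx
    exact tsub_eq_zero_iff_le.1 hx
  have heq : ρ =ᵐ[m0] h := ae_eq_of_ae_le_of_lintegral_le hle hρf hm.aemeasurable (by rw [h1, hρ1])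
  obtain ⟨a, b, k, ha0, hab, hb, hk, hkx⟩ := exists_interval (g := fun _ => 0) ha
    antitoneOn_const (fun hcon => by
      have := lintegral_mono_ae hcon
      rw [h1] at this
      simp at this)
  refine H.spread ρ hρ hρi a b k ha0 hab hb hk ?_
  filter_upwards [heq] with x hx hxab
  rw [hx]
  simpa using hkx x hxab

end Abstract

/-! ### Spreading of lower bounds -/

/-- `u` has a positive essential lower bound on the interval `(a, b)`. -/
def Good (u : ℝ → ℝ≥0∞) (a b : ℝ) : Prop :=
  ∃ k : ℝ≥0∞, k ≠ 0 ∧ ∀ᵐ x ∂m0, x ∈ Ioo a b → k ≤ u x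

lemma Good.mono {u : ℝ → ℝ≥0∞} {a b a' b' : ℝ} (h : Good u a b) (ha : a ≤ a') (hb : b' ≤ b) :
    Good u a' b' := by
  obtain ⟨k, hk, h⟩ := h
  refine ⟨k, hk, ?_⟩
  filter_upwards [h] with x hx hxx
  exact hx ⟨ha.trans_lt hxx.1, hxx.2.trans_le hb⟩

section Growth

variable {Q : ℝ → ℝ → Prop} {F g : ℝ → ℝ}

/-- Under the first branch an interval is pushed to the right, without losing length, until its right
endpoint passes `1/2`. -/
lemma escape {b₀ θ : ℝ} (hθ : 0 < θ) (F0 : F 0 = 0) (F1 : ∀ b ≤ 1 / 2, 0 ≤ b → F b ≤ 1)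
    (Flen : ∀ a b, 0 ≤ a → a ≤ b → b ≤ 1 / 2 → b - a ≤ F b - F a)
    (Fθ : ∀ b, b₀ ≤ b → b ≤ 1 / 2 → b * (1 + θ) ≤ F b)
    (step1 : ∀ a b, 0 ≤ a → a < b → b ≤ 1 / 2 → Q a b → Q (F a) (F b)) (n : ℕ) :
    ∀ a b, 0 ≤ a → a < b → b ≤ 1 → b₀ ≤ b → 1 / 2 < b * (1 + θ) ^ n → Q a b →
      ∃ a' b', 0 ≤ a' ∧ a' < b' ∧ b' ≤ 1 ∧ 1 / 2 < b' ∧ b - a ≤ b' - a' ∧ (a = 0 → a' = 0) ∧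
        Q a' b' := by
  induction n with
  | zero =>
    intro a b ha hab hb _ h hQ
    exact ⟨a, b, ha, hab, hb, by simpa using h, le_rfl, id, hQ⟩
  | succ n ih =>
    intro a b ha hab hb hbb h hQ
    by_cases hb2 : 1 / 2 < b
    · exact ⟨a, b, ha, hab, hb, hb2, le_rfl, id, hQ⟩
    · have hb2' : b ≤ 1 / 2 := not_lt.1 hb2
      have h1 := Flen a b ha hab.le hb2'
      have h2 := Fθ b hbb hb2'
      have h3 := Flen 0 a le_rfl ha (hab.le.trans hb2')
      have hbF : b ≤ F b := by nlinarith
      obtain ⟨a', b', k1, k2, k3, k4, k5, k6, k7⟩ := ih (F a) (F b) (by linarith) (by linarith)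
        (F1 b hb2' (by linarith)) (by linarith) (by
          have : b * (1 + θ) ^ (n + 1) = b * (1 + θ) * (1 + θ) ^ n := by ring
          rw [this] at h
          exact h.trans_le (by gcongr)) (step1 a b ha hab hb2' hQ)
      exact ⟨a', b', k1, k2, k3, k4, by linarith, fun h0 => k6 (by rw [h0, F0]), k7⟩

/-- Intervals grow by the factor `lam > 1` at each passage through `[1/2, 1]`, so that some image
contains `1/2` in its interior; its image contains a neighbourhood of `0`, which grows to `(0,1)`. -/
lemma grow {lam : ℝ} (hlam : 1 < lam) (F0 : F 0 = 0) (Fhalf : F (1 / 2) = 1)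
    (F1 : ∀ b ≤ 1 / 2, 0 ≤ b → F b ≤ 1)
    (Flen : ∀ a b, 0 ≤ a → a ≤ b → b ≤ 1 / 2 → b - a ≤ F b - F a)
    (Fθ : ∀ b₀ : ℝ, 0 < b₀ → ∃ θ : ℝ, 0 < θ ∧ ∀ b, b₀ ≤ b → b ≤ 1 / 2 → b * (1 + θ) ≤ F b)
    (g0 : g (1 / 2) = 0) (g1 : ∀ b, 1 / 2 ≤ b → b ≤ 1 → g b ≤ 1)
    (glen : ∀ a b, 1 / 2 ≤ a → a ≤ b → b ≤ 1 → lam * (b - a) ≤ g b - g a)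
    (step1 : ∀ a b, 0 ≤ a → a < b → b ≤ 1 / 2 → Q a b → Q (F a) (F b))
    (step2 : ∀ a b, 1 / 2 ≤ a → a < b → b ≤ 1 → Q a b → Q (g a) (g b))
    (Qmono : ∀ a b a' b', a ≤ a' → b' ≤ b → Q a b → Q a' b')
    {a b : ℝ} (ha : 0 ≤ a) (hab : a < b) (hb : b ≤ 1) (hQ : Q a b) : Q 0 1 := by
  have esc : ∀ a b, 0 ≤ a → a < b → b ≤ 1 → Q a b →
      ∃ a' b', 0 ≤ a' ∧ a' < b' ∧ b' ≤ 1 ∧ 1 / 2 < b' ∧ b - a ≤ b' - a' ∧ (a = 0 → a' = 0) ∧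
        Q a' b' := by
    intro a b ha hab hb hQ
    have hb0 : 0 < b := ha.trans_lt hab
    obtain ⟨θ, hθ, h⟩ := Fθ b hb0
    obtain ⟨n, hn⟩ := pow_unbounded_of_one_lt (1 / 2 / b) (by linarith : 1 < 1 + θ)
    exact escape hθ F0 F1 Flen h step1 n a b ha hab hb le_rfl
      (by rwa [div_lt_iff₀' hb0] at hn) hQ
  obtain ⟨a₁, b₁, h1, h2, h3, h4⟩ : ∃ a₁ b₁, a₁ < 1 / 2 ∧ 1 / 2 < b₁ ∧ b₁ ≤ 1 ∧ Q a₁ b₁ := by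
    by_contra hcon
    push Not at hcon
    have key : ∀ n : ℕ, ∃ a' b', 0 ≤ a' ∧ a' < b' ∧ b' ≤ 1 ∧ lam ^ n * (b - a) ≤ b' - a' ∧ Q a' b' := by
      intro n
      induction n with
      | zero => exact ⟨a, b, ha, hab, hb, by simp, hQ⟩
      | succ n ih =>
        obtain ⟨a', b', k1, k2, k3, k4, k5⟩ := ih
        obtain ⟨a'', b'', l1, l2, l3, l4, l5, -, l7⟩ := esc a' b' k1 k2 k3 k5
        have l8 : 1 / 2 ≤ a'' := by
          by_contra hlt
          exact hcon a'' b'' (not_le.1 hlt) l4 l3 l7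
        have e1 := glen a'' b'' l8 l2.le l3
        have e2 := glen (1 / 2) a'' le_rfl l8 (l2.le.trans l3)
        refine ⟨g a'', g b'', by nlinarith, by nlinarith, g1 b'' (by linarith) l3, ?_,
          step2 _ _ l8 l2 l3 l7⟩
        calc lam ^ (n + 1) * (b - a) = lam * (lam ^ n * (b - a)) := by ring
          _ ≤ lam * (b'' - a'') := by gcongr; exact k4.trans l5
          _ ≤ _ := e1
    obtain ⟨n, hn⟩ := pow_unbounded_of_one_lt (1 / (b - a)) hlam
    rw [div_lt_iff₀ (sub_pos.2 hab)] at hn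
    obtain ⟨a', b', k1, k2, k3, k4, -⟩ := key n
    linarith
  have q1 : Q 0 (g b₁) := by
    have := step2 (1 / 2) b₁ le_rfl h2 h3 (Qmono _ _ _ _ h1.le le_rfl h4)
    rwa [g0] at this
  have hg := glen (1 / 2) b₁ le_rfl h2.le h3
  obtain ⟨a', b', -, -, -, k4, -, k6, k7⟩ := esc 0 (g b₁) le_rfl (by nlinarith)
    (g1 b₁ h2.le h3) q1
  rw [k6 rfl] at k7
  have := step1 0 (1 / 2) le_rfl (by norm_num) le_rfl (Qmono _ _ _ _ le_rfl k4.le k7)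
  rwa [F0, Fhalf] at this

end Growth

/-! ### Branches and the change of variables -/

/-- The weight `p / F'` of an inverse branch `V` of `F`, extended by zero outside the range `(0, r)`. -/
def wt (r : ℝ) (F' V p : ℝ → ℝ) : ℝ → ℝ≥0∞ :=
  (Ioo 0 r).indicator fun y => ENNReal.ofReal (p (V y) / F' (V y))

/-- `F` is an increasing differentiable bijection from `(a, b) ⊆ (0, 1)` onto `(0, r) ⊆ (0, 1)`, with
derivative `F'` and inverse `V`; the inverse is extended to a monotone function on the line. -/
structure Br (a b r : ℝ) (F F' V : ℝ → ℝ) : Prop where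
  r_le : r ≤ 1
  F_deriv : ∀ x ∈ Ioo a b, HasDerivAt F (F' x) x
  F'_pos : ∀ x ∈ Ioo a b, 0 < F' x
  F_mono : StrictMonoOn F (Icc a b)
  F_left : F a = 0
  F_right : F b = r
  V_maps : MapsTo V (Ioo 0 r) (Ioo a b)
  FV : ∀ y ∈ Ioo 0 r, F (V y) = y
  V_mono : Monotone V
  F'_meas : Measurable F'

namespace Br

variable {a b r : ℝ} {F F' V p : ℝ → ℝ} (B : Br a b r F F' V)
include B

lemma F_maps {x : ℝ} (hx : x ∈ Ioo a b) : F x ∈ Ioo 0 r := by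
  have hab : a ≤ b := (hx.1.trans hx.2).le
  have hx' := Ioo_subset_Icc_self hx
  exact ⟨B.F_left ▸ B.F_mono (left_mem_Icc.2 hab) hx' hx.1,
    B.F_right ▸ B.F_mono hx' (right_mem_Icc.2 hab) hx.2⟩

lemma VF {x : ℝ} (hx : x ∈ Ioo a b) : V (F x) = x :=
  B.F_mono.injOn (Ioo_subset_Icc_self (B.V_maps (B.F_maps hx))) (Ioo_subset_Icc_self hx)
    (B.FV _ (B.F_maps hx))

lemma image : F '' Ioo a b = Ioo 0 r := by
  ext y
  constructor
  · rintro ⟨x, hx, rfl⟩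
    exact B.F_maps hx
  · exact fun hy => ⟨V y, B.V_maps hy, B.FV y hy⟩

lemma wt_meas (hp : Measurable p) : Measurable (wt r F' V p) :=
  Measurable.indicator
    ((hp.comp B.V_mono.measurable).div (B.F'_meas.comp B.V_mono.measurable)).ennreal_ofReal
    measurableSet_Ioo

/-- Change of variables along a branch. -/
lemma cov (f h : ℝ → ℝ≥0∞) :
    ∫⁻ x in Ioo a b, h (F x) * (ENNReal.ofReal (p x) * f x) =
      ∫⁻ y, h y * (wt r F' V p y * f (V y)) ∂m0 := by
  have h1 := lintegral_image_eq_lintegral_abs_deriv_mul (s := Ioo a b) (f := F) (f' := F')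
    measurableSet_Ioo (fun x hx => (B.F_deriv x hx).hasDerivWithinAt)
    (B.F_mono.injOn.mono Ioo_subset_Icc_self) (fun y => h y * (wt r F' V p y * f (V y)))
  rw [B.image] at h1
  have h2 : ∫⁻ y, h y * (wt r F' V p y * f (V y)) ∂m0 =
      ∫⁻ y in Ioo 0 r, h y * (wt r F' V p y * f (V y)) := by
    unfold m0
    rw [← lintegral_indicator measurableSet_Ioo, ← lintegral_indicator measurableSet_Ioo]
    congr 1
    funext y
    by_cases hy : y ∈ Ioo 0 r
    · rw [indicator_of_mem hy, indicator_of_mem (Ioo_subset_Ioo_right B.r_le hy)]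
    · simp [wt, hy]
  rw [h2, h1]
  refine setLIntegral_congr_fun measurableSet_Ioo fun x hx => ?_
  have hpos := B.F'_pos x hx
  simp only [wt, indicator_of_mem (B.F_maps hx), B.VF hx]
  rw [abs_of_pos hpos, ENNReal.ofReal_div_of_pos hpos]
  have e1 : ENNReal.ofReal (F' x) ≠ 0 := by simpa using hpos
  calc h (F x) * (ENNReal.ofReal (p x) * f x)
      = (ENNReal.ofReal (F' x) * (ENNReal.ofReal (F' x))⁻¹) *
          (h (F x) * (ENNReal.ofReal (p x) * f x)) := by
        rw [ENNReal.mul_inv_cancel e1 ENNReal.ofReal_ne_top, one_mul]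
    _ = _ := by rw [div_eq_mul_inv]; ring

/-- A lower bound for an invariant function on an interval inside the domain of a branch yields one
on the image of this interval. -/
lemma push {ι : Type*} [Fintype ι] {c : ι → ℝ → ℝ≥0∞} {W : ι → ℝ → ℝ} (H : PreTransfer c W)
    {u : ℝ → ℝ≥0∞} (hu : Pop c W u =ᵐ[m0] u) {κ : ℝ} (hκ : 0 < κ)
    (hp : ∀ x ∈ Ioo a b, κ ≤ p x / F' x)
    (i : ι) (hc : c i = wt r F' V p) (hW : W i = V) {s t : ℝ} (hs : a ≤ s) (hst : s < t) (ht : t ≤ b)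
    (hg : Good u s t) : Good u (F s) (F t) := by
  obtain ⟨k, hk, h⟩ := hg
  refine ⟨ENNReal.ofReal κ * k, mul_ne_zero (by simpa using hκ) hk, ?_⟩
  have hle : (Ioo s t).indicator (fun _ => k) ≤ᵐ[m0] u := by
    filter_upwards [h] with x hx
    by_cases hxs : x ∈ Ioo s t
    · simpa [hxs] using hx hxs
    · simp [hxs]
  filter_upwards [H.ae_mono hle, hu] with y h1 h2 hy
  have hsI : s ∈ Icc a b := ⟨hs, hst.le.trans ht⟩
  have htI : t ∈ Icc a b := ⟨hs.trans hst.le, ht⟩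
  have hab : a ≤ b := hs.trans (hst.le.trans ht)
  have hy0 : y ∈ Ioo 0 r :=
    ⟨(B.F_left ▸ B.F_mono.monotoneOn (left_mem_Icc.2 hab) hsI hs : 0 ≤ F s).trans_lt hy.1,
      hy.2.trans_le (B.F_right ▸ B.F_mono.monotoneOn htI (right_mem_Icc.2 hab) ht)⟩
  have hV := B.V_maps hy0
  have hV' := Ioo_subset_Icc_self hV
  have hVst : V y ∈ Ioo s t := by
    constructor
    · rw [← B.F_mono.lt_iff_lt hsI hV', B.FV y hy0]; exact hy.1
    · rw [← B.F_mono.lt_iff_lt hV' htI, B.FV y hy0]; exact hy.2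
  rw [h2] at h1
  refine le_trans ?_ h1
  refine le_trans ?_ (Finset.single_le_sum (f := fun i => c i y * (Ioo s t).indicator (fun _ => k) (W i y))
    (fun _ _ => zero_le) (Finset.mem_univ i))
  simp only [hc, hW, wt, indicator_of_mem hy0, indicator_of_mem hVst]
  gcongr
  exact hp _ hV

end Br

/-! ### The two branches of an LSV-type map -/

/-- The first branch `x ↦ x (1 + 2^γ x^γ)` of an LSV-type map. -/
def br1 (γ : ℝ) : ℝ → ℝ := fun x => x * (1 + 2 ^ γ * x ^ γ)

/-- The derivative of the first branch. -/
def br1' (γ : ℝ) : ℝ → ℝ := fun x => 1 + (1 + γ) * 2 ^ γ * x ^ γ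

lemma br1_zero (γ : ℝ) : br1 γ 0 = 0 := by simp [br1]

lemma two_half_rpow (γ : ℝ) : (2 : ℝ) ^ γ * (1 / 2 : ℝ) ^ γ = 1 := by
  rw [← Real.mul_rpow (by norm_num) (by norm_num)]
  norm_num

lemma br1_half (γ : ℝ) : br1 γ (1 / 2) = 1 := by
  unfold br1
  rw [two_half_rpow]
  norm_num

lemma br1_len {γ : ℝ} (hγ : 0 < γ) {a b : ℝ} (ha : 0 ≤ a) (hab : a ≤ b) :
    b - a ≤ br1 γ b - br1 γ a := by
  have h1 : a ^ γ ≤ b ^ γ := Real.rpow_le_rpow ha hab hγ.le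
  have h2 : (0 : ℝ) < 2 ^ γ := by positivity
  have h3 : 0 ≤ a ^ γ := by positivity
  have h4 : a * a ^ γ ≤ b * b ^ γ := mul_le_mul hab h1 h3 (ha.trans hab)
  unfold br1
  nlinarith

lemma br1_strictMono {γ : ℝ} (hγ : 0 < γ) : StrictMonoOn (br1 γ) (Icc 0 (1 / 2)) := by
  intro a ha b _ hab
  have := br1_len hγ ha.1 hab.le
  linarith

lemma br1_le_one {γ : ℝ} (hγ : 0 < γ) {b : ℝ} (hb : b ≤ 1 / 2) (hb0 : 0 ≤ b) : br1 γ b ≤ 1 := by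
  have := br1_len hγ hb0 hb
  rw [br1_half] at this
  linarith

lemma br1_grow {γ : ℝ} (hγ : 0 < γ) {b₀ : ℝ} (hb₀ : 0 < b₀) :
    ∃ θ : ℝ, 0 < θ ∧ ∀ b, b₀ ≤ b → b ≤ 1 / 2 → b * (1 + θ) ≤ br1 γ b := by
  refine ⟨2 ^ γ * b₀ ^ γ, by positivity, fun b hb _ => ?_⟩
  unfold br1
  have : 0 < b := hb₀.trans_le hb
  gcongr

lemma br1_hasDerivAt {γ : ℝ} {x : ℝ} (hx : 0 < x) : HasDerivAt (br1 γ) (br1' γ x) x := by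
  have h1 : HasDerivAt (fun x : ℝ => x ^ γ) (γ * x ^ (γ - 1)) x :=
    Real.hasDerivAt_rpow_const (Or.inl hx.ne')
  have h2 := (hasDerivAt_id x).mul ((h1.const_mul (2 ^ γ)).const_add 1)
  refine h2.congr_deriv ?_
  have : x ^ γ = x * x ^ (γ - 1) := by
    rw [Real.rpow_sub_one hx.ne']; field_simp
  simp only [br1', id]
  rw [this]
  ring

lemma br1'_meas (γ : ℝ) : Measurable (br1' γ) := by
  unfold br1'
  fun_prop

lemma br1'_bounds {γ : ℝ} (hγ : 0 < γ) (hγ1 : γ < 1) {x : ℝ} (hx : x ∈ Ioo (0 : ℝ) (1 / 2)) :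
    0 < br1' γ x ∧ br1' γ x ≤ 3 := by
  have h0 : 0 < x := hx.1
  have h1 : x ^ γ ≤ (1 / 2) ^ γ := Real.rpow_le_rpow h0.le hx.2.le hγ.le
  have h2 : (2 : ℝ) ^ γ * x ^ γ ≤ 1 := by rw [← two_half_rpow γ]; gcongr
  have h3 : (0 : ℝ) < 2 ^ γ * x ^ γ := by positivity
  unfold br1'
  constructor <;> nlinarith

namespace LSVBranch

variable (G : LSVBranch)

/-- The derivative of the second branch, extended by `1` to a measurable function on the line. -/
def gD : ℝ → ℝ :=
  open Classical in (Icc (1 / 2 : ℝ) 1).piecewise G.g' (fun _ => 1)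

lemma gD_meas : Measurable G.gD := by
  classical
  unfold gD
  convert ContinuousOn.measurable_piecewise G.contDeriv continuousOn_const measurableSet_Icc

lemma gD_eq {x : ℝ} (hx : x ∈ Icc (1 / 2 : ℝ) 1) : G.gD x = G.g' x := by
  simp only [gD, piecewise_eq_of_mem _ _ _ hx]

lemma g_cont : ContinuousOn G.g (Icc (1 / 2) 1) := fun x hx => (G.hasDeriv x hx).continuousWithinAt

lemma g_deriv {x : ℝ} (hx : x ∈ Ioo (1 / 2 : ℝ) 1) : HasDerivAt G.g (G.gD x) x := by
  rw [G.gD_eq (Ioo_subset_Icc_self hx)]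
  exact (G.hasDeriv x (Ioo_subset_Icc_self hx)).hasDerivAt (Icc_mem_nhds hx.1 hx.2)

lemma g_one_le : G.g 1 ≤ 1 := (G.mapsTo (right_mem_Icc.2 (by norm_num))).2

lemma gD_pos {x : ℝ} (hx : x ∈ Ioo (1 / 2 : ℝ) 1) : 0 < G.gD x := by
  rw [G.gD_eq (Ioo_subset_Icc_self hx)]
  linarith [G.deriv_gt_one x (Ioo_subset_Icc_self hx)]

lemma gD_le : ∃ M : ℝ, 0 < M ∧ ∀ x ∈ Icc (1 / 2 : ℝ) 1, G.gD x ≤ M := by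
  obtain ⟨x₀, hx₀, h⟩ := isCompact_Icc.exists_isMaxOn (nonempty_Icc.2 (by norm_num)) G.contDeriv
  exact ⟨G.g' x₀, by linarith [G.deriv_gt_one x₀ hx₀], fun x hx => by rw [G.gD_eq hx]; exact h hx⟩

lemma g_len : ∃ lam : ℝ, 1 < lam ∧ ∀ a b, 1 / 2 ≤ a → a ≤ b → b ≤ 1 →
    lam * (b - a) ≤ G.g b - G.g a := by
  obtain ⟨x₀, hx₀, h⟩ := isCompact_Icc.exists_isMinOn (nonempty_Icc.2 (by norm_num)) G.contDeriv
  refine ⟨G.g' x₀, G.deriv_gt_one x₀ hx₀, fun a b ha hab hb => ?_⟩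
  refine (convex_Icc (1 / 2 : ℝ) 1).mul_sub_le_image_sub_of_le_deriv G.g_cont ?_ ?_ a
    ⟨ha, hab.trans hb⟩ b ⟨ha.trans hab, hb⟩ hab
  · rw [interior_Icc]
    exact fun x hx => (G.g_deriv hx).differentiableAt.differentiableWithinAt
  · rw [interior_Icc]
    intro x hx
    rw [(G.g_deriv hx).deriv, G.gD_eq (Ioo_subset_Icc_self hx)]
    exact h (Ioo_subset_Icc_self hx)

end LSVBranch

/-- A function inverting `F` on `(0, r)` can be extended to a monotone function on the line. -/
lemma exists_mono_ext {a b r : ℝ} {F v : ℝ → ℝ} (hab : a ≤ b) (hF : StrictMonoOn F (Icc a b))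
    (hv : MapsTo v (Ioo 0 r) (Ioo a b)) (hFv : ∀ y ∈ Ioo 0 r, F (v y) = y) :
    ∃ V : ℝ → ℝ, Monotone V ∧ EqOn V v (Ioo 0 r) := by
  refine ⟨fun y => if y ≤ 0 then a else if y < r then v y else b, fun y z hyz => ?_, fun y hy => ?_⟩
  · have key : ∀ y, 0 < y → y < r → a ≤ v y ∧ v y ≤ b :=
      fun y h1 h2 => ⟨(hv ⟨h1, h2⟩).1.le, (hv ⟨h1, h2⟩).2.le⟩
    dsimp only
    split_ifs with h1 h2 h3 h4 h5 h6 h7 h8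
    · exact le_rfl
    · exact (key z (not_le.1 h2) h3).1
    · exact hab
    · linarith
    · have hy : y ∈ Ioo 0 r := ⟨not_le.1 h1, h4⟩
      have hz : z ∈ Ioo 0 r := ⟨not_le.1 h5, h6⟩
      rw [← hF.le_iff_le (Ioo_subset_Icc_self (hv hy)) (Ioo_subset_Icc_self (hv hz)), hFv y hy,
        hFv z hz]
      exact hyz
    · exact (key y (not_le.1 h1) h4).2
    · linarith
    · linarith
    · exact le_rfl
  · simp [not_le.2 hy.1, hy.2]

/-- The inverse branches provided by Assumption (A), extended to monotone functions on the line. -/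
lemma exists_branches {γ : ℝ} (hγ : 0 < γ) (hγ1 : γ < 1) {G : LSVBranch} {p : ℝ → ℝ}
    (hA : AssumptionA γ G p) :
    ∃ VA VB : ℝ → ℝ, Br 0 (1 / 2) 1 (br1 γ) (br1' γ) VA ∧ Br (1 / 2) 1 (G.g 1) G.g G.gD VB ∧
      AntitoneOn (fun y => p (VA y) / br1' γ (VA y)) (Ioo 0 1) ∧
      AntitoneOn (fun y => p (VA y) / br1' γ (VA y) + p (VB y) / G.gD (VB y)) (Ioo 0 (G.g 1)) := by
  obtain ⟨v1, v2, h1, h2, h3, h4⟩ := hA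
  have hsub : Ioo 0 (G.g 1) ⊆ G.g '' Icc (1 / 2) 1 := by
    have := intermediate_value_Icc (by norm_num : (1 / 2 : ℝ) ≤ 1) G.g_cont
    rw [G.map_half] at this
    exact Ioo_subset_Icc_self.trans this
  have m1 : MapsTo v1 (Ioo 0 1) (Ioo 0 (1 / 2)) := by
    intro y hy
    obtain ⟨k1, k2⟩ := h1 y ⟨hy.1.le, hy.2⟩
    refine ⟨lt_of_le_of_ne k1.1 ?_, k1.2⟩
    intro h0
    rw [← h0] at k2
    norm_num [LSVmap] at k2
    linarith [hy.1]
  have f1 : ∀ y ∈ Ioo (0 : ℝ) 1, br1 γ (v1 y) = y := by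
    intro y hy
    have k2 := (h1 y ⟨hy.1.le, hy.2⟩).2
    rwa [LSVmap, if_pos (m1 hy).2] at k2
  have m2 : MapsTo v2 (Ioo 0 (G.g 1)) (Ioo (1 / 2) 1) := by
    intro y hy
    obtain ⟨k1, k2⟩ := h2 y (hsub hy)
    refine ⟨lt_of_le_of_ne k1.1 ?_, lt_of_le_of_ne k1.2 ?_⟩
    · intro h0
      rw [← h0, G.map_half] at k2
      exact hy.1.ne k2
    · intro h0
      rw [h0] at k2
      exact hy.2.ne' k2
  have f2 : ∀ y ∈ Ioo 0 (G.g 1), G.g (v2 y) = y := fun y hy => (h2 y (hsub hy)).2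
  obtain ⟨VA, a1, a2⟩ := exists_mono_ext (by norm_num) (br1_strictMono hγ) m1 f1
  obtain ⟨VB, b1, b2⟩ := exists_mono_ext (by norm_num) G.strictMono m2 f2
  have hsub1 : Ioo 0 (G.g 1) ⊆ Ioo 0 1 := Ioo_subset_Ioo_right G.g_one_le
  have e1 : ∀ y ∈ Ioo (0 : ℝ) 1, LSVderiv γ G (v1 y) = br1' γ (v1 y) := by
    intro y hy
    rw [LSVderiv, if_pos (m1 hy).2]
    rfl
  have e2 : ∀ y ∈ Ioo 0 (G.g 1), LSVderiv γ G (v2 y) = G.gD (v2 y) := by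
    intro y hy
    rw [LSVderiv, if_neg (not_lt.2 (m2 hy).1.le), G.gD_eq (Ioo_subset_Icc_self (m2 hy))]
  refine ⟨VA, VB, ⟨le_rfl, fun x hx => br1_hasDerivAt hx.1, fun x hx => (br1'_bounds hγ hγ1 hx).1,
    br1_strictMono hγ, br1_zero γ, br1_half γ, fun y hy => ?_, fun y hy => ?_, a1, br1'_meas γ⟩,
    ⟨G.g_one_le, fun x hx => G.g_deriv hx, fun x hx => G.gD_pos hx, G.strictMono, G.map_half, rfl,
      fun y hy => ?_, fun y hy => ?_, b1, G.gD_meas⟩, ?_, ?_⟩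
  · rw [a2 hy]; exact m1 hy
  · rw [a2 hy]; exact f1 y hy
  · rw [b2 hy]; exact m2 hy
  · rw [b2 hy]; exact f2 y hy
  · refine (h3.mono Ioo_subset_Ico_self).congr fun y hy => ?_
    simp only [a2 hy, e1 y hy]
  · refine (h4.mono hsub).congr fun y hy => ?_
    simp only [a2 (hsub1 hy), b2 hy, e1 y (hsub1 hy), e2 y hy]

/-- Assumption (A) says that the part of the transfer operator which comes from one of the two maps
preserves decreasing functions. -/
lemma anti_one {γ : ℝ} {G : LSVBranch} {p VA VB : ℝ → ℝ} (hp : ∀ x ∈ Icc (0 : ℝ) 1, 0 ≤ p x)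
    (A : Br 0 (1 / 2) 1 (br1 γ) (br1' γ) VA) (B : Br (1 / 2) 1 (G.g 1) G.g G.gD VB)
    (hA : AntitoneOn (fun y => p (VA y) / br1' γ (VA y)) (Ioo 0 1))
    (hB : AntitoneOn (fun y => p (VA y) / br1' γ (VA y) + p (VB y) / G.gD (VB y)) (Ioo 0 (G.g 1)))
    {f : ℝ → ℝ≥0∞} (hf : AntitoneOn f (Ioo 0 1)) :
    AntitoneOn (fun y => wt 1 (br1' γ) VA p y * f (VA y) + wt (G.g 1) G.gD VB p y * f (VB y))
      (Ioo 0 1) := by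
  intro y hy z hz hyz
  have hVAy := A.V_maps hy
  have hVAz := A.V_maps hz
  have i1 : ∀ x ∈ Ioo (0 : ℝ) (1 / 2), x ∈ Ioo (0 : ℝ) 1 := fun x hx => ⟨hx.1, by linarith [hx.2]⟩
  have i2 : ∀ x ∈ Ioo (1 / 2 : ℝ) 1, x ∈ Ioo (0 : ℝ) 1 := fun x hx => ⟨by linarith [hx.1], hx.2⟩
  have fA : f (VA z) ≤ f (VA y) := hf (i1 _ hVAy) (i1 _ hVAz) (A.V_mono hyz)
  have wA : wt 1 (br1' γ) VA p z ≤ wt 1 (br1' γ) VA p y := by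
    simp only [wt, indicator_of_mem hy, indicator_of_mem hz]
    exact ENNReal.ofReal_le_ofReal (hA hy hz hyz)
  dsimp only
  by_cases hzr : z < G.g 1
  · have hy' : y ∈ Ioo 0 (G.g 1) := ⟨hy.1, hyz.trans_lt hzr⟩
    have hz' : z ∈ Ioo 0 (G.g 1) := ⟨hz.1, hzr⟩
    have hVBy := B.V_maps hy'
    have hVBz := B.V_maps hz'
    have fB : f (VB z) ≤ f (VB y) := hf (i2 _ hVBy) (i2 _ hVBz) (B.V_mono hyz)
    have fAB : f (VB y) ≤ f (VA y) := hf (i1 _ hVAy) (i2 _ hVBy) (by linarith [hVAy.2, hVBy.1])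
    have wAB : wt 1 (br1' γ) VA p z + wt (G.g 1) G.gD VB p z ≤
        wt 1 (br1' γ) VA p y + wt (G.g 1) G.gD VB p y := by
      have nA : ∀ y ∈ Ioo (0 : ℝ) 1, 0 ≤ p (VA y) / br1' γ (VA y) := fun y hy =>
        div_nonneg (hp _ (Ioo_subset_Icc_self (i1 _ (A.V_maps hy)))) (A.F'_pos _ (A.V_maps hy)).le
      have nB : ∀ y ∈ Ioo 0 (G.g 1), 0 ≤ p (VB y) / G.gD (VB y) := fun y hy =>
        div_nonneg (hp _ (Ioo_subset_Icc_self (i2 _ (B.V_maps hy)))) (B.F'_pos _ (B.V_maps hy)).le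
      simp only [wt, indicator_of_mem hy, indicator_of_mem hz, indicator_of_mem hy',
        indicator_of_mem hz']
      rw [← ENNReal.ofReal_add (nA z hz) (nB z hz'), ← ENNReal.ofReal_add (nA y hy) (nB y hy')]
      exact ENNReal.ofReal_le_ofReal (hB hy' hz' hyz)
    -- summation by parts: write `f (VA y) = f (VB y) + D` with `D ≥ 0`
    obtain ⟨D, hD⟩ := exists_add_of_le fAB
    calc wt 1 (br1' γ) VA p z * f (VA z) + wt (G.g 1) G.gD VB p z * f (VB z)
        ≤ wt 1 (br1' γ) VA p z * f (VA y) + wt (G.g 1) G.gD VB p z * f (VB y) := by gcongr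
      _ = (wt 1 (br1' γ) VA p z + wt (G.g 1) G.gD VB p z) * f (VB y)
            + wt 1 (br1' γ) VA p z * D := by rw [hD]; ring
      _ ≤ (wt 1 (br1' γ) VA p y + wt (G.g 1) G.gD VB p y) * f (VB y)
            + wt 1 (br1' γ) VA p y * D := by gcongr
      _ = _ := by rw [hD]; ring
  · have : wt (G.g 1) G.gD VB p z = 0 := by
      have hz' : z ∉ Ioo 0 (G.g 1) := fun h => hzr h.2
      simp [wt, hz']
    rw [this, zero_mul, add_zero]
    exact le_add_right (mul_le_mul' wA fA)

/-! ### The transfer operator of the random map -/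

lemma m0_split : m0 = volume.restrict (Ioo 0 (1 / 2)) + volume.restrict (Ioo (1 / 2) 1) := by
  unfold m0
  rw [← Measure.restrict_union (Set.disjoint_left.2 fun x hx hx' => by linarith [hx.2, hx'.1])
    measurableSet_Ioo]
  refine Measure.restrict_congr_set ?_
  have h : ∀ᵐ x : ℝ, x ≠ 1 / 2 := by simp [ae_iff, measure_singleton]
  filter_upwards [h] with x hx
  refine propext ⟨fun h => ?_, fun h => ?_⟩
  · rcases lt_or_gt_of_ne hx with h' | h'
    · exact Or.inl ⟨h.1, h'⟩
    · exact Or.inr ⟨h', h.2⟩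
  · rcases h with h | h
    · exact ⟨h.1, by linarith [h.2]⟩
    · exact ⟨by linarith [h.1], h.2⟩

lemma m0_ae_mem : ∀ᵐ x ∂m0, x ∈ Ioo (0 : ℝ) 1 := ae_restrict_mem measurableSet_Ioo

/-- An LSV-type map agrees on `(0,1)` with a function which is measurable on the whole line. -/
lemma exists_measurable_LSV (γ : ℝ) (G : LSVBranch) :
    ∃ S : ℝ → ℝ, Measurable S ∧ LSVmap γ G =ᵐ[m0] S ∧ (∀ x ∈ Ioo (0 : ℝ) (1 / 2), S x = br1 γ x) ∧
      ∀ x ∈ Ioo (1 / 2 : ℝ) 1, S x = G.g x := by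
  classical
  have hm : Measurable ((Icc (1 / 2 : ℝ) 1).piecewise G.g (fun _ => 0)) :=
    ContinuousOn.measurable_piecewise G.g_cont continuousOn_const measurableSet_Icc
  have hb : Measurable (br1 γ) := by unfold br1; fun_prop
  have hs : ∀ x ∈ Icc (1 / 2 : ℝ) 1, (Icc (1 / 2 : ℝ) 1).piecewise G.g (fun _ => 0) x = G.g x :=
    fun x hx => piecewise_eq_of_mem _ _ _ hx
  refine ⟨fun x => if x < 1 / 2 then br1 γ x else (Icc (1 / 2 : ℝ) 1).piecewise G.g (fun _ => 0) x,
    Measurable.ite measurableSet_Iio hb hm, ?_, fun x hx => if_pos hx.2, fun x hx => ?_⟩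
  · filter_upwards [m0_ae_mem] with x hx
    unfold LSVmap
    split_ifs with h
    · rfl
    · exact (hs x ⟨not_lt.1 h, hx.2.le⟩).symm
  · dsimp only
    rw [if_neg (not_lt.2 hx.1.le), hs x (Ioo_subset_Icc_self hx)]

/-- The share of one map in the action of the random map on measures with a density: the two terms
on the right come from the two inverse branches. -/
lemma map_LSV_withDensity {γ : ℝ} {G : LSVBranch} {p VA VB : ℝ → ℝ} (hp : Measurable p)
    (A : Br 0 (1 / 2) 1 (br1 γ) (br1' γ) VA) (B : Br (1 / 2) 1 (G.g 1) G.g G.gD VB)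
    {f : ℝ → ℝ≥0∞} (hf : Measurable f) :
    ((m0.withDensity f).withDensity fun x => ENNReal.ofReal (p x)).map (LSVmap γ G) =
      m0.withDensity fun y =>
        wt 1 (br1' γ) VA p y * f (VA y) + wt (G.g 1) G.gD VB p y * f (VB y) := by
  obtain ⟨S, hS, hSe, hS1, hS2⟩ := exists_measurable_LSV γ G
  rw [← withDensity_mul _ hf hp.ennreal_ofReal,
    Measure.map_congr ((withDensity_absolutelyContinuous m0 _).ae_eq hSe)]
  have mA : Measurable fun y => wt 1 (br1' γ) VA p y * f (VA y) :=
    (A.wt_meas hp).mul (hf.comp A.V_mono.measurable)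
  ext s hs
  rw [Measure.map_apply hS hs, withDensity_apply _ (hS hs), withDensity_apply _ hs]
  have e1 : ∫⁻ x in S ⁻¹' s, (f * fun x => ENNReal.ofReal (p x)) x ∂m0 =
      ∫⁻ x, s.indicator 1 (S x) * (ENNReal.ofReal (p x) * f x) ∂m0 := by
    rw [← lintegral_indicator (hS hs)]
    refine lintegral_congr fun x => ?_
    by_cases hx : S x ∈ s
    · rw [indicator_of_mem (show x ∈ S ⁻¹' s from hx), indicator_of_mem hx]
      simp [mul_comm]
    · rw [indicator_of_notMem (show x ∉ S ⁻¹' s from hx), indicator_of_notMem hx, zero_mul]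
  have e2 : ∫⁻ y in s, (wt 1 (br1' γ) VA p y * f (VA y) + wt (G.g 1) G.gD VB p y * f (VB y)) ∂m0 =
      ∫⁻ y, s.indicator 1 y * (wt 1 (br1' γ) VA p y * f (VA y)) ∂m0 +
        ∫⁻ y, s.indicator 1 y * (wt (G.g 1) G.gD VB p y * f (VB y)) ∂m0 := by
    have mA' : Measurable fun y => s.indicator 1 y * (wt 1 (br1' γ) VA p y * f (VA y)) :=
      (measurable_one.indicator hs).mul mA
    rw [← lintegral_add_left mA', ← lintegral_indicator hs]
    refine lintegral_congr fun y => ?_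
    by_cases hy : y ∈ s
    · simp [hy]
    · simp [hy]
  rw [e1, e2, ← A.cov, ← B.cov]
  conv_lhs => rw [m0_split]
  rw [lintegral_add_measure]
  congr 1
  · exact setLIntegral_congr_fun measurableSet_Ioo fun x hx => by simp only [hS1 x hx]
  · exact setLIntegral_congr_fun measurableSet_Ioo fun x hx => by simp only [hS2 x hx]

/-- Every invariant probability density on `(0,1)` has a positive essential lower bound. The four
inverse branches, two for each map, form a transfer operator with all the properties of
`IsTransfer`; only the branches of the first map are needed to spread lower bounds. -/
lemma bounded_below_aux {α β : ℝ} (hβ : 0 < β) (hβα : β < α) (hα : α < 1)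
    {G1 G2 : LSVBranch} {p1 p2 : ℝ → ℝ} (hp : ProbPair p1 p2)
    (hA1 : AssumptionA α G1 p1) (hA2 : AssumptionA β G2 p2) (hB : AssumptionB p1 p2)
    {ρ : ℝ → ℝ≥0∞} (hρ : Measurable ρ) (hρ1 : ∫⁻ x, ρ x ∂m0 = 1)
    (hinv : ET (LSVmap α G1) (LSVmap β G2) p1 p2 (m0.withDensity ρ) = m0.withDensity ρ) :
    ∃ k : ℝ≥0∞, k ≠ 0 ∧ ∀ᵐ x ∂m0, k ≤ ρ x := by
  obtain ⟨hp1, hp2, hp01, hp12⟩ := hp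
  have hα0 := hβ.trans hβα
  obtain ⟨A1, B1, a1, b1, c1, d1⟩ := exists_branches hα0 hα hA1
  obtain ⟨A2, B2, a2, b2, c2, d2⟩ := exists_branches hβ (hβα.trans hα) hA2
  obtain ⟨δ, hδ, hB⟩ := hB
  let c : Fin 4 → ℝ → ℝ≥0∞ := ![wt 1 (br1' α) A1 p1, wt (G1.g 1) G1.gD B1 p1,
    wt 1 (br1' β) A2 p2, wt (G2.g 1) G2.gD B2 p2]
  let V : Fin 4 → ℝ → ℝ := ![A1, B1, A2, B2]
  have hPop : ∀ f, Pop c V f = fun y =>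
      (wt 1 (br1' α) A1 p1 y * f (A1 y) + wt (G1.g 1) G1.gD B1 p1 y * f (B1 y)) +
      (wt 1 (br1' β) A2 p2 y * f (A2 y) + wt (G2.g 1) G2.gD B2 p2 y * f (B2 y)) := by
    intro f
    funext y
    simp [Pop, c, V, Fin.sum_univ_four, add_assoc]
  have hcm : ∀ i, Measurable (c i) := by
    intro i
    fin_cases i
    exacts [a1.wt_meas hp1, b1.wt_meas hp1, a2.wt_meas hp2, b2.wt_meas hp2]
  have hVm : ∀ i, Measurable (V i) := by
    intro i
    fin_cases i
    exacts [a1.V_mono.measurable, b1.V_mono.measurable, a2.V_mono.measurable, b2.V_mono.measurable]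
  have hET : ∀ f, Measurable f → ET (LSVmap α G1) (LSVmap β G2) p1 p2 (m0.withDensity f) =
      m0.withDensity (Pop c V f) := by
    intro f hf
    rw [hPop, ET, map_LSV_withDensity hp1 a1 b1 hf, map_LSV_withDensity hp2 a2 b2 hf]
    refine (withDensity_add_left ?_ _).symm
    exact ((a1.wt_meas hp1).mul (hf.comp a1.V_mono.measurable)).add
      ((b1.wt_meas hp1).mul (hf.comp b1.V_mono.measurable))
  have hlint : ∀ f, Measurable f → ∫⁻ x, Pop c V f x ∂m0 = ∫⁻ x, f x ∂m0 := by
    intro f hf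
    have aeT : ∀ (γ : ℝ) (G : LSVBranch) (q : ℝ → ℝ),
        AEMeasurable (LSVmap γ G) ((m0.withDensity f).withDensity fun x => ENNReal.ofReal (q x)) := by
      intro γ G q
      obtain ⟨S, hS, hSe, -⟩ := exists_measurable_LSV γ G
      exact ⟨S, hS, ((withDensity_absolutelyContinuous _ _).trans
        (withDensity_absolutelyContinuous m0 _)).ae_eq hSe⟩
    have h := congrArg (fun ν => ν univ) (hET f hf)
    simp only [ET, Measure.add_apply, Measure.map_apply_of_aemeasurable (aeT _ _ _) .univ, preimage_univ,
      withDensity_apply _ MeasurableSet.univ, Measure.restrict_univ] at h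
    rw [← h, ← lintegral_add_left hp1.ennreal_ofReal]
    have hm : Measurable fun x => ENNReal.ofReal (p1 x) + ENNReal.ofReal (p2 x) :=
      hp1.ennreal_ofReal.add hp2.ennreal_ofReal
    rw [lintegral_withDensity_eq_lintegral_mul _ hf hm]
    refine lintegral_congr_ae ?_
    filter_upwards [m0_ae_mem] with x hx
    have hx' := Ioo_subset_Icc_self hx
    simp only [Pi.mul_apply]
    rw [← ENNReal.ofReal_add (hp01 x hx').1.1 (hp01 x hx').2.1, hp12 x hx']
    simp
  have H0 : PreTransfer c V := ⟨hcm, hVm, hlint⟩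
  have H : IsTransfer c V := by
    refine ⟨H0, fun f hf => ?_, ?_⟩
    · rw [hPop]
      exact (anti_one (fun x hx => (hp01 x hx).1.1) a1 b1 c1 d1 hf).add
        (anti_one (fun x hx => (hp01 x hx).2.1) a2 b2 c2 d2 hf)
    · intro u _ hui a b k ha hab hb hk hu
      obtain ⟨lam, hlam, hlen⟩ := G1.g_len
      obtain ⟨M, hM, hgM⟩ := G1.gD_le
      have := grow (Q := Good u) (F := br1 α) (g := G1.g) hlam (br1_zero α) (br1_half α)
        (fun b h1 h2 => br1_le_one hα0 h1 h2) (fun a b h1 h2 _ => br1_len hα0 h1 h2)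
        (fun b₀ h => br1_grow hα0 h) G1.map_half (fun b h1 h2 => (G1.mapsTo ⟨h1, h2⟩).2) hlen
        (fun s t hs hst ht hg => a1.push (p := p1) H0 hui (κ := δ / 3) (by positivity) (fun x hx => by
          have := br1'_bounds hα0 hα hx
          have h1 := (hB x ⟨hx.1.le, by linarith [hx.2]⟩).1
          exact div_le_div₀ (hδ.le.trans h1) h1 this.1 this.2) 0 rfl rfl hs hst ht hg)
        (fun s t hs hst ht hg => b1.push (p := p1) H0 hui (κ := δ / M) (by positivity) (fun x hx => by
          have h1 := (hB x ⟨by linarith [hx.1], hx.2.le⟩).1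
          exact div_le_div₀ (hδ.le.trans h1) h1 (G1.gD_pos hx) (hgM x (Ioo_subset_Icc_self hx)))
          1 rfl rfl hs hst ht hg)
        (fun a b a' b' h1 h2 h => h.mono h1 h2) ha hab hb ⟨k, hk, hu⟩
      obtain ⟨k', hk', h⟩ := this
      refine ⟨k', hk', ?_⟩
      filter_upwards [h, m0_ae_mem] with x h1 h2 using h1 h2
  refine H.bounded_below hρ ?_ hρ1
  rw [hET ρ hρ] at hinv
  have : IsFiniteMeasure m0 := ⟨by rw [m0_univ]; simp⟩
  exact (withDensity_eq_iff_of_sigmaFinite (H0.meas hρ).aemeasurable hρ.aemeasurable).1 hinv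

lemma mI_eq_s1 : mI = m0 := Measure.restrict_congr_set Ioo_ae_eq_Icc.symm

end Proof

noncomputable section

/-- **The invariant density is uniformly bounded below** (Theorem 3.1(ii)).
Under Assumptions (A) and (B), the density `ρ = dμ/dm` of any (hence the unique)
absolutely continuous invariant probability measure `μ` of the random map
`T = {T1, T2; p1, p2}` is bounded below by some `γ > 0` almost everywhere. -/
theorem random_LSV_invariant_density_bounded_below
    (α β : ℝ) (hβ : 0 < β) (hβα : β < α) (hα : α < 1)
    (G1 G2 : LSVBranch) (p1 p2 : ℝ → ℝ) (hp : ProbPair p1 p2)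
    (hA1 : AssumptionA α G1 p1) (hA2 : AssumptionA β G2 p2)
    (hB : AssumptionB p1 p2)
    (μ : Measure ℝ) (hμprob : IsProbabilityMeasure μ) (hμac : μ ≪ mI)
    (hμinv : ET (LSVmap α G1) (LSVmap β G2) p1 p2 μ = μ) :
    ∃ γ : ℝ, 0 < γ ∧ ∀ᵐ x ∂mI, ENNReal.ofReal γ ≤ μ.rnDeriv mI x := by
  rw [mI_eq_s1] at hμac ⊢
  have hfin : IsFiniteMeasure m0 := ⟨by rw [m0_univ]; simp⟩
  have hμ : m0.withDensity (μ.rnDeriv m0) = μ := Measure.withDensity_rnDeriv_eq μ m0 hμac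
  have hmass : ∫⁻ x, μ.rnDeriv m0 x ∂m0 = 1 := by
    rw [Measure.lintegral_rnDeriv hμac, measure_univ]
  obtain ⟨k, hk, h⟩ := bounded_below_aux hβ hβα hα hp hA1 hA2 hB (μ.measurable_rnDeriv m0) hmass
    (by rw [hμ, hμinv])
  -- `k` may be infinite, so it is truncated at `1`
  have hk1 : min k 1 ≠ ⊤ := (min_le_right k 1).trans_lt ENNReal.one_lt_top |>.ne
  have hk0 : min k 1 ≠ 0 := by
    rcases min_choice k 1 with h | h <;> rw [h]
    · exact hk
    · exact one_ne_zero
  refine ⟨(min k 1).toReal, ENNReal.toReal_pos hk0 hk1, ?_⟩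
  filter_upwards [h] with x hx
  rw [ENNReal.ofReal_toReal hk1]
  exact (min_le_left _ _).trans hx

end
end

section
/- Let 0 < β ≤ α < 1 and let y ∈ (0,1/2]. If x = y(1 + 2^β y^β), then x^{1-α} - y^{1-α} ≥ ((1-α)/2) x. -/
open Set

/-!
Put `t = (2y)^β ∈ (0,1]`, so that `x = y(1+t)`. Bernoulli's inequality applied to
`y/x = 1 - t/(1+t)` gives `x^(1-α) - y^(1-α) ≥ (1-α) x^(1-α) t/(1+t)`.
Since `x ≤ 2y ≤ 1` and `β ≤ α`, one has `x^α ≤ (2y)^α ≤ (2y)^β = t`, hence `x ≤ x^(1-α) t`;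
the bound follows from `1 + t ≤ 2`.
-/

/-- **Lemma 3.2(v).** For `0 < β ≤ α < 1` and `y ∈ (0,1/2]`, if `x = y(1 + 2^β y^β)`,
then `x^(1-α) - y^(1-α) ≥ ((1-α)/2) x`. -/
theorem LSV_rpow_gap_lower_bound (α β : ℝ) (hβ0 : 0 < β) (hβα : β ≤ α) (hα1 : α < 1)
    (y : ℝ) (hy : y ∈ Ioc (0 : ℝ) (1 / 2))
    (x : ℝ) (hx : x = y * (1 + 2 ^ β * y ^ β)) :
    (1 - α) / 2 * x ≤ x ^ (1 - α) - y ^ (1 - α) := by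
  obtain ⟨hy0, hy1⟩ := hy
  rw [← Real.mul_rpow (by norm_num) hy0.le] at hx
  have hs0 : 0 < 2 * y := by linarith
  have ht0 : 0 < (2 * y) ^ β := Real.rpow_pos_of_pos hs0 β
  have ht1 : (2 * y) ^ β ≤ 1 := Real.rpow_le_one hs0.le (by linarith) hβ0.le
  have hαβ : (2 * y) ^ α ≤ (2 * y) ^ β :=
    Real.rpow_le_rpow_of_exponent_ge hs0 (by linarith) hβα
  generalize (2 * y) ^ β = t at *
  have hx0 : 0 < x := by rw [hx]; positivity
  have hx2 : x ≤ 2 * y := by rw [hx]; nlinarith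
  have hxt : x ^ α ≤ t := (Real.rpow_le_rpow hx0.le hx2 (by linarith)).trans hαβ
  have hP : 0 < x ^ (1 - α) := Real.rpow_pos_of_pos hx0 _
  have hxP : x ≤ x ^ (1 - α) * t := by
    calc x = x ^ (1 - α) * x ^ α := by
          rw [← Real.rpow_add hx0]; simp
      _ ≤ _ := by gcongr
  have hyx : y = x * (1 + -(t / (1 + t))) := by rw [hx]; field_simp; ring
  have hr1 : t / (1 + t) ≤ 1 := by rw [div_le_one (by linarith)]; linarith
  have hB : (1 + -(t / (1 + t))) ^ (1 - α) ≤ 1 + (1 - α) * -(t / (1 + t)) :=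
    rpow_one_add_le_one_add_mul_self (by linarith) (by linarith) (by linarith)
  have hyP : y ^ (1 - α) ≤ x ^ (1 - α) * (1 + (1 - α) * -(t / (1 + t))) := by
    conv_lhs => rw [hyx]
    rw [Real.mul_rpow hx0.le (by linarith)]
    gcongr
  have hkey : x / 2 ≤ x ^ (1 - α) * (t / (1 + t)) := by
    rw [← mul_div_assoc, div_le_div_iff₀ (by norm_num) (by linarith)]
    nlinarith
  have := mul_le_mul_of_nonneg_left hkey (by linarith : 0 ≤ 1 - α)
  linarith
end
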